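/- arXiv:2402.16376 — 2 statements merged into one kernel-verified Lean document; each statement's English description precedes it below -/
import Mathlib

section
/- Fix T > 0, α ∈ (0,1), and constants M₁, M₂, M₃ > 0. There exists C > 0 depending only on T, α, M₁, M₂, M₃ such that the following holds. Let c : ℝ → ℝ be smooth with M₁⁻¹ ≤ c ≤ M₁ and |c′| ≤ M₁; let β : ℝ² → ℝ be smooth with sup_x ∫_ℝ (|β(x,y)| + |∂ₓβ(x,y)| + |∂ₓₓβ(x,y)|) dy ≤ M₂ and with ∫∫_{ℝ²} (|A₀[β(·,y)](x)| + |A₀[∂ₓβ(·,y)](x)| + |A₀[∂ₓₓβ(·,y)](x)|) dx dy ≤ M₂, where A₀ acts on the first variable; set B(x;v) = ∫_ℝ β(x,y)v(y) dy. Let u : [0,∞) × ℝ → ℝ be a smooth function such that, for every t ≥ 0, u(t,·) is non-decreasing and bounded with lim_{x→−∞} u(t,x) = 0 and lim_{x→+∞} u(t,x) = 1, ∂ₓu(t,·) is a Schwartz function depending continuously on t, the C^{1,α} norm of u(0,·) is at most M₃, and u solves ∂ₜu + c(x)∂ₓu·A₀[u(t,·)] + B(x;u(t,·))∂ₓu =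 0 pointwise on (0,∞) × ℝ. Then |∂ₜu(t,x)| ≤ C for all (t,x) ∈ [0,T] × ℝ. -/
open MeasureTheory Filter Set
open scoped Topology

/-- Truncated half-Laplacian: `∫_{|x−y|≥δ} (u(x)−u(y))/(x−y)² dy`. -/
noncomputable def Apos (δ : ℝ) (u : ℝ → ℝ) (x : ℝ) : ℝ :=
  ∫ y in {y : ℝ | δ ≤ |x - y|}, (u x - u y) / (x - y) ^ 2

/-- The half-Laplacian `A₀[u](x) = p.v. ∫ (u(x)−u(y))/(x−y)² dy`. -/
noncomputable def A0 (u : ℝ → ℝ) (x : ℝ) : ℝ :=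
  limUnder (𝓝[>] (0 : ℝ)) (fun δ => Apos δ u x)

/-- The nonlocal drift `B(x;v) = ∫ β(x,y) v(y) dy`. -/
noncomputable def Bop (β : ℝ → ℝ → ℝ) (x : ℝ) (v : ℝ → ℝ) : ℝ :=
  ∫ y : ℝ, β x y * v y

/-- The symmetric second difference `2 f(x) - f(x+z) - f(x-z)`. -/
def secondDiff (f : ℝ → ℝ) (x z : ℝ) : ℝ := 2 * f x - f (x + z) - f (x - z)

/-- The half-Laplacian written as an absolutely convergent integral of second differences. -/
noncomputable def symmA (f : ℝ → ℝ) (x : ℝ) : ℝ :=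
  ∫ z in Ioi (0 : ℝ), secondDiff f x z / z ^ 2

/-- Second differences are bounded by `K * min 1 (z ^ 2)`, up to a factor `2`. -/
def SecondDiffBound (f : ℝ → ℝ) (K : ℝ) : Prop :=
  ∀ x z, |secondDiff f x z| * (1 + z ^ 2) ≤ K * z ^ 2

lemma SecondDiffBound.of_le {f : ℝ → ℝ} {a b : ℝ} (ha : ∀ x z, |secondDiff f x z| ≤ a)
    (hb : ∀ x z, |secondDiff f x z| ≤ b * z ^ 2) : SecondDiffBound f (a + b) := by
  intro x z
  nlinarith [ha x z, hb x z, sq_nonneg z, mul_le_mul_of_nonneg_right (ha x z) (sq_nonneg z)]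

lemma SecondDiffBound.abs_div_le {f : ℝ → ℝ} {K : ℝ} (h : SecondDiffBound f K) (x : ℝ) {z : ℝ}
    (hz : 0 < z) : |secondDiff f x z / z ^ 2| ≤ K * (1 + z ^ 2)⁻¹ := by
  rw [abs_div, abs_of_pos (by positivity : 0 < z ^ 2), ← div_eq_mul_inv,
    div_le_div_iff₀ (by positivity) (by positivity)]
  exact h x z

lemma continuous_secondDiff {f : ℝ → ℝ} (hf : Continuous f) (x : ℝ) :
    Continuous (secondDiff f x) := by
  unfold secondDiff
  fun_prop

lemma measurable_secondDiff_div {f : ℝ → ℝ} (hf : Continuous f) (x : ℝ) :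
    Measurable (fun z => secondDiff f x z / z ^ 2) :=
  (continuous_secondDiff hf x).measurable.div (by fun_prop)

lemma integrableOn_secondDiff {f : ℝ → ℝ} {K : ℝ} (hf : Continuous f)
    (h : SecondDiffBound f K) (x : ℝ) :
    IntegrableOn (fun z => secondDiff f x z / z ^ 2) (Ioi 0) := by
  refine Integrable.mono' ((integrable_inv_one_add_sq.const_mul K).integrableOn)
    (measurable_secondDiff_div hf x).aestronglyMeasurable ?_
  filter_upwards [ae_restrict_mem measurableSet_Ioi] with z hz
  exact h.abs_div_le x hz

lemma apos_eq {f : ℝ → ℝ} {M δ : ℝ} (hf : Continuous f) (hM : ∀ x, |f x| ≤ M) (hδ : 0 < δ)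
    (x : ℝ) : Apos δ f x = ∫ z in Ioi δ, secondDiff f x z / z ^ 2 := by
  set G : ℝ → ℝ := fun z => (f x - f (x - z)) / z ^ 2 with hG
  set S : Set ℝ := {z | δ ≤ |z|} with hS
  have hSm : MeasurableSet S := measurableSet_le measurable_const measurable_id.abs
  have h1 : Apos δ f x = ∫ z in S, G z := by
    have e1 : Apos δ f x = ∫ y, S.indicator G (x - y) := by
      unfold Apos
      rw [← integral_indicator (measurableSet_le measurable_const (by fun_prop))]
      congr 1
      ext y
      simp [indicator, hS, hG]
    rw [e1, integral_sub_left_eq_self (fun z => S.indicator G z) volume x,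
      integral_indicator hSm]
  have hGm : Measurable G := by
    have := hf.measurable
    simp only [hG]
    fun_prop
  have hGi : IntegrableOn G S := by
    refine Integrable.mono'
      ((integrable_inv_one_add_sq.const_mul (2 * M * (1 + (δ ^ 2)⁻¹))).integrableOn)
      hGm.aestronglyMeasurable ?_
    filter_upwards [ae_restrict_mem hSm] with z hz
    have hz2 : δ ^ 2 ≤ z ^ 2 := by
      rw [← sq_abs z]
      exact pow_le_pow_left₀ hδ.le hz 2
    have hz0 : 0 < z ^ 2 := lt_of_lt_of_le (by positivity) hz2
    have hn : |f x - f (x - z)| ≤ 2 * M := by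
      have := abs_sub (f x) (f (x - z))
      linarith [hM x, hM (x - z)]
    have h3 : 1 + z ^ 2 ≤ (1 + (δ ^ 2)⁻¹) * z ^ 2 := by
      have : 1 ≤ (δ ^ 2)⁻¹ * z ^ 2 := by
        rw [inv_mul_eq_div, le_div_iff₀ (by positivity)]
        linarith
      linarith
    rw [Real.norm_eq_abs, hG, abs_div, abs_of_pos hz0, ← div_eq_mul_inv,
      div_le_div_iff₀ hz0 (by positivity), mul_assoc]
    exact mul_le_mul hn h3 (by positivity) ((abs_nonneg _).trans hn)
  have hSu : S = Iic (-δ) ∪ Ici δ := by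
    ext z
    simp only [hS, mem_ofPred_eq, mem_union, mem_Iic, mem_Ici, le_abs]
    constructor <;> rintro (h | h) <;> first | (left; linarith) | (right; linarith)
  have hdisj : Disjoint (Iic (-δ)) (Ici δ) := by
    rw [Set.disjoint_left]
    intro z hz hz'
    simp only [mem_Iic, mem_Ici] at hz hz'
    linarith
  rw [hSu] at hGi
  have hi1 := hGi.mono_set subset_union_left
  have hi2 := (hGi.mono_set subset_union_right).mono_set Ioi_subset_Ici_self
  have hi1' : IntegrableOn (fun z => G (-z)) (Ioi δ) := by
    exact ((integrableOn_Iic_iff_integrableOn_Iio).1 hi1).comp_neg_Ioi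
  rw [h1, hSu, setIntegral_union hdisj measurableSet_Ici hi1 (hGi.mono_set subset_union_right),
    integral_Ici_eq_integral_Ioi, ← integral_comp_neg_Ioi, ← integral_add hi1' hi2]
  refine setIntegral_congr_fun measurableSet_Ioi fun z hz => ?_
  simp only [hG, secondDiff, sub_neg_eq_add, neg_sq]
  ring

lemma tendsto_apos {f : ℝ → ℝ} {M K : ℝ} (hf : Continuous f) (hM : ∀ x, |f x| ≤ M)
    (h : SecondDiffBound f K) (x : ℝ) :
    Tendsto (fun δ => Apos δ f x) (𝓝[>] (0 : ℝ)) (𝓝 (symmA f x)) := by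
  have hev : (fun δ => ∫ z in Ioi (0 : ℝ),
      (Ioi δ).indicator (fun z => secondDiff f x z / z ^ 2) z) =ᶠ[𝓝[>] (0 : ℝ)]
      fun δ => Apos δ f x := by
    filter_upwards [self_mem_nhdsWithin] with δ hδ
    rw [apos_eq hf hM hδ, setIntegral_indicator measurableSet_Ioi, Ioi_inter_Ioi,
      sup_of_le_right (le_of_lt hδ)]
  refine Tendsto.congr' hev ?_
  refine tendsto_integral_filter_of_dominated_convergence (fun z => K * (1 + z ^ 2)⁻¹) ?_ ?_
    (integrable_inv_one_add_sq.const_mul K).integrableOn ?_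
  · exact .of_forall fun δ =>
      ((measurable_secondDiff_div hf x).indicator measurableSet_Ioi).aestronglyMeasurable
  · refine .of_forall fun δ => ?_
    filter_upwards [ae_restrict_mem measurableSet_Ioi] with z hz
    exact (norm_indicator_le_norm_self _ _).trans (h.abs_div_le x hz)
  · filter_upwards [ae_restrict_mem measurableSet_Ioi] with z hz
    refine tendsto_const_nhds.congr' ?_
    filter_upwards [nhdsWithin_le_nhds (Iio_mem_nhds hz)] with δ hδ
    rw [indicator_of_mem (show z ∈ Ioi δ from hδ)]

lemma a0_eq_symmA {f : ℝ → ℝ} {M K : ℝ} (hf : Continuous f) (hM : ∀ x, |f x| ≤ M)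
    (h : SecondDiffBound f K) (x : ℝ) : A0 f x = symmA f x :=
  (tendsto_apos hf hM h x).limUnder_eq

lemma symmA_sub {f g : ℝ → ℝ} {K L : ℝ} (hf : Continuous f) (hg : Continuous g)
    (hfK : SecondDiffBound f K) (hgL : SecondDiffBound g L) (x : ℝ) :
    symmA (fun y => f y - g y) x = symmA f x - symmA g x := by
  unfold symmA
  rw [← integral_sub (integrableOn_secondDiff hf hfK x) (integrableOn_secondDiff hg hgL x)]
  congr 1
  ext z
  simp only [secondDiff]
  ring

lemma hasDerivAt_symmA {f f' : ℝ → ℝ} {K L : ℝ} (hd : ∀ x, HasDerivAt f (f' x) x)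
    (hf' : Continuous f') (hK : SecondDiffBound f K) (hL : SecondDiffBound f' L) (x : ℝ) :
    HasDerivAt (symmA f) (symmA f' x) x := by
  have hf : Continuous f := continuous_iff_continuousAt.2 fun y => (hd y).continuousAt
  refine (hasDerivAt_integral_of_dominated_loc_of_deriv_le (μ := volume.restrict (Ioi (0 : ℝ)))
    (F := fun y z => secondDiff f y z / z ^ 2) (F' := fun y z => secondDiff f' y z / z ^ 2)
    (bound := fun z => L * (1 + z ^ 2)⁻¹) (x₀ := x) (s := univ) univ_mem ?_
    (integrableOn_secondDiff hf hK x) (measurable_secondDiff_div hf' x).aestronglyMeasurable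
    ?_ (integrable_inv_one_add_sq.const_mul L).integrableOn ?_).2
  · exact .of_forall fun y => (measurable_secondDiff_div hf y).aestronglyMeasurable
  · filter_upwards [ae_restrict_mem measurableSet_Ioi] with z hz y _
    exact hL.abs_div_le y hz
  · refine .of_forall fun z y _ => ?_
    exact ((((hd y).const_mul 2).sub ((hd (y + z)).comp_add_const y z)).sub
      ((hd (y - z)).comp_sub_const y z)).div_const _

/-- Second differences are controlled by the oscillation of the derivative. -/
lemma abs_secondDiff_le {f f' : ℝ → ℝ} (hd : ∀ x, HasDerivAt f (f' x) x) {x z ω : ℝ}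
    (hz : 0 ≤ z) (h : ∀ r ∈ Icc 0 z, |f' (x + r) - f' (x - r)| ≤ ω) :
    |secondDiff f x z| ≤ ω * z := by
  have hD : ∀ r, HasDerivAt (secondDiff f x) (f' (x - r) - f' (x + r)) r := fun r => by
    have := (((hd (x + r)).comp_const_add x r).const_sub (2 * f x)).sub
      ((hd (x - r)).comp_const_sub x r)
    exact this.congr_deriv (by ring)
  have := (convex_Icc (0 : ℝ) z).norm_image_sub_le_of_norm_hasDerivWithin_le
    (f := secondDiff f x) (C := ω) (fun r _ => (hD r).hasDerivWithinAt)
    (fun r hr => by rw [Real.norm_eq_abs, abs_sub_comm]; exact h r hr)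
    (left_mem_Icc.2 hz) (right_mem_Icc.2 hz)
  have h0 : secondDiff f x 0 = 0 := by simp only [secondDiff, add_zero, sub_zero]; ring
  simpa [h0, abs_of_nonneg hz] using this

lemma secondDiff_neg (f : ℝ → ℝ) (x z : ℝ) : secondDiff f x (-z) = secondDiff f x z := by
  simp only [secondDiff, sub_neg_eq_add, ← sub_eq_add_neg]
  ring

lemma abs_secondDiff_le_sq {f f' : ℝ → ℝ} (hd : ∀ x, HasDerivAt f (f' x) x) {L : ℝ}
    (hL : ∀ x y, |f' x - f' y| ≤ L * |x - y|) (x z : ℝ) :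
    |secondDiff f x z| ≤ 2 * L * z ^ 2 := by
  have hL0 : 0 ≤ L := by simpa using (abs_nonneg _).trans (hL 1 0)
  have key : ∀ z, 0 ≤ z → |secondDiff f x z| ≤ 2 * L * z ^ 2 := by
    intro z hz
    refine (abs_secondDiff_le hd hz (ω := L * (2 * z)) fun r hr => ?_).trans_eq (by ring)
    refine (hL _ _).trans (mul_le_mul_of_nonneg_left ?_ hL0)
    rw [show x + r - (x - r) = 2 * r by ring, abs_of_nonneg (by linarith [hr.1])]
    linarith [hr.2]
  rcases le_total 0 z with hz | hz
  · exact key z hz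
  · have := key (-z) (by linarith)
    rwa [secondDiff_neg, neg_sq] at this

lemma abs_secondDiff_le_four {f : ℝ → ℝ} {M : ℝ} (hM : ∀ x, |f x| ≤ M) (x z : ℝ) :
    |secondDiff f x z| ≤ 4 * M := by
  have h1 := abs_le.1 (hM x)
  have h2 := abs_le.1 (hM (x + z))
  have h3 := abs_le.1 (hM (x - z))
  rw [abs_le]
  constructor <;> simp only [secondDiff] <;> linarith

lemma integrableOn_inv_sq {a : ℝ} (ha : 0 < a) : IntegrableOn (fun z : ℝ => (z ^ 2)⁻¹) (Ioi a) := by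
  have := integrableOn_Ioi_rpow_of_lt (show (-2 : ℝ) < -1 by norm_num) ha
  refine this.congr_fun (fun z hz => ?_) measurableSet_Ioi
  have hz0 : 0 ≤ z := (ha.trans hz).le
  simp only [Real.rpow_neg hz0, Real.rpow_two]

lemma integral_Ioi_inv_sq {a : ℝ} (ha : 0 < a) : ∫ z in Ioi a, (z ^ 2)⁻¹ = a⁻¹ := by
  have := integral_Ioi_rpow_of_lt (show (-2 : ℝ) < -1 by norm_num) ha
  rw [show (-2 : ℝ) + 1 = -1 by norm_num, Real.rpow_neg_one, neg_div_neg_eq, div_one] at this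
  rw [← this]
  refine setIntegral_congr_fun measurableSet_Ioi (fun z hz => ?_)
  have hz0 : 0 ≤ z := (ha.trans hz).le
  simp only [Real.rpow_neg hz0, Real.rpow_two]

lemma abs_tail_le {f : ℝ → ℝ} {x b a : ℝ} (ha : 0 < a) (hb : ∀ z, |secondDiff f x z| ≤ b) :
    |∫ z in Ioi a, secondDiff f x z / z ^ 2| ≤ b * a⁻¹ := by
  rw [← integral_Ioi_inv_sq ha, ← integral_const_mul, ← Real.norm_eq_abs]
  refine norm_integral_le_of_norm_le ((integrableOn_inv_sq ha).const_mul b) ?_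
  filter_upwards with z
  rw [Real.norm_eq_abs, abs_div, abs_of_nonneg (sq_nonneg z), div_eq_mul_inv]
  exact mul_le_mul_of_nonneg_right (hb z) (by positivity)

lemma symmA_eq_add {f : ℝ → ℝ} {K a : ℝ} (hf : Continuous f) (h : SecondDiffBound f K)
    (ha : 0 < a) (x : ℝ) :
    symmA f x = (∫ z in Ioc 0 a, secondDiff f x z / z ^ 2)
      + ∫ z in Ioi a, secondDiff f x z / z ^ 2 := by
  have hi := integrableOn_secondDiff hf h x
  rw [symmA, ← Ioc_union_Ioi_eq_Ioi ha.le, setIntegral_union (by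
    rw [Set.disjoint_left]
    intro z hz hz'
    exact absurd hz.2 (not_le.2 hz')) measurableSet_Ioi
    (hi.mono_set Ioc_subset_Ioi_self) (hi.mono_set (Ioi_subset_Ioi ha.le))]

/-- At a maximum point of `f'`, the half-Laplacian of a bounded monotone `f` is controlled by
the half-Laplacian of `f'`. -/
lemma abs_symmA_le_of_deriv_max {u w : ℝ → ℝ} {K L ε x : ℝ} (hd : ∀ x, HasDerivAt u (w x) x)
    (hw : Continuous w) (hmono : Monotone u) (hu : ∀ x, u x ∈ Icc (0 : ℝ) 1)
    (hK : SecondDiffBound u K) (hL : SecondDiffBound w L) (hmax : ∀ y, w y ≤ w x) (hε : 0 < ε) :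
    |symmA u x| ≤ ε * symmA w x + 2 * ε⁻¹ := by
  have huc : Continuous u := continuous_iff_continuousAt.2 fun y => (hd y).continuousAt
  have hψ0 : ∀ z, 0 ≤ secondDiff w x z := fun z => by
    have := hmax (x + z)
    have := hmax (x - z)
    simp only [secondDiff]
    linarith
  have hφ1 : ∀ z, |secondDiff u x z| ≤ 1 := by
    intro z
    have h1 := hu x
    have h2 := hu (x + z)
    have h3 := hu (x - z)
    simp only [mem_Icc] at h1 h2 h3
    rw [abs_le]
    simp only [secondDiff]
    rcases le_total 0 z with hz | hz
    · have := hmono (show x ≤ x + z by linarith)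
      have := hmono (show x - z ≤ x by linarith)
      constructor <;> linarith
    · have := hmono (show x + z ≤ x by linarith)
      have := hmono (show x ≤ x - z by linarith)
      constructor <;> linarith
  have htail : |∫ z in Ioi ε, secondDiff u x z / z ^ 2| ≤ ε⁻¹ := by
    simpa using abs_tail_le hε hφ1
  have hψi := integrableOn_secondDiff hw hL x
  have hφi := (integrableOn_secondDiff huc hK x).mono_set (Ioc_subset_Ioi_self : Ioc 0 ε ⊆ Ioi 0)
  have hφ'b : ∀ z ∈ Ioc 0 ε, ‖(w (x - z) - w (x + z)) / z‖ ≤ ε * (secondDiff w x z / z ^ 2) := by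
    intro z hz
    have hz0 : 0 < z := hz.1
    have h1 : |w (x - z) - w (x + z)| ≤ secondDiff w x z := by
      have := hmax (x + z)
      have := hmax (x - z)
      rw [abs_le]
      simp only [secondDiff]
      constructor <;> linarith
    rw [Real.norm_eq_abs, abs_div, abs_of_pos hz0, mul_div_assoc',
      div_le_div_iff₀ hz0 (by positivity)]
    calc |w (x - z) - w (x + z)| * z ^ 2 ≤ secondDiff w x z * z ^ 2 := by gcongr
      _ = z * secondDiff w x z * z := by ring
      _ ≤ ε * secondDiff w x z * z := by
        have := hψ0 z
        gcongr
        exact hz.2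
  have hφ'i : IntegrableOn (fun z => (w (x - z) - w (x + z)) / z) (Ioc 0 ε) := by
    refine Integrable.mono' ((hψi.mono_set Ioc_subset_Ioi_self).const_mul ε) ?_ ?_
    · have := hw.measurable
      exact Measurable.aestronglyMeasurable (by fun_prop)
    · filter_upwards [ae_restrict_mem measurableSet_Ioc] with z hz
      exact hφ'b z hz
  have hnear : |∫ z in Ioc 0 ε, (w (x - z) - w (x + z)) / z| ≤ ε * symmA w x := by
    calc |∫ z in Ioc 0 ε, (w (x - z) - w (x + z)) / z|
        ≤ ∫ z in Ioc 0 ε, ε * (secondDiff w x z / z ^ 2) := by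
          rw [← Real.norm_eq_abs]
          refine norm_integral_le_of_norm_le ((hψi.mono_set Ioc_subset_Ioi_self).const_mul ε) ?_
          filter_upwards [ae_restrict_mem measurableSet_Ioc] with z hz
          exact hφ'b z hz
      _ = ε * ∫ z in Ioc 0 ε, secondDiff w x z / z ^ 2 := integral_const_mul _ _
      _ ≤ ε * symmA w x := by
          refine mul_le_mul_of_nonneg_left (setIntegral_mono_set hψi ?_ ?_) hε.le
          · exact .of_forall fun z => div_nonneg (hψ0 z) (sq_nonneg z)
          · exact Ioc_subset_Ioi_self.eventuallyLE
  have hFTC : ∫ z in (0 : ℝ)..ε, ((w (x - z) - w (x + z)) / z - secondDiff u x z / z ^ 2)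
      = secondDiff u x ε / ε - secondDiff u x 0 / 0 := by
    refine intervalIntegral.integral_eq_sub_of_hasDerivAt_of_le
      (f := fun z => secondDiff u x z / z) hε.le ?_ ?_ ?_
    · intro z hz
      rcases hz.1.eq_or_lt with rfl | hz0
      · refine ContinuousAt.continuousWithinAt ?_
        rw [ContinuousAt, div_zero]
        refine squeeze_zero_norm (a := fun z => K * |z|) (fun z => ?_) ?_
        · rcases eq_or_ne z 0 with rfl | hz0
          · simp
          · have hz' : 0 < |z| := abs_pos.2 hz0
            rw [Real.norm_eq_abs, abs_div, div_le_iff₀ hz', mul_assoc, abs_mul_abs_self]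
            have := hK x z
            nlinarith [mul_nonneg (abs_nonneg (secondDiff u x z)) (sq_nonneg z)]
        · have : Continuous fun z : ℝ => K * |z| := by fun_prop
          simpa using this.tendsto 0
      · exact ((continuous_secondDiff huc x).continuousAt.div continuousAt_id
          hz0.ne').continuousWithinAt
    · intro z hz
      have h1 : HasDerivAt (secondDiff u x) (w (x - z) - w (x + z)) z := by
        have := (((hd (x + z)).comp_const_add x z).const_sub (2 * u x)).sub
          ((hd (x - z)).comp_const_sub x z)
        exact this.congr_deriv (by ring)
      have hz0 : z ≠ 0 := hz.1.ne'
      refine (h1.div (hasDerivAt_id z) hz0).congr_deriv ?_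
      simp only [id]
      field_simp
    · exact (intervalIntegrable_iff_integrableOn_Ioc_of_le hε.le).2 (hφ'i.sub hφi)
  rw [intervalIntegral.integral_of_le hε.le, integral_sub hφ'i hφi, div_zero, sub_zero] at hFTC
  have hbd : |secondDiff u x ε / ε| ≤ ε⁻¹ := by
    rw [abs_div, abs_of_pos hε, div_eq_mul_inv]
    exact mul_le_of_le_one_left (by positivity) (hφ1 ε)
  rw [symmA_eq_add huc hK hε x]
  rw [abs_le] at *
  constructor <;> linarith [hnear.1, hnear.2, htail.1, htail.2, hbd.1, hbd.2]

/-- The half-Laplacian is bounded in terms of a Hölder bound on the derivative. -/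
lemma abs_symmA_le_of_holder {u w : ℝ → ℝ} {K H η α : ℝ} (hd : ∀ x, HasDerivAt u (w x) x)
    (hu : ∀ x, |u x| ≤ 1) (hK : SecondDiffBound u K) (hα : 0 < α) (hα1 : α < 1)
    (hH : 0 ≤ H) (hη : 0 ≤ η) (hw : ∀ x y, |w x - w y| ≤ H * |x - y| ^ α + η * |x - y|) (x : ℝ) :
    |symmA u x| ≤ 2 * H / α + 2 * η + 4 := by
  have huc : Continuous u := continuous_iff_continuousAt.2 fun y => (hd y).continuousAt
  have htail : |∫ z in Ioi 1, secondDiff u x z / z ^ 2| ≤ 4 := by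
    simpa using abs_tail_le one_pos (abs_secondDiff_le_four hu x)
  have hpow : ∀ z ∈ Ioc (0 : ℝ) 1,
      ‖secondDiff u x z / z ^ 2‖ ≤ 2 * H * z ^ (α - 1) + 2 * η := by
    intro z hz
    have hz0 : 0 < z := hz.1
    have h1 : |secondDiff u x z| ≤ (H * (2 * z ^ α) + η * (2 * z)) * z := by
      refine abs_secondDiff_le hd hz0.le fun r hr => (hw _ _).trans ?_
      have e : |x + r - (x - r)| = 2 * r := by
        rw [show x + r - (x - r) = 2 * r by ring, abs_of_nonneg (by linarith [hr.1])]
      have h2 : (2 * r) ^ α ≤ 2 * z ^ α := by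
        rw [Real.mul_rpow (by norm_num) hr.1]
        refine mul_le_mul ?_ (Real.rpow_le_rpow hr.1 hr.2 hα.le) (Real.rpow_nonneg hr.1 _)
          (by norm_num)
        exact (Real.rpow_le_rpow_of_exponent_le (by norm_num) hα1.le).trans_eq (Real.rpow_one 2)
      rw [e]
      gcongr
      exact hr.2
    rw [Real.norm_eq_abs, abs_div, abs_of_pos (by positivity : 0 < z ^ 2),
      div_le_iff₀ (by positivity)]
    refine h1.trans_eq ?_
    rw [Real.rpow_sub_one hz0.ne']
    field_simp
  have hii : IntervalIntegrable (fun z : ℝ => z ^ (α - 1)) volume 0 1 :=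
    intervalIntegral.intervalIntegrable_rpow' (by linarith)
  have hnear : |∫ z in Ioc 0 1, secondDiff u x z / z ^ 2| ≤ 2 * H / α + 2 * η := by
    have e : ∫ z in (0 : ℝ)..1, (2 * H * z ^ (α - 1) + 2 * η) = 2 * H / α + 2 * η := by
      rw [intervalIntegral.integral_add (hii.const_mul _) intervalIntegrable_const,
        intervalIntegral.integral_const_mul, integral_rpow (Or.inl (by linarith)),
        intervalIntegral.integral_const]
      simp [Real.zero_rpow hα.ne']
      ring
    rw [← e, intervalIntegral.integral_of_le zero_le_one, ← Real.norm_eq_abs]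
    refine norm_integral_le_of_norm_le ?_ ?_
    · exact ((hii.const_mul _).add intervalIntegrable_const).1
    · filter_upwards [ae_restrict_mem measurableSet_Ioc] with z hz
      exact hpow z hz
  rw [symmA_eq_add huc hK one_pos x]
  exact (abs_add_le _ _).trans (add_le_add hnear htail)

lemma deriv_fst_eq_fderiv {β : ℝ → ℝ → ℝ} (hβ : ContDiff ℝ (⊤ : ℕ∞) (Function.uncurry β))
    (x y : ℝ) : HasDerivAt (fun z => β z y) (fderiv ℝ (Function.uncurry β) (x, y) (1, 0)) x := by
  have h1 := (hβ.differentiable (by simp) (x, y)).hasFDerivAt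
  exact h1.comp_hasDerivAt (f := fun z : ℝ => (z, y)) x
    ((hasDerivAt_id x).prodMk (hasDerivAt_const x y))

lemma continuous_deriv_fst {β : ℝ → ℝ → ℝ} (hβ : ContDiff ℝ (⊤ : ℕ∞) (Function.uncurry β)) :
    Continuous (fun p : ℝ × ℝ => deriv (fun z => β z p.2) p.1) := by
  have : (fun p : ℝ × ℝ => deriv (fun z => β z p.2) p.1)
      = fun p => fderiv ℝ (Function.uncurry β) p (1, 0) := by
    ext p
    exact (deriv_fst_eq_fderiv hβ p.1 p.2).deriv
  rw [this]
  exact (hβ.continuous_fderiv (by simp)).clm_apply continuous_const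

section Drift

variable {β : ℝ → ℝ → ℝ} {M : ℝ}

lemma integrable_kernel (hc : Continuous (Function.uncurry β)) {g h : ℝ → ℝ → ℝ}
    (hi : ∀ x : ℝ, Integrable (fun y => |β x y| + |g x y| + |h x y|)
      ∧ (∫ y : ℝ, |β x y| + |g x y| + |h x y|) ≤ M) (x : ℝ) :
    Integrable (β x) ∧ (∫ y, |β x y|) ≤ M := by
  have h1 : Integrable (β x) := by
    refine (hi x).1.mono' (hc.comp (Continuous.prodMk_right x)).aestronglyMeasurable
      (.of_forall fun y => ?_)
    rw [Real.norm_eq_abs]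
    linarith [abs_nonneg (g x y), abs_nonneg (h x y)]
  refine ⟨h1, le_trans (integral_mono h1.abs (hi x).1 fun y => ?_) (hi x).2⟩
  have := abs_nonneg (g x y)
  have := abs_nonneg (h x y)
  simp only
  linarith

lemma integrable_kernel_mul (hi : ∀ x, Integrable (β x)) {v : ℝ → ℝ} {m : ℝ}
    (hv : Continuous v) (hm : ∀ y, |v y| ≤ m) (x : ℝ) : Integrable (fun y => β x y * v y) :=
  (hi x).mul_bdd hv.aestronglyMeasurable (.of_forall hm)

lemma abs_bop_le (hi : ∀ x, Integrable (β x) ∧ (∫ y, |β x y|) ≤ M) {v : ℝ → ℝ} {m : ℝ}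
    (hm : ∀ y, |v y| ≤ m) (x : ℝ) : |Bop β x v| ≤ M * m := by
  have hm0 : 0 ≤ m := (abs_nonneg _).trans (hm 0)
  calc |Bop β x v| ≤ ∫ y, |β x y| * m := by
        rw [← Real.norm_eq_abs]
        refine norm_integral_le_of_norm_le ((hi x).1.abs.mul_const m) (.of_forall fun y => ?_)
        rw [norm_mul]
        exact mul_le_mul_of_nonneg_left (hm y) (norm_nonneg _)
    _ = (∫ y, |β x y|) * m := integral_mul_const _ _
    _ ≤ M * m := mul_le_mul_of_nonneg_right (hi x).2 hm0

lemma bop_sub (hi : ∀ x, Integrable (β x)) {v v' : ℝ → ℝ} {m m' : ℝ}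
    (hv : Continuous v) (hv' : Continuous v') (hm : ∀ y, |v y| ≤ m) (hm' : ∀ y, |v' y| ≤ m')
    (x : ℝ) : Bop β x (fun y => v y - v' y) = Bop β x v - Bop β x v' := by
  unfold Bop
  rw [← integral_sub (integrable_kernel_mul hi hv hm x) (integrable_kernel_mul hi hv' hm' x)]
  simp only [mul_sub]

lemma abs_bop_sub_le (hβ : ContDiff ℝ (⊤ : ℕ∞) (Function.uncurry β))
    (hi : ∀ x, Integrable (β x))
    (hd : ∀ x, Integrable (fun y => deriv (fun z => β z y) x)
      ∧ (∫ y, |deriv (fun z => β z y) x|) ≤ M) {v : ℝ → ℝ} (hv : Continuous v)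
    (hm : ∀ y, |v y| ≤ 1) (x x' : ℝ) : |Bop β x v - Bop β x' v| ≤ M * |x - x'| := by
  wlog hle : x' ≤ x generalizing x x'
  · rw [abs_sub_comm, abs_sub_comm x]
    exact this x' x (le_of_not_ge hle)
  have hM : 0 ≤ M := (integral_nonneg fun y => abs_nonneg _).trans (hd 0).2
  have hcd := continuous_deriv_fst hβ
  have h1 : ENNReal.ofReal |Bop β x v - Bop β x' v| ≤ ENNReal.ofReal (M * |x - x'|) := by
    calc ENNReal.ofReal |Bop β x v - Bop β x' v|
        = ‖∫ y, (β x y * v y - β x' y * v y)‖ₑ := by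
          rw [Real.enorm_eq_ofReal_abs,
            integral_sub (integrable_kernel_mul hi hv hm x) (integrable_kernel_mul hi hv hm x')]
          rfl
      _ ≤ ∫⁻ y, ‖β x y * v y - β x' y * v y‖ₑ := enorm_integral_le_lintegral_enorm _
      _ ≤ ∫⁻ y, ∫⁻ z in Ioc x' x, ‖deriv (fun z => β z y) z‖ₑ := by
          refine lintegral_mono fun y => ?_
          have e : β x y - β x' y = ∫ z in Ioc x' x, deriv (fun z => β z y) z := by
            rw [← intervalIntegral.integral_of_le hle]
            refine (intervalIntegral.integral_deriv_eq_sub (f := fun z => β z y) (fun z _ =>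
              (deriv_fst_eq_fderiv hβ z y).differentiableAt) ?_).symm
            exact (hcd.comp (Continuous.prodMk_left y)).intervalIntegrable _ _
          rw [← sub_mul, enorm_mul]
          calc ‖β x y - β x' y‖ₑ * ‖v y‖ₑ ≤ ‖β x y - β x' y‖ₑ * 1 := by
                gcongr
                rw [Real.enorm_eq_ofReal_abs, ← ENNReal.ofReal_one]
                exact ENNReal.ofReal_le_ofReal (hm y)
            _ ≤ _ := by
                rw [mul_one, e]
                exact enorm_integral_le_lintegral_enorm _
      _ = ∫⁻ z in Ioc x' x, ∫⁻ y, ‖deriv (fun z => β z y) z‖ₑ := by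
          refine lintegral_lintegral_swap ?_
          exact (hcd.comp continuous_swap).enorm.measurable.aemeasurable
      _ ≤ ∫⁻ _ in Ioc x' x, ENNReal.ofReal M := by
          refine lintegral_mono fun z => ?_
          simp only
          rw [← ofReal_integral_norm_eq_lintegral_enorm (hd z).1]
          exact ENNReal.ofReal_le_ofReal (hd z).2
      _ = ENNReal.ofReal (M * |x - x'|) := by
          rw [setLIntegral_const, Real.volume_Ioc, ← ENNReal.ofReal_mul hM,
            abs_of_nonneg (sub_nonneg.2 hle)]
  exact (ENNReal.ofReal_le_ofReal_iff (by positivity)).1 h1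

end Drift

/-- Symmetry of the mixed second derivatives of a function of two real variables. -/
lemma hasDerivAt_mixed {u : ℝ → ℝ → ℝ} {t x : ℝ}
    (hu : ContDiffAt ℝ 2 (Function.uncurry u) (t, x)) :
    ∃ d, HasDerivAt (fun s => deriv (u s) x) d t
      ∧ HasDerivAt (fun y => deriv (fun s => u s y) t) d x := by
  set U := Function.uncurry u with hU
  have hev : ∀ᶠ p in 𝓝 (t, x), DifferentiableAt ℝ U p := by
    filter_upwards [hu.eventually (by simp)] with p hp
    exact hp.differentiableAt (by simp)
  have hD2 : HasFDerivAt (fderiv ℝ U) (fderiv ℝ (fderiv ℝ U) (t, x)) (t, x) :=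
    ((hu.fderiv_right (m := 1) (by norm_num)).differentiableAt (by simp)).hasFDerivAt
  have hsymm := hu.isSymmSndFDerivAt (by simp)
  have hl1 : HasDerivAt (fun s : ℝ => (s, x)) ((1 : ℝ), (0 : ℝ)) t :=
    (hasDerivAt_id t).prodMk (hasDerivAt_const t x)
  have hl2 : HasDerivAt (fun y : ℝ => (t, y)) ((0 : ℝ), (1 : ℝ)) x :=
    (hasDerivAt_const x t).prodMk (hasDerivAt_id x)
  have hdir : ∀ v, HasFDerivAt (fun p => fderiv ℝ U p v)
      ((ContinuousLinearMap.apply ℝ ℝ v).comp (fderiv ℝ (fderiv ℝ U) (t, x))) (t, x) := fun v =>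
    (ContinuousLinearMap.apply ℝ ℝ v).hasFDerivAt.comp (t, x) hD2
  refine ⟨fderiv ℝ (fderiv ℝ U) (t, x) (1, 0) (0, 1), ?_, ?_⟩
  · have h := (hdir (0, 1)).comp_hasDerivAt t hl1
    refine h.congr_of_eventuallyEq ?_
    filter_upwards [hl1.continuousAt.eventually hev] with s hs
    exact (hs.hasFDerivAt.comp_hasDerivAt (f := fun y : ℝ => (s, y)) x
      ((hasDerivAt_const x s).prodMk (hasDerivAt_id x))).deriv
  · have h := (hdir (1, 0)).comp_hasDerivAt x hl2
    rw [← hsymm.eq]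
    refine h.congr_of_eventuallyEq ?_
    filter_upwards [hl2.continuousAt.eventually hev] with y hy
    exact (hy.hasFDerivAt.comp_hasDerivAt (f := fun s : ℝ => (s, y)) t
      ((hasDerivAt_id t).prodMk (hasDerivAt_const t y))).deriv

/-- A maximum principle: if `|f|` satisfies a differential inequality at its spatial maximum
points, it grows at most exponentially. -/
lemma abs_le_exp_mul_of_max {f : ℝ → ℝ → ℝ} {T K m : ℝ} (hK : 0 ≤ K) (hm : 0 ≤ m)
    (hc : ContinuousOn (Function.uncurry f) (Icc 0 T ×ˢ univ))
    (hdecay : ∀ ε > 0, ∃ R, ∀ t ∈ Icc 0 T, ∀ x, R ≤ |x| → |f t x| ≤ ε)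
    (hder : ∀ t ∈ Ioc 0 T, ∀ x, f t x ≠ 0 → (∀ y, |f t y| ≤ |f t x|) →
      ∃ d, HasDerivAt (fun s => f s x) d t ∧ d * f t x < K * f t x ^ 2)
    (h0 : ∀ x, |f 0 x| ≤ m) {t x : ℝ} (ht : t ∈ Icc 0 T) : |f t x| ≤ Real.exp (K * t) * m := by
  by_contra! hlt
  set F : ℝ × ℝ → ℝ := fun p => Real.exp (-(K * p.1)) * |f p.1 p.2| with hF
  have hη : m < F (t, x) := by
    simp only [hF]
    rw [Real.exp_neg, inv_mul_eq_div, lt_div_iff₀ (Real.exp_pos _)]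
    linarith
  have hη0 : 0 < F (t, x) := hm.trans_lt hη
  obtain ⟨R, hR⟩ := hdecay (F (t, x)) hη0
  set R' := max R |x| with hR'
  have hcF : ContinuousOn F (Icc 0 T ×ˢ Icc (-R') R') := by
    refine ContinuousOn.mul (by fun_prop) ?_
    exact (hc.mono (prod_mono_right (subset_univ _))).abs
  have hmem : (t, x) ∈ Icc 0 T ×ˢ Icc (-R') R' := ⟨ht, abs_le.1 (le_max_right _ _)⟩
  obtain ⟨⟨t₀, x₀⟩, ⟨ht₀, hx₀⟩, hmax⟩ :=
    (isCompact_Icc.prod isCompact_Icc).exists_isMaxOn ⟨_, hmem⟩ hcF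
  have hge : F (t, x) ≤ F (t₀, x₀) := hmax hmem
  have hglob : ∀ s ∈ Icc 0 T, ∀ y, F (s, y) ≤ F (t₀, x₀) := by
    intro s hs y
    by_cases hy : |y| ≤ R'
    · exact hmax (show (s, y) ∈ Icc 0 T ×ˢ Icc (-R') R' from ⟨hs, abs_le.1 hy⟩)
    · refine le_trans ?_ hge
      have h1 := hR s hs y ((le_max_left _ _).trans (le_of_not_ge hy))
      have h2 : Real.exp (-(K * s)) ≤ 1 := Real.exp_le_one_iff.2 (by have := mul_nonneg hK hs.1; linarith)
      exact (mul_le_of_le_one_left (abs_nonneg _) h2).trans h1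
  have hF0 : 0 < F (t₀, x₀) := hη0.trans_le hge
  have hne : f t₀ x₀ ≠ 0 := by
    intro h
    simp [hF, h] at hF0
  have htpos : 0 < t₀ := by
    refine lt_of_le_of_ne ht₀.1 fun h => ?_
    have : F (t₀, x₀) ≤ m := by
      simp only [hF, ← h]
      simpa using h0 x₀
    linarith
  obtain ⟨d, hd, hdlt⟩ := hder t₀ ⟨htpos, ht₀.2⟩ x₀ hne fun y =>
    le_of_mul_le_mul_left (hglob t₀ ht₀ y) (Real.exp_pos _)
  have hG : HasDerivAt (fun s => (Real.exp (-(K * s)) * f s x₀) ^ 2)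
      (2 * Real.exp (-(K * t₀)) ^ 2 * (d * f t₀ x₀ - K * f t₀ x₀ ^ 2)) t₀ := by
    have h1 : HasDerivAt (fun s => Real.exp (-(K * s))) (Real.exp (-(K * t₀)) * (-(K * 1))) t₀ :=
      (((hasDerivAt_id t₀).const_mul K).neg).exp
    exact ((h1.mul hd).pow 2).congr_deriv (by simp; ring)
  have hneg : 2 * Real.exp (-(K * t₀)) ^ 2 * (d * f t₀ x₀ - K * f t₀ x₀ ^ 2) < 0 :=
    mul_neg_of_pos_of_neg (by positivity) (by linarith)
  have hslope := (hasDerivAt_iff_tendsto_slope.1 hG).eventually (Iio_mem_nhds hneg)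
  have hleft : ∀ᶠ s in 𝓝[<] t₀, s ∈ Ioo 0 t₀ := Ioo_mem_nhdsLT htpos
  have hsub : 𝓝[<] t₀ ≤ 𝓝[≠] t₀ := nhdsWithin_mono _ fun s hs => ne_of_lt hs
  obtain ⟨s, hs, hs'⟩ := ((hslope.filter_mono hsub).and hleft).exists
  rw [slope_def_field, div_neg_iff] at hs
  have hle : (Real.exp (-(K * s)) * f s x₀) ^ 2 ≤ (Real.exp (-(K * t₀)) * f t₀ x₀) ^ 2 := by
    have := hglob s ⟨hs'.1.le, hs'.2.le.trans ht₀.2⟩ x₀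
    rw [sq_le_sq, abs_mul, abs_mul, abs_of_pos (Real.exp_pos _), abs_of_pos (Real.exp_pos _)]
    exact this
  have := hs'.2
  rcases hs with hs | hs <;> linarith [hs.1, hs.2]

lemma continuous_schwartz_seminorm (k : ℕ) :
    Continuous (fun f : SchwartzMap ℝ ℝ => SchwartzMap.seminorm ℝ k 0 f) :=
  (schwartz_withSeminorms ℝ ℝ ℝ).continuous_seminorm (k, 0)

lemma schwartz_abs_sub_le (f : SchwartzMap ℝ ℝ) (x y : ℝ) :
    |f x - f y| ≤ SchwartzMap.seminorm ℝ 0 0 (SchwartzMap.derivCLM ℝ ℝ f) * |x - y| := by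
  refine convex_univ.norm_image_sub_le_of_norm_hasDerivWithin_le (f := f) (f' := deriv f)
    (fun z _ => (f.hasDerivAt z).hasDerivWithinAt) (fun z _ => ?_) (mem_univ y) (mem_univ x)
  rw [← SchwartzMap.derivCLM_apply ℝ f z]
  exact SchwartzMap.norm_le_seminorm ℝ _ z

lemma exists_secondDiffBound_of_deriv_schwartz {u : ℝ → ℝ} {M : ℝ} (f : SchwartzMap ℝ ℝ)
    (hd : ∀ x, HasDerivAt u (f x) x) (hM : ∀ x, |u x| ≤ M) : ∃ K, SecondDiffBound u K :=
  ⟨_, .of_le (abs_secondDiff_le_four hM) (abs_secondDiff_le_sq hd (schwartz_abs_sub_le f))⟩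

lemma schwartz_exists_secondDiffBound (f : SchwartzMap ℝ ℝ) : ∃ K, SecondDiffBound f K :=
  exists_secondDiffBound_of_deriv_schwartz (SchwartzMap.derivCLM ℝ ℝ f) f.hasDerivAt
    (SchwartzMap.norm_le_seminorm ℝ f)

/-- The properties of the coefficients and of a solution used for the a priori estimates, with the
half-Laplacian in its absolutely convergent form. -/
structure IsTransportSolution (c : ℝ → ℝ) (β u : ℝ → ℝ → ℝ) (w : ℝ → SchwartzMap ℝ ℝ)
    (M₁ M₂ : ℝ) : Prop where
  coeff_differentiable : Differentiable ℝ c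
  coeff_bound : ∀ x, M₁⁻¹ ≤ c x ∧ c x ≤ M₁ ∧ |deriv c x| ≤ M₁
  kernel : ∀ x, Integrable (β x) ∧ (∫ y, |β x y|) ≤ M₂
  drift_lipschitz : ∀ v : ℝ → ℝ, Continuous v → (∀ y, |v y| ≤ 1) →
    ∀ x x', |Bop β x v - Bop β x' v| ≤ M₂ * |x - x'|
  continuousOn : ContinuousOn (Function.uncurry u) (Ici 0 ×ˢ univ)
  contDiffAt : ∀ t x, 0 < t → ContDiffAt ℝ 2 (Function.uncurry u) (t, x)
  monotone : ∀ t, 0 ≤ t → Monotone (u t)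
  tendsto_atBot : ∀ t, 0 ≤ t → Tendsto (u t) atBot (𝓝 0)
  tendsto_atTop : ∀ t, 0 ≤ t → Tendsto (u t) atTop (𝓝 1)
  slope_continuous : Continuous w
  hasDerivAt : ∀ t, 0 ≤ t → ∀ x, HasDerivAt (u t) (w t x) x
  equation : ∀ t x, 0 < t →
    deriv (fun s => u s x) t = -(w t x * (c x * symmA (u t) x + Bop β x (u t)))

namespace IsTransportSolution

variable {c : ℝ → ℝ} {β u : ℝ → ℝ → ℝ} {w : ℝ → SchwartzMap ℝ ℝ} {M₁ M₂ : ℝ}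

lemma mem_Icc (S : IsTransportSolution c β u w M₁ M₂) {t : ℝ} (ht : 0 ≤ t) (x : ℝ) :
    u t x ∈ Icc (0 : ℝ) 1 :=
  ⟨(S.monotone t ht).le_of_tendsto (S.tendsto_atBot t ht) x,
    (S.monotone t ht).ge_of_tendsto (S.tendsto_atTop t ht) x⟩

lemma abs_le_one (S : IsTransportSolution c β u w M₁ M₂) {t : ℝ} (ht : 0 ≤ t) (x : ℝ) :
    |u t x| ≤ 1 := by
  rw [abs_of_nonneg (S.mem_Icc ht x).1]
  exact (S.mem_Icc ht x).2

lemma continuous_slice (S : IsTransportSolution c β u w M₁ M₂) {t : ℝ} (ht : 0 ≤ t) :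
    Continuous (u t) :=
  continuous_iff_continuousAt.2 fun y => (S.hasDerivAt t ht y).continuousAt

lemma exists_bound (S : IsTransportSolution c β u w M₁ M₂) {t : ℝ} (ht : 0 ≤ t) :
    ∃ K, SecondDiffBound (u t) K :=
  exists_secondDiffBound_of_deriv_schwartz (w t) (S.hasDerivAt t ht) (S.abs_le_one ht)

lemma slope_nonneg (S : IsTransportSolution c β u w M₁ M₂) {t : ℝ} (ht : 0 ≤ t) (x : ℝ) :
    0 ≤ w t x := by
  rw [← (S.hasDerivAt t ht x).deriv]
  exact (S.monotone t ht).deriv_nonneg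

lemma continuousOn_time (S : IsTransportSolution c β u w M₁ M₂) (x : ℝ) :
    ContinuousOn (fun s => u s x) (Ici 0) :=
  S.continuousOn.comp (f := fun s : ℝ => (s, x)) (by fun_prop) fun s hs => ⟨hs, mem_univ _⟩

lemma differentiableAt_time (S : IsTransportSolution c β u w M₁ M₂) {t : ℝ} (ht : 0 < t) (x : ℝ) :
    DifferentiableAt ℝ (fun s => u s x) t :=
  ((S.contDiffAt t x ht).differentiableAt (by simp)).comp (f := fun s : ℝ => (s, x)) t
    (by fun_prop)

lemma continuous_slope (S : IsTransportSolution c β u w M₁ M₂) :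
    Continuous (fun p : ℝ × ℝ => w p.1 p.2) := by
  have h : Continuous fun p : ℝ × ℝ =>
      (SchwartzMap.toBoundedContinuousFunctionCLM ℝ ℝ ℝ (w p.1), p.2) :=
    (((SchwartzMap.toBoundedContinuousFunctionCLM ℝ ℝ ℝ).continuous.comp
      (S.slope_continuous.comp continuous_fst))).prodMk continuous_snd
  exact continuous_eval.comp h

lemma slope_decay (S : IsTransportSolution c β u w M₁ M₂) (T : ℝ) :
    ∀ ε > 0, ∃ R, ∀ t ∈ Icc 0 T, ∀ x, R ≤ |x| → |w t x| ≤ ε := by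
  intro ε hε
  obtain ⟨P, hP⟩ := isCompact_Icc.exists_bound_of_continuousOn (s := Icc 0 T)
    ((continuous_schwartz_seminorm 1).comp S.slope_continuous).continuousOn
  refine ⟨|P| / ε + 1, fun t ht x hx => ?_⟩
  have h1 := SchwartzMap.norm_pow_mul_le_seminorm ℝ (w t) 1 x
  have h2 : |x| * |w t x| ≤ |P| := by
    have := ((le_abs_self _).trans (hP t ht)).trans (le_abs_self P)
    simp only [pow_one, Real.norm_eq_abs] at h1
    exact h1.trans this
  have hx' : |P| / ε ≤ |x| := by linarith
  rw [div_le_iff₀ hε] at hx'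
  have hx0 : 0 < |x| := by
    have : 0 ≤ |P| / ε := by positivity
    linarith
  exact le_of_mul_le_mul_left (h2.trans hx') hx0

/-- Propagation of the Lipschitz bound. -/
lemma abs_slope_le (S : IsTransportSolution c β u w M₁ M₂) (hM₁ : 0 < M₁) (hM₂ : 0 < M₂) {T m : ℝ}
    (hm : 0 ≤ m) (h0 : ∀ x, |w 0 x| ≤ m) {t : ℝ} (ht : t ∈ Icc 0 T) (x : ℝ) :
    |w t x| ≤ Real.exp ((2 * M₁ ^ 3 + M₂ + 1) * t) * m := by
  refine abs_le_exp_mul_of_max (f := fun t x => w t x) (by positivity) hm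
    S.continuous_slope.continuousOn (S.slope_decay T) ?_ h0 ht
  intro t ht x hne hmax
  have htp : 0 < t := ht.1
  have hw0 := S.slope_nonneg htp.le
  have hwpos : 0 < w t x := lt_of_le_of_ne (hw0 x) (Ne.symm hne)
  have hmax' : ∀ y, w t y ≤ w t x := fun y => by
    have := hmax y
    rwa [abs_of_nonneg (hw0 y), abs_of_nonneg (hw0 x)] at this
  obtain ⟨K, hK⟩ := S.exists_bound htp.le
  obtain ⟨L, hL⟩ := schwartz_exists_secondDiffBound (w t)
  have hwc := (w t).continuous
  have huc := S.continuous_slice htp.le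
  have hw' : HasDerivAt (w t) 0 x := by
    have h1 : deriv (w t) x = 0 :=
      IsLocalMax.deriv_eq_zero (Eventually.of_forall hmax')
    rw [← h1]
    exact (w t).hasDerivAt x
  obtain ⟨d, hd1, hd2⟩ := hasDerivAt_mixed (S.contDiffAt t x htp)
  refine ⟨d, hd1.congr_of_eventuallyEq ?_, ?_⟩
  · filter_upwards [Ioi_mem_nhds htp] with s hs
    exact (S.hasDerivAt s (le_of_lt hs) x).deriv.symm
  have hA := hasDerivAt_symmA (S.hasDerivAt t htp.le) hwc hK hL x
  have hc := (S.coeff_differentiable x).hasDerivAt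
  have hcwA := hw'.mul (hc.mul hA)
  have hBeq : (fun y => Bop β y (u t)) =ᶠ[𝓝 x] fun y =>
      -((deriv (fun s => u s y) t + w t y * (c y * symmA (u t) y)) / w t y) := by
    filter_upwards [hwc.continuousAt.eventually (Ioi_mem_nhds hwpos)] with y hy
    have hy0 : w t y ≠ 0 := ne_of_gt hy
    rw [S.equation t y htp]
    field_simp
    ring
  have hB := (((hd2.add hcwA).div hw' hwpos.ne').neg).congr_of_eventuallyEq hBeq
  set A := symmA (u t) x
  set A' := symmA (w t) x
  have hlip := hB.le_of_lip' hM₂.le (Eventually.of_forall fun y =>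
    S.drift_lipschitz (u t) huc (S.abs_le_one htp.le) y x)
  have hA0 : 0 ≤ A' := by
    refine setIntegral_nonneg measurableSet_Ioi fun z _ => div_nonneg ?_ (sq_nonneg z)
    have := hmax' (x + z)
    have := hmax' (x - z)
    simp only [secondDiff]
    linarith
  have hAb := abs_symmA_le_of_deriv_max (S.hasDerivAt t htp.le) hwc (S.monotone t htp.le)
    (S.mem_Icc htp.le) hK hL hmax' (show 0 < (M₁ ^ 2)⁻¹ by positivity)
  obtain ⟨hc1, hc2, hc3⟩ := S.coeff_bound x
  simp only [Real.norm_eq_abs, abs_neg, Pi.mul_apply, zero_mul, mul_zero, zero_add, sub_zero,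
    Pi.add_apply] at hlip
  rw [abs_div, abs_of_pos (by positivity : 0 < w t x ^ 2), div_le_iff₀ (by positivity)] at hlip
  have h3 : d + w t x * (deriv c x * A + c x * A') ≤ M₂ * w t x := by
    have h4 := (le_abs_self _).trans hlip
    have h5 : (d + w t x * (deriv c x * A + c x * A')) * w t x ≤ (M₂ * w t x) * w t x := by
      nlinarith [h4]
    exact le_of_mul_le_mul_right h5 hwpos
  have h6 : |deriv c x * A| ≤ c x * A' + 2 * M₁ ^ 3 := by
    rw [abs_mul]
    calc |deriv c x| * |A| ≤ M₁ * ((M₁ ^ 2)⁻¹ * A' + 2 * ((M₁ ^ 2)⁻¹)⁻¹) := by gcongr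
      _ = M₁⁻¹ * A' + 2 * M₁ ^ 3 := by field_simp
      _ ≤ c x * A' + 2 * M₁ ^ 3 := by gcongr
  have h7 : -(2 * M₁ ^ 3) ≤ deriv c x * A + c x * A' := by
    have := (abs_le.1 h6).1
    linarith
  have h8 : d ≤ (2 * M₁ ^ 3 + M₂) * w t x := by
    have := mul_le_mul_of_nonneg_left h7 hwpos.le
    linarith
  have h9 := mul_le_mul_of_nonneg_right h8 hwpos.le
  have : 0 < w t x ^ 2 := by positivity
  nlinarith

/-- The solutions approach their limits at infinity uniformly on compact time intervals. -/
lemma uniform_limits (S : IsTransportSolution c β u w M₁ M₂) (T : ℝ) {ε : ℝ} (hε : 0 < ε) :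
    ∃ R, 0 ≤ R ∧ ∀ t ∈ Icc 0 T, u t (-R) ≤ ε ∧ 1 - ε ≤ u t R := by
  refine IsCompact.induction_on (p := fun s => ∃ R, 0 ≤ R ∧ ∀ t ∈ s ∩ Icc 0 T,
    u t (-R) ≤ ε ∧ 1 - ε ≤ u t R) (isCompact_Icc (a := (0 : ℝ)) (b := T)) ⟨0, le_rfl, by simp⟩
    ?_ ?_ ?_ |>.imp fun R hR => ⟨hR.1, fun t ht => hR.2 t ⟨ht, ht⟩⟩
  · rintro s s' hss ⟨R, hR0, hR⟩
    exact ⟨R, hR0, fun t ht => hR t ⟨hss ht.1, ht.2⟩⟩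
  · rintro s s' ⟨R, hR0, hR⟩ ⟨R', hR0', hR'⟩
    have hup : ∀ r, 0 ≤ r → r ≤ max R R' → ∀ t ∈ Icc 0 T, u t (-r) ≤ ε ∧ 1 - ε ≤ u t r →
        u t (-max R R') ≤ ε ∧ 1 - ε ≤ u t (max R R') := fun r _ hr t ht h =>
      ⟨(S.monotone t ht.1 (neg_le_neg hr)).trans h.1, h.2.trans (S.monotone t ht.1 hr)⟩
    refine ⟨max R R', hR0.trans (le_max_left _ _), ?_⟩
    rintro t ⟨ht | ht, ht'⟩
    · exact hup R hR0 (le_max_left _ _) t ht' (hR t ⟨ht, ht'⟩)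
    · exact hup R' hR0' (le_max_right _ _) t ht' (hR' t ⟨ht, ht'⟩)
  · intro t ht
    have e1 : ∀ᶠ R in atTop, u t (-R) < ε :=
      ((S.tendsto_atBot t ht.1).comp tendsto_neg_atTop_atBot).eventually (Iio_mem_nhds hε)
    have e2 : ∀ᶠ R in atTop, 1 - ε < u t R :=
      (S.tendsto_atTop t ht.1).eventually (Ioi_mem_nhds (by linarith))
    obtain ⟨R, hR1, hR2, hR0⟩ := (e1.and (e2.and (eventually_ge_atTop 0))).exists
    have hc : ∀ x, Tendsto (fun s => u s x) (𝓝[Icc 0 T] t) (𝓝 (u t x)) := fun x =>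
      ((S.continuousOn_time x).mono Icc_subset_Ici_self) t ht
    refine ⟨_, ((hc (-R)).eventually (Iio_mem_nhds hR1)).and
      ((hc R).eventually (Ioi_mem_nhds hR2)), R, hR0, fun s hs => ?_⟩
    exact ⟨le_of_lt hs.1.1, le_of_lt hs.1.2⟩

lemma shift_decay (S : IsTransportSolution c β u w M₁ M₂) (T : ℝ) {h : ℝ} (hh : 0 ≤ h) :
    ∀ ε > 0, ∃ R, ∀ t ∈ Icc 0 T, ∀ x, R ≤ |x| → |u (t + h) x - u t x| ≤ ε := by
  intro ε hε
  obtain ⟨R, hR0, hR⟩ := S.uniform_limits (T + h) hε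
  refine ⟨R, fun t ht x hx => ?_⟩
  have h1 := hR t ⟨ht.1, by linarith [ht.2]⟩
  have h2 := hR (t + h) ⟨by linarith [ht.1], by linarith [ht.2]⟩
  have ht' : 0 ≤ t + h := by linarith [ht.1]
  have h3 := S.mem_Icc ht.1 x
  have h4 := S.mem_Icc ht' x
  rw [abs_le]
  rcases le_abs.1 hx with hx | hx
  · have := S.monotone t ht.1 hx
    have := S.monotone (t + h) ht' hx
    constructor <;> linarith [h3.2, h4.2, h1.2, h2.2]
  · have := S.monotone t ht.1 (show x ≤ -R by linarith)
    have := S.monotone (t + h) ht' (show x ≤ -R by linarith)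
    constructor <;> linarith [h3.1, h4.1, h1.1, h2.1]

/-- Stability under time shifts. -/
lemma abs_shift_sub_le (S : IsTransportSolution c β u w M₁ M₂) (hM₁ : 0 < M₁) (hM₂ : 0 < M₂)
    {T G m h : ℝ} (hG : ∀ t ∈ Icc 0 T, ∀ x, |w t x| ≤ G) (hG0 : 0 ≤ G) (hm : 0 ≤ m) (hh : 0 ≤ h)
    (h0 : ∀ x, |u h x - u 0 x| ≤ m) {t : ℝ} (ht : t ∈ Icc 0 T) (x : ℝ) :
    |u (t + h) x - u t x| ≤ Real.exp ((M₂ * G + 1) * t) * m := by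
  refine abs_le_exp_mul_of_max (f := fun t x => u (t + h) x - u t x) (by positivity) hm
    ?_ (S.shift_decay T hh) ?_ (by simpa using h0) ht
  · refine ContinuousOn.sub ?_ (S.continuousOn.mono (prod_mono_left Icc_subset_Ici_self))
    exact S.continuousOn.comp (f := fun p : ℝ × ℝ => (p.1 + h, p.2)) (by fun_prop)
      fun p hp => ⟨add_nonneg hp.1.1 hh, mem_univ _⟩
  intro t ht x hne hmax
  have htp : 0 < t := ht.1
  have hthp : 0 < t + h := by linarith
  set D : ℝ → ℝ := fun y => u (t + h) y - u t y with hD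
  change D x ≠ 0 at hne
  change ∀ y, |D y| ≤ |D x| at hmax
  have hD' : ∀ y, HasDerivAt D (w (t + h) y - w t y) y := fun y =>
    (S.hasDerivAt (t + h) hthp.le y).sub (S.hasDerivAt t htp.le y)
  have hw : w (t + h) x = w t x := by
    have h1 : IsLocalMax (fun y => D y ^ 2) x :=
      Eventually.of_forall fun y => sq_le_sq.2 (hmax y)
    have h2 := h1.hasDerivAt_eq_zero ((hD' x).pow 2)
    simp only [Nat.cast_ofNat, Nat.add_one_sub_one, pow_one, mul_eq_zero, OfNat.ofNat_ne_zero,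
      false_or, hne] at h2
    linarith
  obtain ⟨K, hK⟩ := S.exists_bound htp.le
  obtain ⟨L, hL⟩ := S.exists_bound hthp.le
  have huc := S.continuous_slice htp.le
  have huc' := S.continuous_slice hthp.le
  have hA : symmA D x = symmA (u (t + h)) x - symmA (u t) x := symmA_sub huc' huc hL hK x
  have hB : Bop β x D = Bop β x (u (t + h)) - Bop β x (u t) :=
    bop_sub (fun x => (S.kernel x).1) huc' huc (S.abs_le_one hthp.le) (S.abs_le_one htp.le) x
  have hd1 : HasDerivAt (fun s => u (s + h) x) (deriv (fun s => u s x) (t + h)) t :=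
    (S.differentiableAt_time hthp x).hasDerivAt.comp_add_const t h
  have hd2 := (S.differentiableAt_time htp x).hasDerivAt
  refine ⟨_, hd1.sub hd2, ?_⟩
  have hDA : 0 ≤ D x * symmA D x := by
    unfold symmA
    rw [← integral_const_mul]
    refine setIntegral_nonneg measurableSet_Ioi fun z _ => ?_
    rw [← mul_div_assoc]
    refine div_nonneg ?_ (sq_nonneg z)
    have key : ∀ y, D x * D y ≤ D x ^ 2 := fun y => by
      have h1 := le_abs_self (D x * D y)
      rw [abs_mul] at h1
      have h2 := mul_le_mul_of_nonneg_left (hmax y) (abs_nonneg (D x))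
      rw [abs_mul_abs_self] at h2
      linarith [sq (D x)]
    have h1 := key (x + z)
    have h2 := key (x - z)
    simp only [secondDiff]
    linarith
  have hBD : |D x * Bop β x D| ≤ M₂ * D x ^ 2 := by
    have h1 := abs_bop_le S.kernel hmax x
    rw [abs_mul]
    calc |D x| * |Bop β x D| ≤ |D x| * (M₂ * |D x|) := by gcongr
      _ = M₂ * |D x| ^ 2 := by ring
      _ = M₂ * D x ^ 2 := by rw [sq_abs]
  have hp0 := S.slope_nonneg htp.le x
  have hpG : w t x ≤ G := (le_abs_self _).trans (hG t ⟨htp.le, ht.2⟩ x)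
  have hc0 : 0 ≤ c x := (inv_pos.2 hM₁).le.trans (S.coeff_bound x).1
  rw [S.equation t x htp, S.equation (t + h) x hthp, hw]
  change _ * D x < _ * D x ^ 2
  have e : (-(w t x * (c x * symmA (u (t + h)) x + Bop β x (u (t + h))))
      - -(w t x * (c x * symmA (u t) x + Bop β x (u t)))) * D x
      = -(w t x * (c x * (D x * symmA D x))) - w t x * (D x * Bop β x D) := by
    rw [hA, hB]
    ring
  have h1 : 0 ≤ w t x * (c x * (D x * symmA D x)) := by positivity
  have hsq : 0 < D x ^ 2 := by positivity
  have h2 : -(w t x * (D x * Bop β x D)) ≤ G * (M₂ * D x ^ 2) := by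
    calc -(w t x * (D x * Bop β x D)) = w t x * -(D x * Bop β x D) := by ring
      _ ≤ w t x * (M₂ * D x ^ 2) := by
        refine mul_le_mul_of_nonneg_left ?_ hp0
        linarith [(abs_le.1 hBD).1]
      _ ≤ G * (M₂ * D x ^ 2) := by gcongr
  rw [e]
  linarith

/-- The time increment is controlled near the initial time. -/
lemma initial_increment (S : IsTransportSolution c β u w M₁ M₂) (hM₁ : 0 < M₁)
    {G H α : ℝ} (hG : ∀ t ∈ Icc (0 : ℝ) 1, ∀ x, |w t x| ≤ G) (hH : 0 ≤ H) (hα : 0 < α)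
    (hα1 : α < 1) (hw : ∀ x y, |w 0 x - w 0 y| ≤ H * |x - y| ^ α) :
    ∀ᶠ h in 𝓝[>] (0 : ℝ), ∀ x,
      |u h x - u 0 x| ≤ G * (M₁ * (2 * H / α + 2 * 1 + 4) + M₂) * h := by
  have hcont : Continuous fun s => SchwartzMap.seminorm ℝ 0 0
      (SchwartzMap.derivCLM ℝ ℝ (w s - w 0)) :=
    (continuous_schwartz_seminorm 0).comp ((SchwartzMap.derivCLM ℝ ℝ).continuous.comp
      (S.slope_continuous.sub continuous_const))
  have hnhds : ∀ᶠ s in 𝓝 (0 : ℝ), SchwartzMap.seminorm ℝ 0 0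
      (SchwartzMap.derivCLM ℝ ℝ (w s - w 0)) < 1 := by
    refine hcont.continuousAt.eventually (Iio_mem_nhds ?_)
    simp
  obtain ⟨δ, hδ, hball⟩ := Metric.eventually_nhds_iff.1 hnhds
  filter_upwards [Ioo_mem_nhdsGT (show 0 < min δ 1 from lt_min hδ one_pos)] with h hh x
  have hh0 : 0 < h := hh.1
  have hder : ∀ s ∈ Ioo 0 h, |deriv (fun s => u s x) s|
      ≤ G * (M₁ * (2 * H / α + 2 * 1 + 4) + M₂) := by
    intro s hs
    have hs1 : s < 1 := hs.2.trans (hh.2.trans_le (min_le_right _ _))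
    have hsδ : s < δ := hs.2.trans (hh.2.trans_le (min_le_left _ _))
    have hsem := hball (show dist s 0 < δ by rwa [Real.dist_0_eq_abs, abs_of_pos hs.1])
    have hws : ∀ x y, |w s x - w s y| ≤ H * |x - y| ^ α + 1 * |x - y| := by
      intro x y
      have h1 := (schwartz_abs_sub_le (w s - w 0) x y).trans
        (mul_le_mul_of_nonneg_right hsem.le (abs_nonneg (x - y)))
      have h2 := abs_add_le (w 0 x - w 0 y) ((w s - w 0) x - (w s - w 0) y)
      have e : w 0 x - w 0 y + ((w s - w 0) x - (w s - w 0) y) = w s x - w s y := by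
        simp only [sub_apply]
        ring
      rw [e] at h2
      linarith [hw x y]
    obtain ⟨K, hK⟩ := S.exists_bound hs.1.le
    have hA := abs_symmA_le_of_holder (S.hasDerivAt s hs.1.le) (S.abs_le_one hs.1.le) hK hα hα1
      hH zero_le_one hws x
    have hB := abs_bop_le S.kernel (S.abs_le_one hs.1.le) x
    have hwG := hG s ⟨hs.1.le, hs1.le⟩ x
    obtain ⟨hc1, hc2, -⟩ := S.coeff_bound x
    have hc0 : 0 < c x := (inv_pos.2 hM₁).trans_le hc1
    rw [S.equation s x hs.1, abs_neg, abs_mul]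
    refine mul_le_mul hwG ((abs_add_le _ _).trans (add_le_add ?_ (by simpa using hB)))
      (abs_nonneg _) ((abs_nonneg _).trans hwG)
    rw [abs_mul, abs_of_pos hc0]
    exact mul_le_mul hc2 hA (abs_nonneg _) hM₁.le
  obtain ⟨s, hs, hsl⟩ := exists_hasDerivAt_eq_slope (fun s => u s x) (deriv fun s => u s x) hh0
    ((S.continuousOn_time x).mono Icc_subset_Ici_self)
    fun s hs => (S.differentiableAt_time hs.1 x).hasDerivAt
  have := hder s hs
  rwa [hsl, sub_zero, abs_div, abs_of_pos hh0, div_le_iff₀ hh0] at this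

end IsTransportSolution

/-- **Uniform bound on the time derivative of smooth solutions of**
`∂ₜu + c(x)∂ₓu·A₀[u] + B(x;u)∂ₓu = 0`, depending only on `T`, `α`, the bounds on the
coefficients, and the `C^{1,α}` norm of the initial condition. -/
theorem time_derivative_bound (T α M₁ M₂ M₃ : ℝ) (hT : 0 < T) (hα : 0 < α) (hα1 : α < 1)
    (hM₁ : 0 < M₁) (hM₂ : 0 < M₂) (hM₃ : 0 < M₃) :
    ∃ C : ℝ, 0 < C ∧
      ∀ (c : ℝ → ℝ) (β : ℝ → ℝ → ℝ) (u : ℝ → ℝ → ℝ),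
        ContDiff ℝ (⊤ : ℕ∞) c →
        (∀ x, M₁⁻¹ ≤ c x ∧ c x ≤ M₁ ∧ |deriv c x| ≤ M₁) →
        ContDiff ℝ (⊤ : ℕ∞) (Function.uncurry β) →
        (∀ x : ℝ,
          Integrable (fun y => |β x y| + |deriv (fun z => β z y) x|
            + |deriv (fun w => deriv (fun z => β z y) w) x|) ∧
          (∫ y : ℝ, |β x y| + |deriv (fun z => β z y) x|
            + |deriv (fun w => deriv (fun z => β z y) w) x|) ≤ M₂) →
        (∀ x y : ℝ,
          (∃ l : ℝ, Tendsto (fun δ => Apos δ (fun z => β z y) x) (𝓝[>] (0 : ℝ)) (𝓝 l)) ∧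
          (∃ l : ℝ, Tendsto (fun δ => Apos δ (fun z => deriv (fun w => β w y) z) x)
            (𝓝[>] (0 : ℝ)) (𝓝 l)) ∧
          (∃ l : ℝ, Tendsto
            (fun δ => Apos δ (fun z => deriv (fun w' => deriv (fun w => β w y) w') z) x)
            (𝓝[>] (0 : ℝ)) (𝓝 l))) →
        (Integrable (fun p : ℝ × ℝ =>
          |A0 (fun z => β z p.2) p.1|
            + |A0 (fun z => deriv (fun w => β w p.2) z) p.1|
            + |A0 (fun z => deriv (fun w' => deriv (fun w => β w p.2) w') z) p.1|)
          (volume.prod volume)) →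
        ((∫ p : ℝ × ℝ,
          (|A0 (fun z => β z p.2) p.1|
            + |A0 (fun z => deriv (fun w => β w p.2) z) p.1|
            + |A0 (fun z => deriv (fun w' => deriv (fun w => β w p.2) w') z) p.1|)
          ∂(volume.prod volume)) ≤ M₂) →
        ContDiffOn ℝ (⊤ : ℕ∞) (Function.uncurry u) (Ici 0 ×ˢ univ) →
        (∀ t, 0 ≤ t → Monotone (u t)) →
        (∃ M : ℝ, ∀ t x, 0 ≤ t → |u t x| ≤ M) →
        (∀ t, 0 ≤ t → Tendsto (u t) atBot (𝓝 0)) →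
        (∀ t, 0 ≤ t → Tendsto (u t) atTop (𝓝 1)) →
        (∃ w : ℝ → SchwartzMap ℝ ℝ, Continuous w ∧
          ∀ t x, 0 ≤ t → w t x = deriv (fun y => u t y) x) →
        (∃ a₁ a₂ a₃ : ℝ, (∀ x, |u 0 x| ≤ a₁) ∧ (∀ x, |deriv (fun y => u 0 y) x| ≤ a₂) ∧
          (∀ x y, |deriv (fun z => u 0 z) x - deriv (fun z => u 0 z) y| ≤ a₃ * |x - y| ^ α) ∧
          a₁ + a₂ + a₃ ≤ M₃) →
        (∀ t x, 0 < t →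
          ∃ l : ℝ, Tendsto (fun δ => Apos δ (u t) x) (𝓝[>] (0 : ℝ)) (𝓝 l)) →
        (∀ t x, 0 < t →
          deriv (fun s => u s x) t
            + c x * deriv (fun y => u t y) x * A0 (u t) x
            + Bop β x (u t) * deriv (fun y => u t y) x = 0) →
        ∀ t x, 0 ≤ t → t ≤ T → |deriv (fun s => u s x) t| ≤ C := by
  set G := Real.exp ((2 * M₁ ^ 3 + M₂ + 1) * (T + 1)) * M₃ with hGdef
  set C₀ := G * (M₁ * (2 * M₃ / α + 2 * 1 + 4) + M₂) with hC₀
  have hG0 : 0 < G := by positivity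
  have hC₀0 : 0 < C₀ := by positivity
  refine ⟨Real.exp ((M₂ * G + 1) * T) * C₀, by positivity, ?_⟩
  intro c β u hc hcb hβ hβi _ _ _ hu hmono _ hbot htop hw hinit _ heq t x ht0 htT
  obtain ⟨w, hwc, hwd⟩ := hw
  obtain ⟨a₁, a₂, a₃, ha₁, ha₂, ha₃, hsum⟩ := hinit
  have hder : ∀ t, 0 ≤ t → ∀ x, HasDerivAt (u t) (w t x) x := by
    intro t ht x
    have h1 : ContDiff ℝ (⊤ : ℕ∞) (u t) := by
      rw [← contDiffOn_univ]
      exact hu.comp (f := fun y : ℝ => (t, y)) (by fun_prop) fun y _ => ⟨ht, mem_univ _⟩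
    rw [hwd t x ht]
    exact (h1.differentiable (by simp) x).hasDerivAt
  have hkernel := integrable_kernel hβ.continuous hβi
  have hkernel' : ∀ x, Integrable (fun y => deriv (fun z => β z y) x)
      ∧ (∫ y, |deriv (fun z => β z y) x|) ≤ M₂ := by
    refine integrable_kernel (β := fun x y => deriv (fun z => β z y) x)
      (g := fun x y => β x y) (h := fun x y => deriv (fun w => deriv (fun z => β z y) w) x)
      (continuous_deriv_fst hβ) fun x => ?_
    have := hβi x
    simp only [add_comm |β x _|] at this
    exact this
  have S : IsTransportSolution c β u w M₁ M₂ :=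
    { coeff_differentiable := hc.differentiable (by simp)
      coeff_bound := hcb
      kernel := hkernel
      drift_lipschitz := fun v hv hv1 x x' =>
        abs_bop_sub_le hβ (fun x => (hkernel x).1) hkernel' hv hv1 x x'
      continuousOn := hu.continuousOn
      contDiffAt := fun t x ht => by
        refine (hu.contDiffAt (prod_mem_nhds (Ici_mem_nhds ht) univ_mem)).of_le ?_
        exact WithTop.coe_le_coe.2 (le_top : (2 : ℕ∞) ≤ ⊤)
      monotone := hmono
      tendsto_atBot := hbot
      tendsto_atTop := htop
      slope_continuous := hwc
      hasDerivAt := hder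
      equation := fun t x ht => by
        have hub : ∀ y, |u t y| ≤ 1 := fun y => by
          rw [abs_of_nonneg ((hmono t ht.le).le_of_tendsto (hbot t ht.le) y)]
          exact (hmono t ht.le).ge_of_tendsto (htop t ht.le) y
        obtain ⟨K, hK⟩ := exists_secondDiffBound_of_deriv_schwartz (w t) (hder t ht.le) hub
        have huc : Continuous (u t) :=
          continuous_iff_continuousAt.2 fun y => (hder t ht.le y).continuousAt
        have h1 := heq t x ht
        rw [a0_eq_symmA huc hub hK, ← hwd t x ht.le] at h1
        linarith }
  have ha₁0 := (abs_nonneg _).trans (ha₁ 0)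
  have ha₂0 := (abs_nonneg _).trans (ha₂ 0)
  have hw0 : ∀ x, |w 0 x| ≤ a₂ := fun x => by
    rw [hwd 0 x le_rfl]
    exact ha₂ x
  have ha₃0 : 0 ≤ a₃ := by simpa using (abs_nonneg _).trans (ha₃ 1 0)
  have hGb : ∀ t ∈ Icc 0 (T + 1), ∀ x, |w t x| ≤ G := fun t ht x => by
    refine (S.abs_slope_le hM₁ hM₂ hM₃.le (fun x => (hw0 x).trans (by linarith)) ht x).trans ?_
    rw [hGdef]
    gcongr
    exact ht.2
  have hinc := S.initial_increment hM₁ (fun t ht => hGb t ⟨ht.1, by linarith [ht.2]⟩) hM₃.le hα hα1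
    fun x y => by
      rw [hwd 0 x le_rfl, hwd 0 y le_rfl]
      refine (ha₃ x y).trans (mul_le_mul_of_nonneg_right (by linarith) ?_)
      exact Real.rpow_nonneg (abs_nonneg _) _
  by_cases hdiff : DifferentiableAt ℝ (fun s => u s x) t
  · refine le_of_tendsto hdiff.hasDerivAt.tendsto_slope_zero_right.abs ?_
    filter_upwards [hinc, self_mem_nhdsWithin] with h hh hpos
    have hpos' : 0 < h := hpos
    have h1 := S.abs_shift_sub_le hM₁ hM₂ (T := T)
      (fun t ht => hGb t ⟨ht.1, by linarith [ht.2]⟩) hG0.le (by positivity) hpos'.le hh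
      ⟨ht0, htT⟩ x
    rw [smul_eq_mul, abs_mul, abs_of_pos (inv_pos.2 hpos'), inv_mul_le_iff₀ hpos']
    refine h1.trans ?_
    calc Real.exp ((M₂ * G + 1) * t) * (C₀ * h) ≤ Real.exp ((M₂ * G + 1) * T) * (C₀ * h) := by
          gcongr
      _ = h * (Real.exp ((M₂ * G + 1) * T) * C₀) := by ring
  · rw [deriv_zero_of_not_differentiableAt hdiff, abs_zero]
    positivity
end

section
/- Let m : [0,∞) × ℝ → [0,∞) be smooth in (t,x), with m(t,·) a Schwartz function and a probability density for every t ≥ 0, and suppose m solves the Dyson equation classically: ∂ₜm(t,x) + ∂ₓ(m(t,·)H[m(t,·)])(x) = 0 for all (t,x) ∈ (0,∞) × ℝ. Then for every p ∈ [1,∞] the map t ↦ ‖m(t,·)‖_{L^p(ℝ)} is non-increasing on [0,∞). -/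
open MeasureTheory Filter Set
open scoped Topology ENNReal

/-- Truncated (unnormalized) Hilbert transform: `∫_{|x−y|≥δ} u(y)/(x−y) dy`. -/
noncomputable def truncHilbert (u : ℝ → ℝ) (δ x : ℝ) : ℝ :=
  ∫ y in {y : ℝ | δ ≤ |x - y|}, u y / (x - y)

/-- The (unnormalized) Hilbert transform, defined as the principal value
`H[u](x) = lim_{δ→0⁺} ∫_{|x−y|≥δ} u(y)/(x−y) dy`. -/
noncomputable def hilbert (u : ℝ → ℝ) (x : ℝ) : ℝ :=
  limUnder (𝓝[>] (0 : ℝ)) (fun δ => truncHilbert u δ x)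

/-- The Hilbert transform in odd-difference form. -/
noncomputable def oddHilbert (u : ℝ → ℝ) (x : ℝ) : ℝ :=
  ∫ r in Ioi (0 : ℝ), (u (x - r) - u (x + r)) / r

namespace SchwartzMap

lemma exists_abs_le_div_one_add_sq (f : SchwartzMap ℝ ℝ) :
    ∃ C, 0 < C ∧ ∀ x, |f x| ≤ C * (1 + x ^ 2)⁻¹ := by
  obtain ⟨A, hA, h0⟩ := f.decay 0 0
  obtain ⟨B, hB, h2⟩ := f.decay 2 0
  refine ⟨A + B, by positivity, fun x => ?_⟩
  have a := h0 x
  have b := h2 x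
  simp only [pow_zero, one_mul, norm_iteratedFDeriv_zero, Real.norm_eq_abs, sq_abs] at a b
  rw [← div_eq_mul_inv, le_div_iff₀ (by positivity)]
  linarith

lemma exists_lipschitz_bound (f : SchwartzMap ℝ ℝ) :
    ∃ C, 0 < C ∧ ∀ x y, |f x - f y| ≤ C * |x - y| := by
  obtain ⟨C, hC, h⟩ := (derivCLM ℝ ℝ f).exists_abs_le_div_one_add_sq
  refine ⟨C, hC, fun x y => ?_⟩
  have := convex_univ.norm_image_sub_le_of_norm_deriv_le (f := f) (C := C) (x := y) (y := x)
    (fun z _ => f.differentiableAt) (fun z _ => ?_) (mem_univ _) (mem_univ _)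
  · simpa using this
  · have hz := h z
    rw [derivCLM_apply] at hz
    refine hz.trans (mul_le_of_le_one_right hC.le (inv_le_one_of_one_le₀ ?_))
    nlinarith [sq_nonneg z]

lemma exists_oddDiff_bound (f : SchwartzMap ℝ ℝ) (R : ℝ) :
    ∃ K, 0 < K ∧ ∀ x, |x| ≤ R → ∀ r, 0 < r →
      |(f (x - r) - f (x + r)) / r| ≤ K * (1 + r ^ 2)⁻¹ := by
  obtain ⟨C, hC, hdec⟩ := f.exists_abs_le_div_one_add_sq
  obtain ⟨L, hL, hlip⟩ := f.exists_lipschitz_bound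
  refine ⟨4 * L + 4 * C * (1 + R ^ 2), by positivity, fun x hx r hr => ?_⟩
  rw [abs_div, abs_of_pos hr, ← div_eq_mul_inv, div_le_div_iff₀ hr (by positivity)]
  have hx2 : x ^ 2 ≤ R ^ 2 := by
    rw [← sq_abs x]; gcongr
  have key : ∀ w, w ^ 2 = r ^ 2 → |f (x + w)| * (1 + r ^ 2) ≤ 2 * C * (1 + R ^ 2) := fun w hw => by
    have h1 := hdec (x + w)
    rw [← div_eq_mul_inv, le_div_iff₀ (by positivity)] at h1
    have h3 : 1 + r ^ 2 ≤ 2 * (1 + R ^ 2) * (1 + (x + w) ^ 2) := by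
      nlinarith [sq_nonneg (x + w), sq_nonneg (2 * x + w), sq_nonneg R, sq_nonneg x,
        mul_nonneg (sq_nonneg R) (sq_nonneg (x + w))]
    calc |f (x + w)| * (1 + r ^ 2) ≤ |f (x + w)| * (2 * (1 + R ^ 2) * (1 + (x + w) ^ 2)) := by
          gcongr
      _ = 2 * (1 + R ^ 2) * (|f (x + w)| * (1 + (x + w) ^ 2)) := by ring
      _ ≤ 2 * (1 + R ^ 2) * C := by gcongr
      _ = _ := by ring
  rcases le_total r 1 with h | h
  · have h1 := hlip (x - r) (x + r)
    have h2 : |x - r - (x + r)| = 2 * r := by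
      rw [show x - r - (x + r) = -(2 * r) by ring, abs_neg, abs_of_pos (by positivity)]
    rw [h2] at h1
    have h3 : 1 + r ^ 2 ≤ 2 := by nlinarith
    calc _ ≤ L * (2 * r) * 2 := by gcongr
      _ ≤ _ := by nlinarith [mul_pos (mul_pos hC hr) (show 0 < 1 + R ^ 2 by positivity)]
  · have h1 := key (-r) (by ring)
    have h2 := key r rfl
    have h3 : |f (x - r) - f (x + r)| ≤ |f (x + -r)| + |f (x + r)| := by
      simpa [sub_eq_add_neg] using abs_sub (f (x - r)) (f (x + r))
    calc _ ≤ (|f (x + -r)| + |f (x + r)|) * (1 + r ^ 2) := by gcongr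
      _ ≤ 4 * C * (1 + R ^ 2) := by linarith
      _ ≤ (4 * L + 4 * C * (1 + R ^ 2)) * 1 := by linarith
      _ ≤ _ := by gcongr

lemma measurable_oddDiff (f : SchwartzMap ℝ ℝ) (x : ℝ) :
    Measurable fun r => (f (x - r) - f (x + r)) / r := by
  have := f.continuous
  exact (by fun_prop : Continuous fun r => f (x - r) - f (x + r)).measurable.div measurable_id

lemma integrableOn_oddDiff (f : SchwartzMap ℝ ℝ) (x : ℝ) :
    IntegrableOn (fun r => (f (x - r) - f (x + r)) / r) (Ioi 0) := by
  obtain ⟨K, hK, h⟩ := f.exists_oddDiff_bound |x|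
  refine Integrable.mono' (integrable_inv_one_add_sq.const_mul K).integrableOn
    (f.measurable_oddDiff x).aestronglyMeasurable ?_
  filter_upwards [ae_restrict_mem measurableSet_Ioi] with r hr
  exact h x le_rfl r hr

lemma differentiable_oddHilbert (f : SchwartzMap ℝ ℝ) : Differentiable ℝ (oddHilbert f) := by
  intro x₀
  obtain ⟨K, hK, h⟩ := (derivCLM ℝ ℝ f).exists_oddDiff_bound (|x₀| + 1)
  refine (hasDerivAt_integral_of_dominated_loc_of_deriv_le (Metric.ball_mem_nhds x₀ one_pos)
    (F' := fun x r => (derivCLM ℝ ℝ f (x - r) - derivCLM ℝ ℝ f (x + r)) / r)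
    (Eventually.of_forall fun x => (f.measurable_oddDiff x).aestronglyMeasurable)
    (f.integrableOn_oddDiff x₀) ((derivCLM ℝ ℝ f).measurable_oddDiff x₀).aestronglyMeasurable
    ?_ (integrable_inv_one_add_sq.const_mul K).integrableOn ?_).2.differentiableAt
  · filter_upwards [ae_restrict_mem measurableSet_Ioi] with r hr x hx
    refine h x ?_ r hr
    have h1 : |x - x₀| < 1 := hx
    have h2 := abs_add_le (x - x₀) x₀
    rw [sub_add_cancel] at h2
    linarith
  · refine Eventually.of_forall fun r x _ => HasDerivAt.div_const ?_ r
    simp only [derivCLM_apply]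
    refine HasDerivAt.sub ?_ ?_
    · exact (f.differentiableAt.hasDerivAt).comp_sub_const x r
    · exact (f.differentiableAt.hasDerivAt).comp_add_const x r

lemma truncHilbert_eq (f : SchwartzMap ℝ ℝ) {δ : ℝ} (hδ : 0 < δ) (x : ℝ) :
    truncHilbert f δ x = ∫ r in Ioi δ, (f (x - r) - f (x + r)) / r := by
  have hm : Measurable fun r : ℝ => {r : ℝ | δ ≤ |r|}.indicator (fun r => f (x - r) / r) r := by
    refine Measurable.indicator ?_ (measurableSet_le measurable_const (by fun_prop))
    have := f.continuous
    exact (by fun_prop : Continuous fun r => f (x - r)).measurable.div measurable_id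
  have hi : Integrable fun r : ℝ => {r : ℝ | δ ≤ |r|}.indicator (fun r => f (x - r) / r) r := by
    refine Integrable.mono' ((f.integrable (μ := volume)).comp_sub_left x |>.norm.const_mul δ⁻¹)
      hm.aestronglyMeasurable (Eventually.of_forall fun r => ?_)
    by_cases hr : δ ≤ |r|
    · rw [indicator_of_mem (by exact hr), norm_div, div_eq_inv_mul]
      gcongr
      exact hr
    · rw [indicator_of_notMem (by exact hr), norm_zero]
      positivity
  have e1 : truncHilbert f δ x
      = ∫ r : ℝ, {r : ℝ | δ ≤ |r|}.indicator (fun r => f (x - r) / r) r := by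
    rw [truncHilbert, ← integral_indicator (measurableSet_le measurable_const (by fun_prop)),
      ← integral_sub_left_eq_self _ volume x]
    refine integral_congr_ae (Eventually.of_forall fun r => ?_)
    simp [indicator]
  have e2 : ∀ r ∈ Ioi (0 : ℝ), {r : ℝ | δ ≤ |r|}.indicator (fun r => f (x - r) / r) r
      + {r : ℝ | δ ≤ |r|}.indicator (fun r => f (x - r) / r) (-r)
      = (Ici δ).indicator (fun r => (f (x - r) - f (x + r)) / r) r := fun r hr => by
    simp only [indicator, mem_ofPred_eq, abs_neg, abs_of_pos (mem_Ioi.1 hr), mem_Ici]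
    split_ifs
    · rw [sub_neg_eq_add, div_neg]; ring
    · simp
  set F : ℝ → ℝ := fun r => {r : ℝ | δ ≤ |r|}.indicator (fun r => f (x - r) / r) r with hF
  have e3 : ∫ r in Iic 0, F r = ∫ r in Ioi 0, F (-r) := by
    rw [integral_comp_neg_Ioi, neg_zero]
  rw [e1, ← intervalIntegral.integral_Iic_add_Ioi (b := 0) hi.integrableOn hi.integrableOn, e3,
    add_comm, ← integral_add hi.integrableOn hi.comp_neg.integrableOn,
    setIntegral_congr_fun measurableSet_Ioi e2,
    setIntegral_indicator measurableSet_Ici, inter_eq_right.2 (Ici_subset_Ioi.2 hδ),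
    integral_Ici_eq_integral_Ioi]

lemma tendsto_truncHilbert (f : SchwartzMap ℝ ℝ) (x : ℝ) :
    Tendsto (fun δ => truncHilbert f δ x) (𝓝[>] 0) (𝓝 (oddHilbert f x)) := by
  have h : Tendsto (fun δ => ∫ r in Ioi δ, (f (x - r) - f (x + r)) / r) (𝓝[>] 0)
      (𝓝 (oddHilbert f x)) := by
    have e : ∀ δ ∈ Ioi (0 : ℝ), ∫ r in Ioi (0 : ℝ),
        (Ioi δ).indicator (fun r => (f (x - r) - f (x + r)) / r) r
          = ∫ r in Ioi δ, (f (x - r) - f (x + r)) / r := fun δ hδ => by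
      rw [setIntegral_indicator measurableSet_Ioi,
        inter_eq_right.2 (Ioi_subset_Ioi (mem_Ioi.1 hδ).le)]
    refine Tendsto.congr' (eventually_nhdsWithin_of_forall e) ?_
    refine tendsto_integral_filter_of_dominated_convergence _
      (Eventually.of_forall fun δ =>
        ((f.measurable_oddDiff x).indicator measurableSet_Ioi).aestronglyMeasurable)
      (Eventually.of_forall fun δ => Eventually.of_forall fun r => norm_indicator_le_norm_self _ _)
      (f.integrableOn_oddDiff x).norm ?_
    filter_upwards [ae_restrict_mem measurableSet_Ioi] with r hr
    refine tendsto_const_nhds.congr' ?_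
    filter_upwards [nhdsWithin_le_nhds (Iio_mem_nhds (mem_Ioi.1 hr))] with δ hδ
    rw [indicator_of_mem]
    exact hδ
  refine h.congr' (eventually_nhdsWithin_of_forall fun δ hδ => ?_)
  exact (f.truncHilbert_eq hδ x).symm

lemma hilbert_eq_oddHilbert (f : SchwartzMap ℝ ℝ) : hilbert f = oddHilbert f :=
  funext fun x => (f.tendsto_truncHilbert x).limUnder_eq

lemma exists_truncHilbert_bound (f : SchwartzMap ℝ ℝ) (R : ℝ) :
    ∃ K, 0 ≤ K ∧ ∀ δ, 0 < δ → ∀ x, |x| ≤ R → |truncHilbert f δ x| ≤ K := by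
  obtain ⟨K, hK, h⟩ := f.exists_oddDiff_bound R
  refine ⟨∫ r, K * (1 + r ^ 2)⁻¹, integral_nonneg fun r => by positivity, fun δ hδ x hx => ?_⟩
  have hi : Integrable fun r : ℝ => K * (1 + r ^ 2)⁻¹ := integrable_inv_one_add_sq.const_mul K
  rw [f.truncHilbert_eq hδ, ← Real.norm_eq_abs]
  refine (norm_integral_le_of_norm_le (hi.integrableOn (s := Ioi δ)) ?_).trans ?_
  · filter_upwards [ae_restrict_mem measurableSet_Ioi] with r hr
    exact h x hx r (hδ.trans hr)
  · exact setIntegral_le_integral hi (Eventually.of_forall fun r => by positivity)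

end SchwartzMap

/-- The symmetrized pairing of a density `u` with (the derivative of) a test function. -/
noncomputable def symPairing (u : ℝ → ℝ) (g : ℝ → ℂ) : ℂ :=
  ∫ p : ℝ × ℝ, (u p.1 * u p.2 / (p.1 - p.2)) • (g p.1 - g p.2)

lemma norm_symPairing_integrand_le {u : ℝ → ℝ} {g : ℝ → ℂ} {L : ℝ}
    (hg : ∀ x y, ‖g x - g y‖ ≤ L * |x - y|) (p : ℝ × ℝ) :
    ‖(u p.1 * u p.2 / (p.1 - p.2)) • (g p.1 - g p.2)‖ ≤ L * ‖u p.1 * u p.2‖ := by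
  rw [norm_smul, norm_div, Real.norm_eq_abs (p.1 - p.2)]
  rcases eq_or_ne p.1 p.2 with h | h
  · have hL : 0 ≤ L := by simpa using (norm_nonneg _).trans (hg 1 0)
    simp only [h, sub_self, norm_zero, mul_zero]
    positivity
  · have h' : 0 < |p.1 - p.2| := abs_pos.2 (sub_ne_zero.2 h)
    calc _ ≤ ‖u p.1 * u p.2‖ / |p.1 - p.2| * (L * |p.1 - p.2|) := by gcongr; exact hg _ _
      _ = _ := by field_simp

lemma norm_symPairing_le {u : ℝ → ℝ} (hu : Integrable u) {g : ℝ → ℂ} {L : ℝ}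
    (hg : ∀ x y, ‖g x - g y‖ ≤ L * |x - y|) :
    ‖symPairing u g‖ ≤ L * (∫ x, ‖u x‖) ^ 2 := by
  refine (norm_integral_le_of_norm_le ((hu.mul_prod hu).norm.const_mul L)
    (Eventually.of_forall (norm_symPairing_integrand_le hg))).trans_eq ?_
  rw [integral_const_mul]
  simp_rw [norm_mul]
  rw [integral_prod_mul (fun x => ‖u x‖) (fun x => ‖u x‖), sq]

/-- The truncation of `r⁻¹` to `δ ≤ |r|`. -/
noncomputable def truncInv (δ r : ℝ) : ℝ := {r : ℝ | δ ≤ |r|}.indicator (fun r => r⁻¹) r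

lemma measurable_truncInv (δ : ℝ) : Measurable (truncInv δ) :=
  measurable_inv.indicator (measurableSet_le measurable_const (by fun_prop))

lemma abs_truncInv_le {δ : ℝ} (hδ : 0 < δ) (r : ℝ) : |truncInv δ r| ≤ δ⁻¹ := by
  by_cases hr : δ ≤ |r|
  · rw [truncInv, indicator_of_mem (by exact hr), abs_inv]
    gcongr
  · rw [truncInv, indicator_of_notMem (by exact hr), abs_zero]
    positivity

lemma abs_truncInv_le_abs_inv (δ r : ℝ) : |truncInv δ r| ≤ |r⁻¹| := by
  have := norm_indicator_le_norm_self (s := {r : ℝ | δ ≤ |r|}) (fun r : ℝ => r⁻¹) r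
  simpa [truncInv] using this

lemma truncInv_neg (δ r : ℝ) : truncInv δ (-r) = -truncInv δ r := by
  simp only [truncInv, indicator, mem_ofPred_eq, abs_neg, inv_neg]
  split_ifs <;> simp

lemma tendsto_truncInv (r : ℝ) : Tendsto (fun δ => truncInv δ r) (𝓝[>] 0) (𝓝 r⁻¹) := by
  rcases eq_or_ne r 0 with rfl | hr
  · simp [truncInv, indicator]
  · refine tendsto_const_nhds.congr' ?_
    filter_upwards [nhdsWithin_le_nhds (Iio_mem_nhds (abs_pos.2 hr))] with δ hδ
    rw [truncInv, indicator_of_mem]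
    exact (mem_Iio.1 hδ).le

lemma truncHilbert_eq_integral_truncInv (u : ℝ → ℝ) (δ x : ℝ) :
    truncHilbert u δ x = ∫ y, u y * truncInv δ (x - y) := by
  rw [truncHilbert, ← integral_indicator (measurableSet_le measurable_const (by fun_prop))]
  refine integral_congr_ae (Eventually.of_forall fun r => ?_)
  simp [indicator, truncInv, div_eq_mul_inv]

lemma integral_mul_truncHilbert_smul {u : ℝ → ℝ} (hu : Integrable u) {g : ℝ → ℂ}
    (hgc : Continuous g) {B : ℝ} (hB : ∀ x, ‖g x‖ ≤ B) {δ : ℝ} (hδ : 0 < δ) :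
    ∫ x, (u x * truncHilbert u δ x) • g x = (1 / 2 : ℝ) •
      ∫ p : ℝ × ℝ, (u p.1 * u p.2 * truncInv δ (p.1 - p.2)) • (g p.1 - g p.2) := by
  have hk : Measurable fun p : ℝ × ℝ => truncInv δ (p.1 - p.2) :=
    (measurable_truncInv δ).comp (by fun_prop)
  have hint : ∀ h : ℝ × ℝ → ℝ, Continuous h → Integrable fun p : ℝ × ℝ =>
      (u p.1 * u p.2 * truncInv δ (p.1 - p.2)) • g (h p) := fun h hh => by
    refine Integrable.mono' ((hu.mul_prod hu).norm.const_mul (δ⁻¹ * B))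
      (((hu.mul_prod hu).aestronglyMeasurable.mul hk.aestronglyMeasurable).smul
        (hgc.comp hh).aestronglyMeasurable) (Eventually.of_forall fun p => ?_)
    rw [norm_smul, norm_mul, Real.norm_eq_abs (truncInv _ _)]
    calc _ ≤ ‖u p.1 * u p.2‖ * δ⁻¹ * B := by
          gcongr
          · exact abs_truncInv_le hδ _
          · exact hB _
      _ = _ := by ring
  have h1 := hint Prod.fst continuous_fst
  have h2 := hint Prod.snd continuous_snd
  have e1 : ∫ x, (u x * truncHilbert u δ x) • g x
      = ∫ p : ℝ × ℝ, (u p.1 * u p.2 * truncInv δ (p.1 - p.2)) • g p.1 := by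
    rw [Measure.volume_eq_prod, integral_prod _ h1]
    refine integral_congr_ae (Eventually.of_forall fun x => ?_)
    simp only
    rw [integral_smul_const, truncHilbert_eq_integral_truncInv, ← integral_const_mul]
    simp only [mul_assoc]
  have e2 : ∫ p : ℝ × ℝ, (u p.1 * u p.2 * truncInv δ (p.1 - p.2)) • g p.1
      = -∫ p : ℝ × ℝ, (u p.1 * u p.2 * truncInv δ (p.1 - p.2)) • g p.2 := by
    rw [Measure.volume_eq_prod, ← integral_prod_swap, ← integral_neg]
    refine integral_congr_ae (Eventually.of_forall fun p => ?_)
    simp only [Prod.fst_swap, Prod.snd_swap]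
    rw [← neg_sub p.1 p.2, truncInv_neg, ← neg_smul]
    congr 1
    ring
  simp_rw [smul_sub]
  rw [integral_sub h1 h2, e1, eq_neg_iff_add_eq_zero.1 e2 |> eq_neg_of_add_eq_zero_right]
  rw [sub_neg_eq_add, ← two_smul ℝ, smul_smul]
  norm_num

namespace SchwartzMap

lemma integral_mul_hilbert_smul (f : SchwartzMap ℝ ℝ) {g : ℝ → ℂ} (hgc : Continuous g)
    (hgs : HasCompactSupport g) {L : ℝ} (hg : ∀ x y, ‖g x - g y‖ ≤ L * |x - y|) :
    ∫ x, (f x * hilbert f x) • g x = (1 / 2 : ℝ) • symPairing f g := by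
  obtain ⟨B, hB⟩ := hgs.exists_bound_of_continuous hgc
  have hf : Integrable f := f.integrable
  obtain ⟨R, hR⟩ := hgs.isCompact.isBounded.exists_norm_le
  obtain ⟨K, hK0, hK⟩ := f.exists_truncHilbert_bound R
  have l1 : Tendsto (fun δ => ∫ x, (f x * truncHilbert f δ x) • g x) (𝓝[>] 0)
      (𝓝 (∫ x, (f x * hilbert f x) • g x)) := by
    refine tendsto_integral_filter_of_dominated_convergence (fun x => ‖f x‖ * K * B) ?_ ?_ ?_ ?_
    · refine Eventually.of_forall fun δ => ?_
      have hm : AEStronglyMeasurable (fun x => truncHilbert f δ x) := by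
        simp_rw [truncHilbert_eq_integral_truncInv]
        refine StronglyMeasurable.aestronglyMeasurable
          (StronglyMeasurable.integral_prod_right (f := fun x y => f y * truncInv δ (x - y)) ?_)
        exact ((f.continuous.measurable.comp measurable_snd).mul
          ((measurable_truncInv δ).comp (by fun_prop))).stronglyMeasurable
      exact (f.continuous.aestronglyMeasurable.mul hm).smul hgc.aestronglyMeasurable
    · refine eventually_nhdsWithin_of_forall fun δ hδ => Eventually.of_forall fun x => ?_
      rw [norm_smul, norm_mul]
      by_cases hx : x ∈ tsupport g
      · have hK' := hK δ hδ x (hR x hx)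
        gcongr
        · exact hK'
        · exact hB x
      · have hx' := image_eq_zero_of_notMem_tsupport hx
        have hB0 : 0 ≤ B := (norm_nonneg _).trans (hB 0)
        rw [hx', norm_zero, mul_zero]
        positivity
    · exact (hf.norm.mul_const K).mul_const B
    · refine Eventually.of_forall fun x => ?_
      rw [f.hilbert_eq_oddHilbert]
      exact ((f.tendsto_truncHilbert x).const_mul _).smul_const _
  have l2 : Tendsto (fun δ => ∫ p : ℝ × ℝ,
      (f p.1 * f p.2 * truncInv δ (p.1 - p.2)) • (g p.1 - g p.2)) (𝓝[>] 0)
      (𝓝 (symPairing f g)) := by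
    refine tendsto_integral_filter_of_dominated_convergence (fun p => L * ‖f p.1 * f p.2‖)
      ?_ ?_ ((hf.mul_prod hf).norm.const_mul L) ?_
    · refine Eventually.of_forall fun δ => ?_
      exact ((hf.mul_prod hf).aestronglyMeasurable.mul
        ((measurable_truncInv δ).comp (by fun_prop)).aestronglyMeasurable).smul
        (by fun_prop : Continuous fun p : ℝ × ℝ => g p.1 - g p.2).aestronglyMeasurable
    · refine Eventually.of_forall fun δ => Eventually.of_forall fun p => ?_
      refine le_trans ?_ (norm_symPairing_integrand_le hg p)
      rw [div_eq_mul_inv, norm_smul, norm_smul, norm_mul _ (truncInv _ _), norm_mul _ (_)⁻¹]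
      gcongr
      exact abs_truncInv_le_abs_inv _ _
    · refine Eventually.of_forall fun p => ?_
      simp only [div_eq_mul_inv]
      exact ((tendsto_truncInv _).const_mul _).smul_const _
  refine tendsto_nhds_unique l1 ((l2.const_smul (1 / 2 : ℝ)).congr' ?_)
  exact eventually_nhdsWithin_of_forall fun δ hδ =>
    (integral_mul_truncHilbert_smul hf hgc hB hδ).symm

end SchwartzMap

/-- A classical solution of the Dyson equation consisting of Schwartz probability densities. -/
structure IsDysonFlow (m : ℝ → ℝ → ℝ) : Prop where
  smooth : ContDiffOn ℝ (⊤ : ℕ∞) (Function.uncurry m) (Ici 0 ×ˢ univ)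
  schwartz : ∀ t, 0 ≤ t → ∃ f : SchwartzMap ℝ ℝ, ∀ x, f x = m t x
  nonneg : ∀ t x, 0 ≤ t → 0 ≤ m t x
  integral_eq_one : ∀ t, 0 ≤ t → ∫ x, m t x = 1
  pde : ∀ t x, 0 < t →
    deriv (fun s => m s x) t + deriv (fun y => m t y * hilbert (m t) y) x = 0

namespace IsDysonFlow

variable {m : ℝ → ℝ → ℝ}

lemma exists_schwartz (hm : IsDysonFlow m) {t : ℝ} (ht : 0 ≤ t) :
    ∃ f : SchwartzMap ℝ ℝ, m t = f :=
  (hm.schwartz t ht).imp fun _ h => funext fun x => (h x).symm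

lemma integrable (hm : IsDysonFlow m) {t : ℝ} (ht : 0 ≤ t) : Integrable (m t) := by
  obtain ⟨f, hf⟩ := hm.exists_schwartz ht
  rw [hf]
  exact f.integrable

lemma continuous (hm : IsDysonFlow m) {t : ℝ} (ht : 0 ≤ t) : Continuous (m t) := by
  obtain ⟨f, hf⟩ := hm.exists_schwartz ht
  rw [hf]
  exact f.continuous

lemma integral_norm (hm : IsDysonFlow m) {t : ℝ} (ht : 0 ≤ t) : ∫ x, ‖m t x‖ = 1 := by
  simp_rw [Real.norm_of_nonneg (hm.nonneg t _ ht), hm.integral_eq_one t ht]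

lemma hasDerivAt_time (hm : IsDysonFlow m) {t : ℝ} (ht : 0 < t) (x : ℝ) :
    HasDerivAt (fun s => m s x) (fderiv ℝ (Function.uncurry m) (t, x) (1, 0)) t := by
  have hd : DifferentiableAt ℝ (Function.uncurry m) (t, x) :=
    (hm.smooth.contDiffAt (prod_mem_nhds (Ici_mem_nhds ht) univ_mem)).differentiableAt (by simp)
  exact hd.hasFDerivAt.comp_hasDerivAt t ((hasDerivAt_id t).prodMk (hasDerivAt_const t x))

lemma continuousOn_time_deriv (hm : IsDysonFlow m) :
    ContinuousOn (fun p : ℝ × ℝ => fderiv ℝ (Function.uncurry m) p (1, 0)) (Ioi 0 ×ˢ univ) := by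
  have h := hm.smooth.mono (prod_mono_left Ioi_subset_Ici_self)
  exact (h.continuousOn_fderiv_of_isOpen (isOpen_Ioi.prod isOpen_univ) (by simp)).clm_apply
    continuousOn_const

lemma hasDerivAt_flux (hm : IsDysonFlow m) {t : ℝ} (ht : 0 < t) (x : ℝ) :
    HasDerivAt (fun y => m t y * hilbert (m t) y)
      (-fderiv ℝ (Function.uncurry m) (t, x) (1, 0)) x := by
  obtain ⟨f, hf⟩ := hm.exists_schwartz ht.le
  have hd : DifferentiableAt ℝ (fun y => m t y * hilbert (m t) y) x := by
    rw [hf, f.hilbert_eq_oddHilbert]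
    exact f.differentiableAt.mul (f.differentiable_oddHilbert x)
  have := hm.pde t x ht
  rw [(hm.hasDerivAt_time ht x).deriv] at this
  rw [← eq_neg_of_add_eq_zero_right this]
  exact hd.hasDerivAt

lemma hasDerivAt_integral_smul (hm : IsDysonFlow m) {ψ ψ' : ℝ → ℂ}
    (hψ : ∀ x, HasDerivAt ψ (ψ' x) x) (hψ' : Continuous ψ') (hs : HasCompactSupport ψ) {L : ℝ}
    (hL : ∀ x y, ‖ψ' x - ψ' y‖ ≤ L * |x - y|) {t : ℝ} (ht : 0 < t) :
    HasDerivAt (fun s => ∫ x, m s x • ψ x) ((1 / 2 : ℝ) • symPairing (m t) ψ') t := by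
  have hψc : Continuous ψ := continuous_iff_continuousAt.2 fun x => (hψ x).continuousAt
  set D : ℝ → ℝ → ℝ := fun s x => fderiv ℝ (Function.uncurry m) (s, x) (1, 0) with hD
  have hDt : Continuous (D t) := by
    rw [← continuousOn_univ]
    exact hm.continuousOn_time_deriv.comp (by fun_prop) fun x _ => ⟨ht, trivial⟩
  obtain ⟨C, hC⟩ := ((isCompact_Icc (a := t / 2) (b := 2 * t)).prod
    hs.isCompact).exists_bound_of_continuousOn (hm.continuousOn_time_deriv.mono
      (prod_mono (fun s hs => lt_of_lt_of_le (by positivity) hs.1) (subset_univ _)))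
  have h1 := (hasDerivAt_integral_of_dominated_loc_of_deriv_le (μ := volume)
    (F := fun s x => m s x • ψ x) (F' := fun s x => D s x • ψ x) (bound := fun x => C * ‖ψ x‖)
    (Icc_mem_nhds (show t / 2 < t by linarith) (show t < 2 * t by linarith))
    (by
      filter_upwards [Ioi_mem_nhds ht] with s hs
      exact ((hm.continuous (mem_Ioi.1 hs).le).smul hψc).aestronglyMeasurable)
    (((hm.continuous ht.le).smul hψc).integrable_of_hasCompactSupport hs.smul_left)
    (hDt.smul hψc).aestronglyMeasurable
    (Eventually.of_forall fun x s hs' => by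
      rw [norm_smul]
      by_cases hx : x ∈ tsupport ψ
      · gcongr
        exact hC (s, x) ⟨hs', hx⟩
      · simp [image_eq_zero_of_notMem_tsupport hx])
    ((hψc.norm.integrable_of_hasCompactSupport hs.norm).const_mul C)
    (Eventually.of_forall fun x s hs' => ((hm.hasDerivAt_time
      (lt_of_lt_of_le (by positivity) hs'.1) x).smul_const _))).2
  obtain ⟨f, hf⟩ := hm.exists_schwartz ht.le
  have hψ's : HasCompactSupport ψ' := by
    rw [show ψ' = deriv ψ from funext fun x => (hψ x).deriv.symm]
    exact hs.deriv
  have hHc : Continuous (hilbert (m t)) := by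
    rw [hf, f.hilbert_eq_oddHilbert]
    exact f.differentiable_oddHilbert.continuous
  have hflux : Continuous fun y => m t y * hilbert (m t) y := (hm.continuous ht.le).mul hHc
  have i1 : Integrable fun x => (m t x * hilbert (m t) x) • ψ' x :=
    (hflux.smul hψ').integrable_of_hasCompactSupport hψ's.smul_left
  have i2 : Integrable fun x => (-D t x) • ψ x :=
    (hDt.neg.smul hψc).integrable_of_hasCompactSupport hs.smul_left
  have h2 := integral_eq_zero_of_hasDerivAt_of_integrable
    (fun x => (hm.hasDerivAt_flux ht x).smul (hψ x)) (i1.add i2)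
    ((hflux.smul hψc).integrable_of_hasCompactSupport hs.smul_left)
  have h3 : ∫ x, (m t x * hilbert (m t) x) • ψ' x = (1 / 2 : ℝ) • symPairing (m t) ψ' := by
    rw [hf]
    exact f.integral_mul_hilbert_smul hψ' hψ's hL
  have h4 : ∫ x, ((m t x * hilbert (m t) x) • ψ' x + (-D t x) • ψ x) = 0 := h2
  rw [integral_add i1 i2, h3] at h4
  simp_rw [neg_smul] at h4
  rw [integral_neg, ← sub_eq_add_neg, sub_eq_zero] at h4
  rwa [h4]

lemma continuousOn_integral_smul (hm : IsDysonFlow m) {ψ : ℝ → ℂ} (hψ : Continuous ψ)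
    (hs : HasCompactSupport ψ) : ContinuousOn (fun s => ∫ x, m s x • ψ x) (Ici 0) := by
  refine continuousOn_integral_of_compact_support (k := tsupport ψ) hs.isCompact ?_ ?_
  · exact (hm.smooth.continuousOn).smul (by fun_prop)
  · intro s x _ hx
    rw [image_eq_zero_of_notMem_tsupport hx, smul_zero]

lemma norm_half_symPairing_le (hm : IsDysonFlow m) {g : ℝ → ℂ} {L : ℝ}
    (hL : ∀ x y, ‖g x - g y‖ ≤ L * |x - y|) {t : ℝ} (ht : 0 ≤ t) :
    ‖(1 / 2 : ℝ) • symPairing (m t) g‖ ≤ L := by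
  have h := norm_symPairing_le (hm.integrable ht) hL
  have hL0 : 0 ≤ L := by simpa using (norm_nonneg _).trans (hL 1 0)
  rw [hm.integral_norm ht] at h
  rw [norm_smul]
  norm_num
  linarith

lemma weak_form_of_hasCompactSupport (hm : IsDysonFlow m) {ψ ψ' : ℝ → ℂ}
    (hψ : ∀ x, HasDerivAt ψ (ψ' x) x) (hψ' : Continuous ψ') (hs : HasCompactSupport ψ) {L : ℝ}
    (hL : ∀ x y, ‖ψ' x - ψ' y‖ ≤ L * |x - y|) {a b : ℝ} (ha : 0 ≤ a) (hab : a ≤ b) :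
    AEStronglyMeasurable (fun t => (1 / 2 : ℝ) • symPairing (m t) ψ')
      (volume.restrict (uIoc a b)) ∧
    ∫ t in a..b, (1 / 2 : ℝ) • symPairing (m t) ψ'
      = (∫ x, m b x • ψ x) - ∫ x, m a x • ψ x := by
  have hψc : Continuous ψ := continuous_iff_continuousAt.2 fun x => (hψ x).continuousAt
  have hd : ∀ t : ℝ, 0 < t → _ := fun t ht => hm.hasDerivAt_integral_smul hψ hψ' hs hL ht
  have hmeas : AEStronglyMeasurable (fun t => (1 / 2 : ℝ) • symPairing (m t) ψ')
      (volume.restrict (uIoc a b)) := by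
    refine (aestronglyMeasurable_deriv (fun s => ∫ x, m s x • ψ x) _).congr ?_
    filter_upwards [ae_restrict_mem measurableSet_uIoc] with t ht
    rw [uIoc_of_le hab] at ht
    exact (hd t (ha.trans_lt ht.1)).deriv
  refine ⟨hmeas, intervalIntegral.integral_eq_sub_of_hasDerivAt_of_le hab
    ((hm.continuousOn_integral_smul hψc hs).mono fun t ht => ha.trans ht.1)
    (fun t ht => hd t (ha.trans_lt ht.1)) ?_⟩
  refine (intervalIntegrable_const (c := L)).mono_fun' hmeas ?_
  filter_upwards [ae_restrict_mem measurableSet_uIoc] with t ht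
  rw [uIoc_of_le hab] at ht
  exact hm.norm_half_symPairing_le hL (ha.trans ht.1.le)

end IsDysonFlow

lemma lipschitz_of_hasDerivAt_of_norm_le {g g' : ℝ → ℂ} (hg : ∀ x, HasDerivAt g (g' x) x) {L : ℝ}
    (hL : ∀ x, ‖g' x‖ ≤ L) (x y : ℝ) : ‖g x - g y‖ ≤ L * |x - y| := by
  simpa using convex_univ.norm_image_sub_le_of_norm_hasDerivWithin_le (x := y) (y := x)
    (fun z _ => (hg z).hasDerivWithinAt) (fun z _ => hL z) (mem_univ _) (mem_univ _)

lemma exists_smooth_cutoff : ∃ (χ χ₁ χ₂ : ℝ → ℝ) (c : ℝ), 0 ≤ c ∧ HasCompactSupport χ ∧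
    (∀ x, HasDerivAt χ (χ₁ x) x) ∧ (∀ x, HasDerivAt χ₁ (χ₂ x) x) ∧ (∀ x, |χ x| ≤ 1) ∧
    (∀ x, |χ₁ x| ≤ c) ∧ (∀ x, |χ₂ x| ≤ c) ∧ (∀ᶠ x in 𝓝 0, χ x = 1) := by
  let χ : ContDiffBump (0 : ℝ) := ⟨1, 2, one_pos, one_lt_two⟩
  have h0 : ContDiff ℝ 2 χ := χ.contDiff
  have h1 : ContDiff ℝ 1 (deriv χ) := ((contDiff_succ_iff_deriv (n := 1)).1 h0).2.2
  have h2 : Continuous (deriv (deriv χ)) := h1.continuous_deriv le_rfl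
  obtain ⟨c₁, hc₁⟩ := χ.hasCompactSupport.deriv.exists_bound_of_continuous h1.continuous
  obtain ⟨c₂, hc₂⟩ := χ.hasCompactSupport.deriv.deriv.exists_bound_of_continuous h2
  refine ⟨χ, deriv χ, deriv (deriv χ), max c₁ c₂, ?_, χ.hasCompactSupport, ?_, ?_, ?_, ?_, ?_, ?_⟩
  · exact ((norm_nonneg _).trans (hc₁ 0)).trans (le_max_left _ _)
  · exact fun x => (h0.differentiable (by simp) x).hasDerivAt
  · exact fun x => (h1.differentiable (by simp) x).hasDerivAt
  · exact fun x => by rw [abs_of_nonneg χ.nonneg]; exact χ.le_one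
  · exact fun x => (hc₁ x).trans (le_max_left _ _)
  · exact fun x => (hc₂ x).trans (le_max_right _ _)
  · filter_upwards [Metric.closedBall_mem_nhds (0 : ℝ) one_pos] with x hx
    exact χ.one_of_mem_closedBall hx

namespace IsDysonFlow

variable {m : ℝ → ℝ → ℝ}

/-- The weak form of the Dyson equation, tested against functions with bounded derivatives up to
order two. -/
lemma weak_form (hm : IsDysonFlow m) {ψ ψ₁ ψ₂ : ℝ → ℂ} {B : ℝ}
    (h₁ : ∀ x, HasDerivAt ψ (ψ₁ x) x) (h₂ : ∀ x, HasDerivAt ψ₁ (ψ₂ x) x)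
    (b₀ : ∀ x, ‖ψ x‖ ≤ B) (b₁ : ∀ x, ‖ψ₁ x‖ ≤ B) (b₂ : ∀ x, ‖ψ₂ x‖ ≤ B)
    {a b : ℝ} (ha : 0 ≤ a) (hab : a ≤ b) :
    ∫ t in a..b, (1 / 2 : ℝ) • symPairing (m t) ψ₁ = (∫ x, m b x • ψ x) - ∫ x, m a x • ψ x := by
  have hB : 0 ≤ B := (norm_nonneg _).trans (b₀ 0)
  have hψc : Continuous ψ := continuous_iff_continuousAt.2 fun x => (h₁ x).continuousAt
  have hψ₁c : Continuous ψ₁ := continuous_iff_continuousAt.2 fun x => (h₂ x).continuousAt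
  obtain ⟨χ, χ₁, χ₂, c, hc, hχs, hχ₁, hχ₂, a₀, a₁, a₂, hχ⟩ := exists_smooth_cutoff
  set r : ℕ → ℝ := fun n => ((n : ℝ) + 1)⁻¹ with hr
  have hr0 : ∀ n, 0 < r n := fun n => by positivity
  have hr1 : ∀ n, r n ≤ 1 := fun n => inv_le_one_of_one_le₀ (by simp)
  have hrt : Tendsto r atTop (𝓝 0) := by
    simpa [hr] using tendsto_one_div_add_atTop_nhds_zero_nat (𝕜 := ℝ)
  have hrx : ∀ x, Tendsto (fun n => r n * x) atTop (𝓝 0) := fun x => by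
    simpa using hrt.mul_const x
  have dχ : ∀ n x, HasDerivAt (fun x => χ (r n * x)) (χ₁ (r n * x) * r n) x := fun n x => by
    have := (hχ₁ (r n * x)).comp x ((hasDerivAt_id x).const_mul (r n))
    simpa [Function.comp_def] using this
  have dχ₁ : ∀ n x, HasDerivAt (fun x => χ₁ (r n * x) * r n) (χ₂ (r n * x) * r n * r n) x :=
    fun n x => by
      have := (hχ₂ (r n * x)).comp x ((hasDerivAt_id x).const_mul (r n))
      simpa using this.mul_const (r n)
  set φ : ℕ → ℝ → ℂ := fun n x => χ (r n * x) • ψ x with hφ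
  set φ₁ : ℕ → ℝ → ℂ := fun n x => χ (r n * x) • ψ₁ x + (χ₁ (r n * x) * r n) • ψ x with hφ₁
  set φ₂ : ℕ → ℝ → ℂ := fun n x => (χ (r n * x) • ψ₂ x + (χ₁ (r n * x) * r n) • ψ₁ x) +
    ((χ₁ (r n * x) * r n) • ψ₁ x + (χ₂ (r n * x) * r n * r n) • ψ x) with hφ₂
  have d₁ : ∀ n x, HasDerivAt (φ n) (φ₁ n x) x := fun n x => (dχ n x).smul (h₁ x)
  have d₂ : ∀ n x, HasDerivAt (φ₁ n) (φ₂ n x) x := fun n x =>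
    ((dχ n x).smul (h₂ x)).add ((dχ₁ n x).smul (h₁ x))
  have bφ : ∀ n x, ‖φ n x‖ ≤ B := fun n x => by
    rw [hφ, norm_smul]
    exact (mul_le_mul (a₀ _) (b₀ x) (norm_nonneg _) zero_le_one).trans_eq (one_mul B)
  have bφ₂ : ∀ n x, ‖φ₂ n x‖ ≤ B + c * B + (c * B + c * B) := fun n x => by
    have e1 : |χ₁ (r n * x) * r n| ≤ c := by
      rw [abs_mul, abs_of_pos (hr0 n)]
      exact (mul_le_mul (a₁ _) (hr1 n) (hr0 n).le hc).trans_eq (mul_one c)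
    have e2 : |χ₂ (r n * x) * r n * r n| ≤ c := by
      rw [abs_mul, abs_mul, abs_of_pos (hr0 n)]
      exact (mul_le_mul ((mul_le_mul (a₂ _) (hr1 n) (hr0 n).le hc).trans_eq (mul_one c)) (hr1 n)
        (hr0 n).le hc).trans_eq (mul_one c)
    refine norm_add_le_of_le (norm_add_le_of_le ?_ ?_) (norm_add_le_of_le ?_ ?_) <;>
      rw [norm_smul, Real.norm_eq_abs]
    · exact (mul_le_mul (a₀ _) (b₂ x) (norm_nonneg _) zero_le_one).trans_eq (one_mul B)
    · exact mul_le_mul e1 (b₁ x) (norm_nonneg _) hc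
    · exact mul_le_mul e1 (b₁ x) (norm_nonneg _) hc
    · exact mul_le_mul e2 (b₀ x) (norm_nonneg _) hc
  set L := B + c * B + (c * B + c * B)
  have hL : ∀ n x y, ‖φ₁ n x - φ₁ n y‖ ≤ L * |x - y| := fun n =>
    lipschitz_of_hasDerivAt_of_norm_le (d₂ n) (bφ₂ n)
  have hs : ∀ n, HasCompactSupport (φ n) := fun n =>
    (hχs.comp_homeomorph (Homeomorph.mulLeft₀ (r n) (hr0 n).ne')).smul_right
  have cφ : ∀ n, Continuous (φ n) := fun n =>
    continuous_iff_continuousAt.2 fun x => (d₁ n x).continuousAt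
  have cφ₁ : ∀ n, Continuous (φ₁ n) := fun n =>
    continuous_iff_continuousAt.2 fun x => (d₂ n x).continuousAt
  have key := fun n => hm.weak_form_of_hasCompactSupport (d₁ n) (cφ₁ n) (hs n) (hL n) ha hab
  have l₀ : ∀ t, 0 ≤ t → Tendsto (fun n => ∫ x, m t x • φ n x) atTop (𝓝 (∫ x, m t x • ψ x)) := by
    intro t ht
    have hi := hm.integrable ht
    refine tendsto_integral_of_dominated_convergence (fun x => ‖m t x‖ * B)
      (fun n => hi.aestronglyMeasurable.smul (cφ n).aestronglyMeasurable) (hi.norm.mul_const B)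
      (fun n => Eventually.of_forall fun x => ?_) (Eventually.of_forall fun x => ?_)
    · rw [norm_smul]
      gcongr
      exact bφ n x
    · refine tendsto_const_nhds.congr' ?_
      filter_upwards [(hrx x).eventually hχ] with n hn
      simp [hφ, hn]
  have hχ₁0 : ∀ᶠ x in 𝓝 0, χ₁ x = 0 := by
    filter_upwards [hχ.eventually_nhds] with x hx
    rw [← (hχ₁ x).deriv]
    exact ((hasDerivAt_const x (1 : ℝ)).congr_of_eventuallyEq hx).deriv
  have l₁ : ∀ x, ∀ᶠ n in atTop, φ₁ n x = ψ₁ x := fun x => by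
    filter_upwards [(hrx x).eventually hχ, (hrx x).eventually hχ₁0] with n hn hn'
    simp [hφ₁, hn, hn']
  have l₂ : ∀ t, 0 ≤ t → Tendsto (fun n => (1 / 2 : ℝ) • symPairing (m t) (φ₁ n)) atTop
      (𝓝 ((1 / 2 : ℝ) • symPairing (m t) ψ₁)) := by
    intro t ht
    have hi := (hm.integrable ht).mul_prod (hm.integrable ht)
    refine Tendsto.const_smul (tendsto_integral_of_dominated_convergence
      (fun p : ℝ × ℝ => L * ‖m t p.1 * m t p.2‖) (fun n => ?_) (hi.norm.const_mul L)
      (fun n => Eventually.of_forall (norm_symPairing_integrand_le (hL n)))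
      (Eventually.of_forall fun p => ?_)) _
    · have := cφ₁ n
      simp_rw [div_eq_mul_inv]
      exact (hi.aestronglyMeasurable.mul
        (by fun_prop : Measurable fun p : ℝ × ℝ => (p.1 - p.2)⁻¹).aestronglyMeasurable).smul
        (by fun_prop : Continuous fun p : ℝ × ℝ => φ₁ n p.1 - φ₁ n p.2).aestronglyMeasurable
    · refine tendsto_const_nhds.congr' ?_
      filter_upwards [l₁ p.1, l₁ p.2] with n hn hn'
      rw [hn, hn']
  refine tendsto_nhds_unique (f := fun n => ∫ t in a..b, (1 / 2 : ℝ) • symPairing (m t) (φ₁ n))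
    ?_ (((l₀ b (ha.trans hab)).sub (l₀ a ha)).congr fun n => ((key n).2).symm)
  refine intervalIntegral.tendsto_integral_filter_of_dominated_convergence (fun _ => L)
    (Eventually.of_forall fun n => (key n).1) ?_ intervalIntegrable_const ?_
  · refine Eventually.of_forall fun n => Eventually.of_forall fun t ht => ?_
    rw [uIoc_of_le hab] at ht
    exact hm.norm_half_symPairing_le (hL n) (ha.trans ht.1.le)
  · refine Eventually.of_forall fun t ht => ?_
    rw [uIoc_of_le hab] at ht
    exact l₂ t (ha.trans ht.1.le)

lemma norm_integral_smul_sub_le (hm : IsDysonFlow m) {ψ ψ₁ ψ₂ : ℝ → ℂ} {B : ℝ}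
    (h₁ : ∀ x, HasDerivAt ψ (ψ₁ x) x) (h₂ : ∀ x, HasDerivAt ψ₁ (ψ₂ x) x)
    (b₀ : ∀ x, ‖ψ x‖ ≤ B) (b₁ : ∀ x, ‖ψ₁ x‖ ≤ B) (b₂ : ∀ x, ‖ψ₂ x‖ ≤ B)
    {a b : ℝ} (ha : 0 ≤ a) (hab : a ≤ b) :
    ‖(∫ x, m b x • ψ x) - ∫ x, m a x • ψ x‖ ≤ B * |b - a| := by
  rw [← hm.weak_form h₁ h₂ b₀ b₁ b₂ ha hab]
  refine intervalIntegral.norm_integral_le_of_norm_le_const fun t ht => ?_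
  rw [uIoc_of_le hab] at ht
  exact hm.norm_half_symPairing_le (lipschitz_of_hasDerivAt_of_norm_le h₂ b₂) (ha.trans ht.1.le)

end IsDysonFlow

/-- The `k`-th resolvent moment `∫ u(s) / (z - s)^k ds` of a density. -/
noncomputable def cauchyMoment (u : ℝ → ℝ) (k : ℕ) (z : ℂ) : ℂ := ∫ s : ℝ, u s • ((z - s)⁻¹) ^ k

/-- The point `x + i y` of the complex plane. -/
noncomputable def planePoint (x y : ℝ) : ℂ := x + y * Complex.I

@[simp] lemma planePoint_re (x y : ℝ) : (planePoint x y).re = x := by simp [planePoint]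

@[simp] lemma planePoint_im (x y : ℝ) : (planePoint x y).im = y := by simp [planePoint]

/-- The harmonic extension of `π u` to the upper half plane. -/
noncomputable def poissonExt (u : ℝ → ℝ) (x y : ℝ) : ℝ := -(cauchyMoment u 1 (planePoint x y)).im

lemma im_le_norm_sub_ofReal (z : ℂ) (s : ℝ) : z.im ≤ ‖z - s‖ := by
  simpa using (le_abs_self _).trans (Complex.abs_im_le_norm (z - s))

lemma sub_ofReal_ne_zero {z : ℂ} (hz : 0 < z.im) (s : ℝ) : z - s ≠ 0 :=
  norm_pos_iff.1 (hz.trans_le (im_le_norm_sub_ofReal z s))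

lemma norm_inv_sub_ofReal_le {z : ℂ} (hz : 0 < z.im) (s : ℝ) : ‖(z - s)⁻¹‖ ≤ z.im⁻¹ := by
  rw [norm_inv]
  gcongr
  exact im_le_norm_sub_ofReal z s

lemma continuous_inv_sub_ofReal_pow {z : ℂ} (hz : 0 < z.im) (k : ℕ) :
    Continuous fun s : ℝ => ((z - s)⁻¹) ^ k :=
  (Continuous.inv₀ (by fun_prop) (sub_ofReal_ne_zero hz)).pow k

lemma hasDerivAt_inv_sub_ofReal_pow {z : ℂ} (hz : 0 < z.im) (s : ℝ) (k : ℕ) :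
    HasDerivAt (fun w : ℂ => ((w - s)⁻¹) ^ (k + 1)) (-(k + 1) * ((z - s)⁻¹) ^ (k + 2)) z := by
  have h := (((hasDerivAt_id z).sub_const (s : ℂ)).inv (sub_ofReal_ne_zero hz s)).pow (k + 1)
  refine h.congr_deriv ?_
  have := sub_ofReal_ne_zero hz s
  push_cast [id, Nat.add_sub_cancel, Pi.inv_apply, inv_pow, pow_add]
  field_simp

lemma hasDerivAt_inv_ofReal_sub_pow {z : ℂ} (hz : 0 < z.im) (s : ℝ) (k : ℕ) :
    HasDerivAt (fun s : ℝ => ((z - s)⁻¹) ^ (k + 1)) ((k + 1) * ((z - s)⁻¹) ^ (k + 2)) s := by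
  have h := (((Complex.ofRealCLM.hasDerivAt (x := s)).const_sub z).inv
    (sub_ofReal_ne_zero hz s)).pow (k + 1)
  refine h.congr_deriv ?_
  have := sub_ofReal_ne_zero hz s
  push_cast [Complex.ofRealCLM_apply, Nat.add_sub_cancel, neg_neg, Pi.inv_apply, inv_pow, pow_add]
  field_simp

lemma inv_planePoint_sub_im (x y s : ℝ) :
    ((planePoint x y - s)⁻¹).im = -(y / ((x - s) ^ 2 + y ^ 2)) := by
  rw [Complex.inv_im, Complex.normSq_apply]
  simp only [Complex.sub_im, Complex.sub_re, planePoint_re, planePoint_im, Complex.ofReal_re,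
    Complex.ofReal_im, sub_zero]
  rw [neg_div]
  ring_nf

lemma norm_inv_planePoint_sub_sq {y : ℝ} (hy : 0 < y) (x s : ℝ) :
    ‖(planePoint x y - s)⁻¹‖ ^ 2 = y / ((x - s) ^ 2 + y ^ 2) * y⁻¹ := by
  rw [norm_inv, inv_pow, Complex.sq_norm, Complex.normSq_apply]
  simp only [Complex.sub_im, Complex.sub_re, planePoint_re, planePoint_im, Complex.ofReal_re,
    Complex.ofReal_im, sub_zero]
  field_simp

lemma hasDerivAt_planePoint_left {f : ℂ → ℂ} {f' : ℂ} {x y : ℝ}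
    (h : HasDerivAt f f' (planePoint x y)) : HasDerivAt (fun x => f (planePoint x y)) f' x := by
  have h1 : HasDerivAt (fun x : ℝ => planePoint x y) 1 x :=
    (Complex.ofRealCLM.hasDerivAt (x := x)).add_const _
  simpa [Function.comp_def] using h.comp x h1

lemma hasDerivAt_planePoint_right {f : ℂ → ℂ} {f' : ℂ} {x y : ℝ}
    (h : HasDerivAt f f' (planePoint x y)) :
    HasDerivAt (fun y => f (planePoint x y)) (f' * Complex.I) y := by
  have h1 : HasDerivAt (fun y : ℝ => planePoint x y) Complex.I y := by
    simpa [planePoint] using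
      ((Complex.ofRealCLM.hasDerivAt (x := y)).mul_const Complex.I).const_add (x : ℂ)
  simpa [Function.comp_def] using h.comp y h1

lemma HasDerivAt.complex_im {f : ℝ → ℂ} {f' : ℂ} {x : ℝ} (h : HasDerivAt f f' x) :
    HasDerivAt (fun x => (f x).im) f'.im x :=
  Complex.imCLM.hasFDerivAt.comp_hasDerivAt x h

lemma HasDerivAt.complex_re {f : ℝ → ℂ} {f' : ℂ} {x : ℝ} (h : HasDerivAt f f' x) :
    HasDerivAt (fun x => (f x).re) f'.re x :=
  Complex.reCLM.hasFDerivAt.comp_hasDerivAt x h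

/-- A probability density on the line. -/
structure IsDensity (u : ℝ → ℝ) : Prop where
  nonneg : ∀ x, 0 ≤ u x
  integral_eq_one : ∫ x, u x = 1

namespace IsDensity

variable {u : ℝ → ℝ}

lemma integrable (hu : IsDensity u) : Integrable u :=
  Integrable.of_integral_ne_zero (by rw [hu.integral_eq_one]; exact one_ne_zero)

lemma integral_norm (hu : IsDensity u) : ∫ x, ‖u x‖ = 1 := by
  simp_rw [Real.norm_of_nonneg (hu.nonneg _), hu.integral_eq_one]

lemma integrable_cauchyMoment (hu : IsDensity u) (k : ℕ) {z : ℂ} (hz : 0 < z.im) :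
    Integrable fun s : ℝ => u s • ((z - s)⁻¹) ^ k := by
  refine Integrable.mono' (hu.integrable.norm.mul_const (z.im⁻¹ ^ k))
    (hu.integrable.aestronglyMeasurable.smul
      (continuous_inv_sub_ofReal_pow hz k).aestronglyMeasurable)
    (Eventually.of_forall fun s => ?_)
  rw [norm_smul, norm_pow]
  gcongr
  exact norm_inv_sub_ofReal_le hz s

lemma hasDerivAt_cauchyMoment (hu : IsDensity u) (k : ℕ) {z : ℂ} (hz : 0 < z.im) :
    HasDerivAt (cauchyMoment u (k + 1)) (-(k + 1) * cauchyMoment u (k + 2) z) z := by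
  have hball : ∀ w ∈ Metric.ball z (z.im / 2), z.im / 2 < w.im := fun w hw => by
    have h1 := (Complex.abs_im_le_norm (w - z)).trans_lt (mem_ball_iff_norm.1 hw)
    rw [Complex.sub_im, abs_lt] at h1
    linarith
  have h := (hasDerivAt_integral_of_dominated_loc_of_deriv_le (μ := volume)
    (F := fun (w : ℂ) (s : ℝ) => u s • ((w - s)⁻¹) ^ (k + 1))
    (F' := fun (w : ℂ) (s : ℝ) => u s • (-(k + 1) * ((w - s)⁻¹) ^ (k + 2)))
    (bound := fun s => ‖u s‖ * ((k + 1) * (z.im / 2)⁻¹ ^ (k + 2)))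
    (Metric.ball_mem_nhds z (half_pos hz))
    (by
      filter_upwards [Metric.ball_mem_nhds z (half_pos hz)] with w hw
      exact (hu.integrable_cauchyMoment _ ((half_pos hz).trans (hball w hw))).aestronglyMeasurable)
    (hu.integrable_cauchyMoment _ hz)
    (hu.integrable.aestronglyMeasurable.smul
      (continuous_const.mul (continuous_inv_sub_ofReal_pow hz _)).aestronglyMeasurable)
    (Eventually.of_forall fun s w hw => by
      have hw' := hball w hw
      have e : ‖(-(k + 1) : ℂ)‖ = k + 1 := by
        rw [norm_neg]
        exact_mod_cast Complex.norm_natCast (k + 1)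
      rw [norm_smul, norm_mul, norm_pow, e]
      gcongr
      refine (norm_inv_sub_ofReal_le ((half_pos hz).trans hw') s).trans ?_
      gcongr)
    (hu.integrable.norm.mul_const _)
    (Eventually.of_forall fun s w hw =>
      (hasDerivAt_inv_sub_ofReal_pow ((half_pos hz).trans (hball w hw)) s k).const_smul (u s))).2
  refine h.congr_deriv ?_
  rw [cauchyMoment, ← integral_const_mul]
  simp_rw [mul_smul_comm]

lemma poissonExt_eq (hu : IsDensity u) (x : ℝ) {y : ℝ} (hy : 0 < y) :
    poissonExt u x y = ∫ s, u s * (y / ((x - s) ^ 2 + y ^ 2)) := by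
  have hz : 0 < (planePoint x y).im := by simpa
  have h := Complex.imCLM.integral_comp_comm (hu.integrable_cauchyMoment 1 hz)
  simp only [Complex.imCLM_apply] at h
  rw [poissonExt, cauchyMoment, ← h, ← integral_neg]
  refine integral_congr_ae (Eventually.of_forall fun s => ?_)
  simp only [pow_one, Complex.real_smul, Complex.im_ofReal_mul, inv_planePoint_sub_im]
  ring

lemma integrable_poisson (hu : IsDensity u) (x : ℝ) {y : ℝ} (hy : 0 < y) :
    Integrable fun s => u s * (y / ((x - s) ^ 2 + y ^ 2)) := by
  have hz : 0 < (planePoint x y).im := by simpa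
  refine (Complex.imCLM.integrable_comp (hu.integrable_cauchyMoment 1 hz)).neg.congr
    (Eventually.of_forall fun s => ?_)
  simp only [Pi.neg_apply, Complex.imCLM_apply, pow_one, Complex.real_smul,
    Complex.im_ofReal_mul, inv_planePoint_sub_im]
  ring

lemma poissonExt_pos (hu : IsDensity u) (x : ℝ) {y : ℝ} (hy : 0 < y) : 0 < poissonExt u x y := by
  rw [hu.poissonExt_eq x hy]
  have h0 : ∀ s, 0 ≤ u s * (y / ((x - s) ^ 2 + y ^ 2)) := fun s => by
    have := hu.nonneg s
    positivity
  refine lt_of_le_of_ne (integral_nonneg h0) fun h => ?_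
  have h1 := (integral_eq_zero_iff_of_nonneg h0 (hu.integrable_poisson x hy)).1 h.symm
  have h2 : u =ᵐ[volume] 0 := by
    filter_upwards [h1] with s hs
    have : (y / ((x - s) ^ 2 + y ^ 2)) ≠ 0 := by positivity
    simpa [this] using hs
  have h3 := hu.integral_eq_one
  rw [integral_congr_ae h2] at h3
  simp at h3

lemma norm_cauchyMoment_one_le (hu : IsDensity u) {z : ℂ} (hz : 0 < z.im) :
    ‖cauchyMoment u 1 z‖ ≤ z.im⁻¹ := by
  refine (norm_integral_le_of_norm_le (hu.integrable.norm.mul_const (z.im⁻¹))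
    (Eventually.of_forall fun s => ?_)).trans_eq ?_
  · rw [norm_smul, pow_one]
    gcongr
    exact norm_inv_sub_ofReal_le hz s
  · rw [integral_mul_const, hu.integral_norm, one_mul]

lemma poissonExt_le (hu : IsDensity u) (x : ℝ) {y : ℝ} (hy : 0 < y) : poissonExt u x y ≤ y⁻¹ := by
  have := hu.norm_cauchyMoment_one_le (z := planePoint x y) (by simpa)
  rw [planePoint_im] at this
  exact (neg_le_abs _).trans ((Complex.abs_im_le_norm _).trans this)

lemma norm_cauchyMoment_le (hu : IsDensity u) (k : ℕ) (x : ℝ) {y : ℝ} (hy : 0 < y) :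
    ‖cauchyMoment u (k + 2) (planePoint x y)‖ ≤ poissonExt u x y * y⁻¹ ^ (k + 1) := by
  have hz : 0 < (planePoint x y).im := by simpa
  rw [hu.poissonExt_eq x hy, ← integral_mul_const]
  refine norm_integral_le_of_norm_le ((hu.integrable_poisson x hy).mul_const _)
    (Eventually.of_forall fun s => ?_)
  have h1 := norm_inv_sub_ofReal_le hz s
  rw [planePoint_im] at h1
  rw [norm_smul, norm_pow, pow_add, norm_inv_planePoint_sub_sq hy,
    Real.norm_of_nonneg (hu.nonneg s),
    pow_succ y⁻¹ k]
  have := hu.nonneg s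
  calc _ = u s * (y / ((x - s) ^ 2 + y ^ 2)) * (‖(planePoint x y - s)⁻¹‖ ^ k * y⁻¹) := by ring
    _ ≤ _ := by gcongr

end IsDensity

lemma integrable_poissonKernel {y : ℝ} (hy : 0 < y) :
    Integrable fun x : ℝ => y / (x ^ 2 + y ^ 2) := by
  refine ((integrable_inv_one_add_sq.comp_div hy.ne').mul_const y⁻¹).congr
    (Eventually.of_forall fun x => ?_)
  simp only
  field_simp
  ring

lemma integral_poissonKernel {y : ℝ} (hy : 0 < y) : ∫ x : ℝ, y / (x ^ 2 + y ^ 2) = Real.pi := by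
  have h := Measure.integral_comp_div (fun x : ℝ => (1 + x ^ 2)⁻¹) y
  rw [integral_univ_inv_one_add_sq, abs_of_pos hy, smul_eq_mul] at h
  have e : ∀ x : ℝ, y / (x ^ 2 + y ^ 2) = (1 + (x / y) ^ 2)⁻¹ * y⁻¹ := fun x => by
    field_simp
    ring
  simp_rw [e]
  rw [integral_mul_const, h]
  field_simp

namespace IsDensity

variable {u : ℝ → ℝ}

lemma poissonExt_eq_convolution (hu : IsDensity u) {y : ℝ} (hy : 0 < y) :
    (fun x => poissonExt u x y)
      = convolution u (fun x : ℝ => y / (x ^ 2 + y ^ 2)) (ContinuousLinearMap.mul ℝ ℝ) volume := by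
  ext x
  rw [hu.poissonExt_eq x hy]
  rfl

lemma integrable_poissonExt (hu : IsDensity u) {y : ℝ} (hy : 0 < y) :
    Integrable fun x => poissonExt u x y := by
  rw [hu.poissonExt_eq_convolution hy]
  exact hu.integrable.integrable_convolution _ (integrable_poissonKernel hy)

lemma integral_poissonExt (hu : IsDensity u) {y : ℝ} (hy : 0 < y) :
    ∫ x, poissonExt u x y = Real.pi := by
  rw [hu.poissonExt_eq_convolution hy, integral_convolution _ hu.integrable
    (integrable_poissonKernel hy), integral_poissonKernel hy, hu.integral_eq_one]
  simp

lemma poissonExt_le_of_le (hu : IsDensity u) (x : ℝ) {y y' : ℝ} (hy : 0 < y) (h1 : y / 2 ≤ y')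
    (h2 : y' ≤ 2 * y) : poissonExt u x y' ≤ 8 * poissonExt u x y := by
  have hy' : 0 < y' := by linarith
  rw [hu.poissonExt_eq x hy, hu.poissonExt_eq x hy', ← integral_const_mul]
  refine integral_mono (hu.integrable_poisson x hy') ((hu.integrable_poisson x hy).const_mul 8)
    fun s => ?_
  have h0 := hu.nonneg s
  have h3 : y' / ((x - s) ^ 2 + y' ^ 2) ≤ 8 * (y / ((x - s) ^ 2 + y ^ 2)) := by
    rw [← mul_div_assoc, div_le_div_iff₀ (by positivity) (by positivity)]
    have h4 : y ^ 2 ≤ 4 * y' ^ 2 := by nlinarith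
    have h5 : 0 ≤ (x - s) ^ 2 := sq_nonneg _
    calc y' * ((x - s) ^ 2 + y ^ 2) ≤ (2 * y) * (4 * (x - s) ^ 2 + 4 * y' ^ 2) := by
          gcongr
          linarith
      _ = _ := by ring
  calc _ ≤ u s * (8 * (y / ((x - s) ^ 2 + y ^ 2))) := by gcongr
    _ = _ := by ring

lemma hasDerivAt_poissonExt_left (hu : IsDensity u) (x : ℝ) {y : ℝ} (hy : 0 < y) :
    HasDerivAt (fun x => poissonExt u x y) (cauchyMoment u 2 (planePoint x y)).im x := by
  have h := (hasDerivAt_planePoint_left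
    (hu.hasDerivAt_cauchyMoment 0 (z := planePoint x y) (by simpa))).complex_im.fun_neg
  simpa [poissonExt] using h

lemma hasDerivAt_poissonExt_right (hu : IsDensity u) (x : ℝ) {y : ℝ} (hy : 0 < y) :
    HasDerivAt (fun y => poissonExt u x y) (cauchyMoment u 2 (planePoint x y)).re y := by
  have h := (hasDerivAt_planePoint_right
    (hu.hasDerivAt_cauchyMoment 0 (z := planePoint x y) (by simpa))).complex_im.fun_neg
  simpa [poissonExt] using h

lemma hasDerivAt_cauchyMoment_re_left (hu : IsDensity u) (x : ℝ) {y : ℝ} (hy : 0 < y) :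
    HasDerivAt (fun x => (cauchyMoment u 1 (planePoint x y)).re)
      (-(cauchyMoment u 2 (planePoint x y)).re) x := by
  have h := (hasDerivAt_planePoint_left
    (hu.hasDerivAt_cauchyMoment 0 (z := planePoint x y) (by simpa))).complex_re
  simpa using h

lemma hasDerivAt_cauchyMoment_two_im_left (hu : IsDensity u) (x : ℝ) {y : ℝ} (hy : 0 < y) :
    HasDerivAt (fun x => (cauchyMoment u 2 (planePoint x y)).im)
      (-2 * (cauchyMoment u 3 (planePoint x y)).im) x := by
  have h := (hasDerivAt_planePoint_left
    (hu.hasDerivAt_cauchyMoment 1 (z := planePoint x y) (by simpa))).complex_im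
  convert h using 1
  simp
  ring

lemma hasDerivAt_cauchyMoment_two_re_right (hu : IsDensity u) (x : ℝ) {y : ℝ} (hy : 0 < y) :
    HasDerivAt (fun y => (cauchyMoment u 2 (planePoint x y)).re)
      (2 * (cauchyMoment u 3 (planePoint x y)).im) y := by
  have h := (hasDerivAt_planePoint_right
    (hu.hasDerivAt_cauchyMoment 1 (z := planePoint x y) (by simpa))).complex_re
  convert h using 1
  simp
  ring

lemma continuous_cauchyMoment (hu : IsDensity u) (k : ℕ) {y : ℝ} (hy : 0 < y) :
    Continuous fun x => cauchyMoment u (k + 1) (planePoint x y) :=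
  continuous_iff_continuousAt.2 fun x => (hasDerivAt_planePoint_left
    (hu.hasDerivAt_cauchyMoment k (z := planePoint x y) (by simpa))).continuousAt

lemma continuous_poissonExt (hu : IsDensity u) {y : ℝ} (hy : 0 < y) :
    Continuous fun x => poissonExt u x y :=
  (Complex.continuous_im.comp (hu.continuous_cauchyMoment 0 hy)).neg

end IsDensity

lemma Real.rpow_sub_one_mul_self {U : ℝ} (hU : 0 < U) (p : ℝ) : U ^ (p - 1) * U = U ^ p := by
  rw [Real.rpow_sub_one hU.ne', div_mul_cancel₀ _ hU.ne']

lemma abs_rpow_deriv_bound {U c a b p : ℝ} (hp : 0 < p) (hU : 0 < U) (hc : U ≤ c)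
    (ha : |a| ≤ U * c) (hb : |b| ≤ U * c ^ 2) :
    |a * p * U ^ (p - 1) * a + U ^ p * (2 * b)| ≤ (p + 2) * c ^ p * c ^ 2 * U := by
  have hUp : 0 < U ^ p := Real.rpow_pos_of_pos hU p
  have hU1 : 0 < U ^ (p - 1) := Real.rpow_pos_of_pos hU _
  have hUc : U ^ p ≤ c ^ p := Real.rpow_le_rpow hU.le hc hp.le
  have hcp : 0 < c ^ p := hUp.trans_le hUc
  have h1 : |a * p * U ^ (p - 1) * a| ≤ p * c ^ p * c ^ 2 * U := by
    have e : a * p * U ^ (p - 1) * a = p * U ^ (p - 1) * |a| ^ 2 := by rw [sq_abs]; ring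
    rw [e, abs_of_nonneg (by positivity)]
    calc _ ≤ p * U ^ (p - 1) * (U * c) ^ 2 := by gcongr
      _ = p * (U ^ (p - 1) * U) * c ^ 2 * U := by ring
      _ = p * U ^ p * c ^ 2 * U := by rw [Real.rpow_sub_one_mul_self hU]
      _ ≤ _ := by gcongr
  have h2 : |U ^ p * (2 * b)| ≤ 2 * c ^ p * c ^ 2 * U := by
    rw [abs_mul, abs_mul, abs_of_pos hUp, abs_of_pos (two_pos : (0 : ℝ) < 2)]
    calc _ ≤ c ^ p * (2 * (U * c ^ 2)) := by gcongr
      _ = _ := by ring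
  calc _ ≤ _ := (abs_add_le _ _).trans (add_le_add h1 h2)
    _ = _ := by ring

namespace IsDensity

variable {u : ℝ → ℝ}

lemma integrable_of_abs_le (hu : IsDensity u) {y : ℝ} (hy : 0 < y) {f : ℝ → ℝ} (hf : Continuous f)
    {C : ℝ} (h : ∀ x, |f x| ≤ C * poissonExt u x y) : Integrable f :=
  ((hu.integrable_poissonExt hy).const_mul C).mono' hf.aestronglyMeasurable (Eventually.of_forall h)

lemma abs_re_cauchyMoment_le (hu : IsDensity u) (k : ℕ) (x : ℝ) {y : ℝ} (hy : 0 < y) :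
    |(cauchyMoment u (k + 2) (planePoint x y)).re| ≤ poissonExt u x y * y⁻¹ ^ (k + 1) :=
  (Complex.abs_re_le_norm _).trans (hu.norm_cauchyMoment_le k x hy)

lemma abs_im_cauchyMoment_le (hu : IsDensity u) (k : ℕ) (x : ℝ) {y : ℝ} (hy : 0 < y) :
    |(cauchyMoment u (k + 2) (planePoint x y)).im| ≤ poissonExt u x y * y⁻¹ ^ (k + 1) :=
  (Complex.abs_im_le_norm _).trans (hu.norm_cauchyMoment_le k x hy)

lemma poissonExt_rpow_le (hu : IsDensity u) (x : ℝ) {y p : ℝ} (hy : 0 < y) (hp : 0 ≤ p) :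
    poissonExt u x y ^ p ≤ y⁻¹ ^ p :=
  Real.rpow_le_rpow (hu.poissonExt_pos x hy).le (hu.poissonExt_le x hy) hp

lemma continuous_poissonExt_rpow (hu : IsDensity u) {y : ℝ} (hy : 0 < y) (p : ℝ) :
    Continuous fun x => poissonExt u x y ^ p :=
  (hu.continuous_poissonExt hy).rpow_const fun x => Or.inl (hu.poissonExt_pos x hy).ne'

lemma abs_rpow_mul_le (hu : IsDensity u) (x : ℝ) {y p a c : ℝ} (hy : 0 < y) (hp : 0 ≤ p)
    (ha : |a| ≤ poissonExt u x y * c) :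
    |poissonExt u x y ^ p * a| ≤ y⁻¹ ^ p * c * poissonExt u x y := by
  have h := hu.poissonExt_pos x hy
  have := hu.poissonExt_rpow_le x hy hp
  have h0 : 0 < poissonExt u x y ^ p := by positivity
  rw [abs_mul, abs_of_pos h0]
  calc _ ≤ y⁻¹ ^ p * (poissonExt u x y * c) := by gcongr
    _ = _ := by ring

lemma hasDerivAt_energyRate (hu : IsDensity u) {p y : ℝ} (hp : 0 < p) (hy : 0 < y) :
    HasDerivAt (fun y => ∫ x, poissonExt u x y ^ p * (cauchyMoment u 2 (planePoint x y)).re)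
      (∫ x, ((cauchyMoment u 2 (planePoint x y)).re * p * poissonExt u x y ^ (p - 1)
          * (cauchyMoment u 2 (planePoint x y)).re
        + poissonExt u x y ^ p * (2 * (cauchyMoment u 3 (planePoint x y)).im))) y := by
  have hball : ∀ w ∈ Metric.ball y (y / 2), y / 2 < w ∧ w < 2 * y := fun w hw => by
    rw [Real.ball_eq_Ioo] at hw
    constructor <;> linarith [hw.1, hw.2]
  have hcont : ∀ w, 0 < w → Continuous fun x =>
      poissonExt u x w ^ p * (cauchyMoment u 2 (planePoint x w)).re := fun w hw =>
    (hu.continuous_poissonExt_rpow hw p).mul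
      (Complex.continuous_re.comp (hu.continuous_cauchyMoment 1 hw))
  have hcont' : ∀ w, 0 < w → Continuous fun x =>
      (cauchyMoment u 2 (planePoint x w)).re * p * poissonExt u x w ^ (p - 1)
          * (cauchyMoment u 2 (planePoint x w)).re
        + poissonExt u x w ^ p * (2 * (cauchyMoment u 3 (planePoint x w)).im) := fun w hw => by
    have h1 := Complex.continuous_re.comp (hu.continuous_cauchyMoment 1 hw)
    have h2 := Complex.continuous_im.comp (hu.continuous_cauchyMoment 2 hw)
    exact (((h1.mul continuous_const).mul (hu.continuous_poissonExt_rpow hw _)).mul h1).add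
      ((hu.continuous_poissonExt_rpow hw p).mul (continuous_const.mul h2))
  refine (hasDerivAt_integral_of_dominated_loc_of_deriv_le (μ := volume)
    (F := fun y x => poissonExt u x y ^ p * (cauchyMoment u 2 (planePoint x y)).re)
    (F' := fun y x => (cauchyMoment u 2 (planePoint x y)).re * p * poissonExt u x y ^ (p - 1)
          * (cauchyMoment u 2 (planePoint x y)).re
        + poissonExt u x y ^ p * (2 * (cauchyMoment u 3 (planePoint x y)).im))
    (bound := fun x => (p + 2) * (y / 2)⁻¹ ^ p * (y / 2)⁻¹ ^ 2 * (8 * poissonExt u x y))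
    (Metric.ball_mem_nhds y (half_pos hy)) ?_ ?_ ?_ ?_ ?_ ?_).2
  · filter_upwards [lt_mem_nhds hy] with w hw using (hcont w hw).aestronglyMeasurable
  · exact hu.integrable_of_abs_le hy (hcont y hy) fun x =>
      hu.abs_rpow_mul_le x hy hp.le (hu.abs_re_cauchyMoment_le 0 x hy)
  · exact (hcont' y hy).aestronglyMeasurable
  · refine Eventually.of_forall fun x w hw => ?_
    obtain ⟨h1, h2⟩ := hball w hw
    have hw0 : 0 < w := (half_pos hy).trans h1
    have h3 := hu.poissonExt_le_of_le x hy h1.le h2.le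
    have h4 := hu.poissonExt_pos x hw0
    have h5 := abs_rpow_deriv_bound hp h4 (hu.poissonExt_le x hw0)
      (by simpa using hu.abs_re_cauchyMoment_le 0 x hw0)
      (by simpa using hu.abs_im_cauchyMoment_le 1 x hw0)
    refine h5.trans ?_
    have h6 : w⁻¹ ≤ (y / 2)⁻¹ := by gcongr
    gcongr
  · exact ((hu.integrable_poissonExt hy).const_mul 8).const_mul _
  · refine Eventually.of_forall fun x w hw => ?_
    have hw0 : 0 < w := (half_pos hy).trans (hball w hw).1
    exact ((hu.hasDerivAt_poissonExt_right x hw0).rpow_const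
      (Or.inl (hu.poissonExt_pos x hw0).ne')).mul (hu.hasDerivAt_cauchyMoment_two_re_right x hw0)

lemma integrable_energyRate (hu : IsDensity u) {p y : ℝ} (hp : 0 < p) (hy : 0 < y) :
    Integrable fun x => poissonExt u x y ^ p * (cauchyMoment u 2 (planePoint x y)).re :=
  hu.integrable_of_abs_le hy ((hu.continuous_poissonExt_rpow hy p).mul
      (Complex.continuous_re.comp (hu.continuous_cauchyMoment 1 hy))) fun x =>
    hu.abs_rpow_mul_le x hy hp.le (hu.abs_re_cauchyMoment_le 0 x hy)

lemma integrable_rpow_deriv (hu : IsDensity u) {p y : ℝ} (hp : 0 < p) (hy : 0 < y)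
    {a b : ℝ → ℝ} (ha : Continuous a) (hb : Continuous b)
    (ha' : ∀ x, |a x| ≤ poissonExt u x y * y⁻¹) (hb' : ∀ x, |b x| ≤ poissonExt u x y * y⁻¹ ^ 2) :
    Integrable fun x => a x * p * poissonExt u x y ^ (p - 1) * a x
      + poissonExt u x y ^ p * (2 * b x) :=
  hu.integrable_of_abs_le hy
    ((((ha.mul continuous_const).mul (hu.continuous_poissonExt_rpow hy _)).mul ha).add
      ((hu.continuous_poissonExt_rpow hy p).mul (continuous_const.mul hb)))
    fun x => abs_rpow_deriv_bound hp (hu.poissonExt_pos x hy) (hu.poissonExt_le x hy)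
      (ha' x) (hb' x)

lemma integral_energyRate_deriv_nonneg (hu : IsDensity u) {p y : ℝ} (hp : 0 < p) (hy : 0 < y) :
    0 ≤ ∫ x, ((cauchyMoment u 2 (planePoint x y)).re * p * poissonExt u x y ^ (p - 1)
          * (cauchyMoment u 2 (planePoint x y)).re
        + poissonExt u x y ^ p * (2 * (cauchyMoment u 3 (planePoint x y)).im)) := by
  have c2 := hu.continuous_cauchyMoment 1 hy
  have c3 := hu.continuous_cauchyMoment 2 hy
  have i1 := hu.integrable_rpow_deriv hp hy (Complex.continuous_re.comp c2)
    (Complex.continuous_im.comp c3) (fun x => by simpa using hu.abs_re_cauchyMoment_le 0 x hy)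
    (fun x => by simpa using hu.abs_im_cauchyMoment_le 1 x hy)
  have i2 := hu.integrable_rpow_deriv hp hy (Complex.continuous_im.comp c2)
    (Complex.continuous_im.comp c3).neg (fun x => by simpa using hu.abs_im_cauchyMoment_le 0 x hy)
    (fun x => by simpa using hu.abs_im_cauchyMoment_le 1 x hy)
  have h0 := integral_eq_zero_of_hasDerivAt_of_integrable
    (f := fun x => poissonExt u x y ^ p * (cauchyMoment u 2 (planePoint x y)).im)
    (fun x => (((hu.hasDerivAt_poissonExt_left x hy).rpow_const
      (Or.inl (hu.poissonExt_pos x hy).ne')).mul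
      (hu.hasDerivAt_cauchyMoment_two_im_left x hy)).congr_deriv (by
        simp only [Function.comp_apply, Pi.neg_apply]; ring)) i2
    (hu.integrable_of_abs_le hy ((hu.continuous_poissonExt_rpow hy p).mul
      (Complex.continuous_im.comp c2)) fun x =>
        hu.abs_rpow_mul_le x hy hp.le (hu.abs_im_cauchyMoment_le 0 x hy))
  have h2 := integral_add i1 i2
  rw [h0, add_zero] at h2
  refine le_of_le_of_eq (integral_nonneg fun x => ?_) h2
  have h1 := hu.poissonExt_pos x hy
  simp only [Function.comp_apply, Pi.neg_apply]
  have : 0 ≤ p * poissonExt u x y ^ (p - 1) * ((cauchyMoment u 2 (planePoint x y)).re ^ 2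
    + (cauchyMoment u 2 (planePoint x y)).im ^ 2) := by positivity
  refine this.trans_eq ?_
  ring

/-- The dissipation rate of the `L^(p+1)` energy of the harmonic extension is nonpositive. -/
lemma energyRate_nonpos (hu : IsDensity u) {p y : ℝ} (hp : 0 < p) (hy : 0 < y) :
    ∫ x, poissonExt u x y ^ p * (cauchyMoment u 2 (planePoint x y)).re ≤ 0 := by
  set J : ℝ → ℝ := fun y => ∫ x, poissonExt u x y ^ p * (cauchyMoment u 2 (planePoint x y)).re
    with hJ
  have hmono : MonotoneOn J (Ioi 0) := by
    refine monotoneOn_of_deriv_nonneg (convex_Ioi 0)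
      (fun y hy => (hu.hasDerivAt_energyRate hp hy).continuousAt.continuousWithinAt)
      (fun y hy => ?_) fun y hy => ?_
    · rw [interior_Ioi] at hy
      exact (hu.hasDerivAt_energyRate hp hy).differentiableAt.differentiableWithinAt
    · rw [interior_Ioi] at hy
      rw [(hu.hasDerivAt_energyRate hp hy).deriv]
      exact hu.integral_energyRate_deriv_nonneg hp hy
  have hlim : Tendsto (fun z : ℝ => z⁻¹ ^ p * z⁻¹ * Real.pi) atTop (𝓝 0) := by
    have h1 : Tendsto (fun z : ℝ => z⁻¹ ^ p) atTop (𝓝 (0 ^ p)) :=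
      tendsto_inv_atTop_zero.rpow_const (Or.inr hp.le)
    rw [Real.zero_rpow hp.ne'] at h1
    simpa using (h1.mul tendsto_inv_atTop_zero).mul_const Real.pi
  refine ge_of_tendsto hlim ?_
  filter_upwards [eventually_ge_atTop y] with z hz
  have hz0 : 0 < z := hy.trans_le hz
  refine (hmono hy hz0 hz).trans ((le_abs_self _).trans ?_)
  refine (norm_integral_le_of_norm_le
    (f := fun x => poissonExt u x z ^ p * (cauchyMoment u 2 (planePoint x z)).re)
    ((hu.integrable_poissonExt hz0).const_mul (z⁻¹ ^ p * z⁻¹))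
    (Eventually.of_forall fun x => ?_)).trans_eq ?_
  · exact hu.abs_rpow_mul_le x hz0 hp.le (by simpa using hu.abs_re_cauchyMoment_le 0 x hz0)
  · rw [integral_const_mul, hu.integral_poissonExt hz0]

end IsDensity

lemma ae_fst_ne_snd : ∀ᵐ p : ℝ × ℝ, p.1 ≠ p.2 := by
  have hm : MeasurableSet {p : ℝ × ℝ | p.1 = p.2} :=
    measurableSet_eq_fun measurable_fst measurable_snd
  rw [ae_iff]
  simp only [ne_eq, not_not]
  rw [Measure.volume_eq_prod, Measure.measure_prod_null hm]
  refine Eventually.of_forall fun x => ?_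
  have : Prod.mk x ⁻¹' {p : ℝ × ℝ | p.1 = p.2} = {x} := by
    ext y
    simp [eq_comm]
  simp [this]

lemma half_symPairing_inv_sq {u : ℝ → ℝ} (hu : IsDensity u) {z : ℂ} (hz : 0 < z.im) :
    (1 / 2 : ℝ) • symPairing u (fun s => ((z - s)⁻¹) ^ 2) =
      cauchyMoment u 1 z * cauchyMoment u 2 z := by
  have i1 := hu.integrable_cauchyMoment 1 hz
  have i2 := hu.integrable_cauchyMoment 2 hz
  have h : symPairing u (fun s => ((z - s)⁻¹) ^ 2) = ∫ p : ℝ × ℝ,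
      ((u p.1 • ((z - p.1)⁻¹) ^ 1) * (u p.2 • ((z - p.2)⁻¹) ^ 2)
        + (u p.1 • ((z - p.1)⁻¹) ^ 2) * (u p.2 • ((z - p.2)⁻¹) ^ 1)) := by
    refine integral_congr_ae ?_
    filter_upwards [ae_fst_ne_snd] with p hp
    have h1 := sub_ofReal_ne_zero hz p.1
    have h2 := sub_ofReal_ne_zero hz p.2
    have h3 : (p.1 - p.2 : ℂ) ≠ 0 := sub_ne_zero.2 (by exact_mod_cast hp)
    simp only [Complex.real_smul]
    push_cast
    field_simp
    ring
  rw [h, Measure.volume_eq_prod, integral_add (i1.mul_prod i2) (i2.mul_prod i1),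
    integral_prod_mul (fun s : ℝ => u s • ((z - s)⁻¹) ^ 1) (fun s : ℝ => u s • ((z - s)⁻¹) ^ 2),
    integral_prod_mul (fun s : ℝ => u s • ((z - s)⁻¹) ^ 2) (fun s : ℝ => u s • ((z - s)⁻¹) ^ 1)]
  change (1 / 2 : ℝ) • (cauchyMoment u 1 z * cauchyMoment u 2 z
    + cauchyMoment u 2 z * cauchyMoment u 1 z) = _
  rw [Complex.real_smul]
  push_cast
  ring

lemma exists_norm_inv_sub_pow_le {z : ℂ} (hz : 0 < z.im) (k : ℕ) (c : ℂ) :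
    ∃ B, ∀ s : ℝ, ‖c * ((z - s)⁻¹) ^ k‖ ≤ B := by
  refine ⟨‖c‖ * z.im⁻¹ ^ k, fun s => ?_⟩
  rw [norm_mul, norm_pow]
  gcongr
  exact norm_inv_sub_ofReal_le hz s

namespace IsDysonFlow

variable {m : ℝ → ℝ → ℝ}

lemma isDensity (hm : IsDysonFlow m) {t : ℝ} (ht : 0 ≤ t) : IsDensity (m t) :=
  ⟨fun x => hm.nonneg t x ht, hm.integral_eq_one t ht⟩

lemma exists_lipschitz_cauchyMoment (hm : IsDysonFlow m) (k : ℕ) {z : ℂ} (hz : 0 < z.im) :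
    ∃ B, ∀ a b, 0 ≤ a → a ≤ b →
      (‖cauchyMoment (m b) (k + 1) z - cauchyMoment (m a) (k + 1) z‖ ≤ B * |b - a|) ∧
      ∫ t in a..b, (1 / 2 : ℝ) • symPairing (m t) (fun s : ℝ => (k + 1) * ((z - s)⁻¹) ^ (k + 2))
        = cauchyMoment (m b) (k + 1) z - cauchyMoment (m a) (k + 1) z := by
  obtain ⟨B₀, h₀⟩ := exists_norm_inv_sub_pow_le hz (k + 1) 1
  obtain ⟨B₁, h₁⟩ := exists_norm_inv_sub_pow_le hz (k + 2) (k + 1)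
  obtain ⟨B₂, h₂⟩ := exists_norm_inv_sub_pow_le hz (k + 3) ((k + 1) * ((k + 1 : ℕ) + 1))
  have d₁ := fun s => hasDerivAt_inv_ofReal_sub_pow hz s k
  have d₂ : ∀ s : ℝ, HasDerivAt (fun s : ℝ => (k + 1) * ((z - s)⁻¹) ^ (k + 2))
      ((k + 1) * ((k + 1 : ℕ) + 1) * ((z - s)⁻¹) ^ (k + 3)) s := fun s =>
    ((hasDerivAt_inv_ofReal_sub_pow hz s (k + 1)).const_mul _).congr_deriv (mul_assoc _ _ _).symm
  have b₀ : ∀ s : ℝ, ‖((z - s)⁻¹) ^ (k + 1)‖ ≤ max B₀ (max B₁ B₂) := fun s =>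
    le_max_of_le_left (by simpa only [one_mul] using h₀ s)
  have b₁ := fun s => (h₁ s).trans ((le_max_left _ _).trans (le_max_right B₀ (max B₁ B₂)))
  have b₂ := fun s => (h₂ s).trans ((le_max_right _ _).trans (le_max_right B₀ (max B₁ B₂)))
  exact ⟨_, fun a b ha hab => ⟨hm.norm_integral_smul_sub_le d₁ d₂ b₀ b₁ b₂ ha hab,
    hm.weak_form d₁ d₂ b₀ b₁ b₂ ha hab⟩⟩

lemma continuousOn_cauchyMoment (hm : IsDysonFlow m) (k : ℕ) {z : ℂ} (hz : 0 < z.im) :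
    ContinuousOn (fun t => cauchyMoment (m t) (k + 1) z) (Ici 0) := by
  obtain ⟨B, hB⟩ := hm.exists_lipschitz_cauchyMoment k hz
  have hB0 : 0 ≤ B := by simpa using (norm_nonneg _).trans (hB 0 1 le_rfl zero_le_one).1
  refine (LipschitzOnWith.of_dist_le_mul (K := ⟨B, hB0⟩) fun s hs t ht => ?_).continuousOn
  rw [dist_eq_norm, Real.dist_eq]
  rcases le_total t s with h | h
  · exact (hB t s ht h).1
  · rw [norm_sub_rev, abs_sub_comm]
    exact (hB s t hs h).1

/-- The Cauchy transform of a Dyson flow solves the complex Burgers equation. -/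
lemma hasDerivAt_cauchyMoment_time (hm : IsDysonFlow m) {z : ℂ} (hz : 0 < z.im) {t : ℝ}
    (ht : 0 < t) : HasDerivAt (fun t => cauchyMoment (m t) 1 z)
      (cauchyMoment (m t) 1 z * cauchyMoment (m t) 2 z) t := by
  obtain ⟨B, hB⟩ := hm.exists_lipschitz_cauchyMoment 0 hz
  have hc : ContinuousOn (fun t => cauchyMoment (m t) 1 z * cauchyMoment (m t) 2 z) (Ici 0) :=
    (hm.continuousOn_cauchyMoment 0 hz).mul (hm.continuousOn_cauchyMoment 1 hz)
  have h := intervalIntegral.integral_hasDerivAt_right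
    (hc.mono (by rw [uIcc_of_le ht.le]; exact Icc_subset_Ici_self)).intervalIntegrable
    ((hc.mono Ioi_subset_Ici_self).stronglyMeasurableAtFilter isOpen_Ioi t ht)
    (hc.continuousAt (Ici_mem_nhds ht))
  refine (h.const_add (cauchyMoment (m 0) 1 z)).congr_of_eventuallyEq ?_
  filter_upwards [lt_mem_nhds ht] with τ hτ
  have h1 := (hB 0 τ le_rfl hτ.le).2
  rw [← sub_eq_iff_eq_add', ← h1]
  refine intervalIntegral.integral_congr fun r hr => ?_
  rw [uIcc_of_le hτ.le] at hr
  rw [← half_symPairing_inv_sq (hm.isDensity hr.1) hz]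
  simp

lemma hasDerivAt_poissonExt_time (hm : IsDysonFlow m) (x : ℝ) {y t : ℝ} (hy : 0 < y)
    (ht : 0 < t) : HasDerivAt (fun t => poissonExt (m t) x y)
      (-(cauchyMoment (m t) 1 (planePoint x y) * cauchyMoment (m t) 2 (planePoint x y)).im) t :=
  (hm.hasDerivAt_cauchyMoment_time (z := planePoint x y) (by simpa) ht).complex_im.fun_neg

lemma continuousOn_poissonExt_time (hm : IsDysonFlow m) (x : ℝ) {y : ℝ} (hy : 0 < y) :
    ContinuousOn (fun t => poissonExt (m t) x y) (Ici 0) :=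
  (Complex.continuous_im.comp_continuousOn
    (hm.continuousOn_cauchyMoment 0 (z := planePoint x y) (by simpa))).neg

lemma abs_poissonExt_time_deriv_le (hm : IsDysonFlow m) (x : ℝ) {y t : ℝ} (hy : 0 < y)
    (ht : 0 ≤ t) :
    |-(cauchyMoment (m t) 1 (planePoint x y) * cauchyMoment (m t) 2 (planePoint x y)).im|
      ≤ poissonExt (m t) x y * y⁻¹ ^ 2 := by
  have hu := hm.isDensity ht
  have h1 := hu.norm_cauchyMoment_one_le (z := planePoint x y) (by simpa)
  have h2 := hu.norm_cauchyMoment_le 0 x hy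
  rw [planePoint_im] at h1
  rw [abs_neg]
  refine (Complex.abs_im_le_norm _).trans ?_
  rw [norm_mul]
  calc _ ≤ y⁻¹ * (poissonExt (m t) x y * y⁻¹ ^ (0 + 1)) := by gcongr
    _ = _ := by ring

lemma poissonExt_le_exp_mul (hm : IsDysonFlow m) (x : ℝ) {y t : ℝ} (hy : 0 < y) (ht : 0 ≤ t) :
    poissonExt (m t) x y ≤ Real.exp (y⁻¹ ^ 2 * t) * poissonExt (m 0) x y := by
  have hd : ∀ τ : ℝ, HasDerivAt (fun τ => Real.exp (-(y⁻¹ ^ 2 * τ)))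
      (Real.exp (-(y⁻¹ ^ 2 * τ)) * -(y⁻¹ ^ 2)) τ := fun τ =>
    (((hasDerivAt_id τ).const_mul (y⁻¹ ^ 2)).fun_neg.congr_deriv (by rw [mul_one])).exp
  have hanti : AntitoneOn (fun τ => poissonExt (m τ) x y * Real.exp (-(y⁻¹ ^ 2 * τ))) (Ici 0) := by
    refine antitoneOn_of_deriv_nonpos (convex_Ici 0)
      ((hm.continuousOn_poissonExt_time x hy).mul (by fun_prop)) (fun τ hτ => ?_) fun τ hτ => ?_
    · rw [interior_Ici] at hτ
      exact ((hm.hasDerivAt_poissonExt_time x hy hτ).mul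
        (hd τ)).differentiableAt.differentiableWithinAt
    · rw [interior_Ici] at hτ
      have h1 := (le_abs_self _).trans (hm.abs_poissonExt_time_deriv_le x hy (le_of_lt hτ))
      have h2 := Real.exp_pos (-(y⁻¹ ^ 2 * τ))
      rw [((hm.hasDerivAt_poissonExt_time x hy hτ).fun_mul (hd τ)).deriv]
      nlinarith
  have h := hanti self_mem_Ici (mem_Ici.2 ht) ht
  simp only [mul_zero, neg_zero, Real.exp_zero, mul_one] at h
  rw [Real.exp_neg, ← div_eq_mul_inv, div_le_iff₀ (Real.exp_pos _)] at h
  linarith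

end IsDysonFlow

namespace IsDensity

variable {u : ℝ → ℝ}

lemma poissonExt_rpow_le_mul (hu : IsDensity u) (x : ℝ) {y p : ℝ} (hy : 0 < y) (hp : 1 < p) :
    poissonExt u x y ^ p ≤ y⁻¹ ^ (p - 1) * poissonExt u x y := by
  have h := hu.poissonExt_pos x hy
  rw [← Real.rpow_sub_one_mul_self h p]
  exact mul_le_mul_of_nonneg_right (hu.poissonExt_rpow_le x hy (sub_pos.2 hp).le) h.le

lemma integrable_poissonExt_rpow (hu : IsDensity u) {y p : ℝ} (hy : 0 < y) (hp : 1 < p) :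
    Integrable fun x => poissonExt u x y ^ p :=
  hu.integrable_of_abs_le hy (hu.continuous_poissonExt_rpow hy p) fun x => by
    rw [abs_of_pos (Real.rpow_pos_of_pos (hu.poissonExt_pos x hy) p)]
    exact hu.poissonExt_rpow_le_mul x hy hp

lemma abs_mul_rpow_sub_one_le (hu : IsDensity u) (x : ℝ) {y p a c : ℝ} (hy : 0 < y) (hp : 1 < p)
    (ha : |a| ≤ poissonExt u x y * c) :
    |a * p * poissonExt u x y ^ (p - 1)| ≤ p * (y⁻¹ ^ (p - 1) * c) * poissonExt u x y := by
  have h := hu.abs_rpow_mul_le x hy (sub_pos.2 hp).le ha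
  have e : a * p * poissonExt u x y ^ (p - 1) = p * (poissonExt u x y ^ (p - 1) * a) := by ring
  rw [e, abs_mul, abs_of_pos (zero_lt_one.trans hp), mul_assoc p]
  gcongr

/-- Along the complex Burgers flow, the `L^p` energy of the harmonic extension decreases. -/
lemma integral_burgers_nonpos (hu : IsDensity u) {p y : ℝ} (hp : 1 < p) (hy : 0 < y) :
    ∫ x, -(cauchyMoment u 1 (planePoint x y) * cauchyMoment u 2 (planePoint x y)).im * p
      * poissonExt u x y ^ (p - 1) ≤ 0 := by
  have hp0 : 0 < p := zero_lt_one.trans hp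
  have c1 := hu.continuous_cauchyMoment 0 hy
  have c2 := hu.continuous_cauchyMoment 1 hy
  have cU := hu.continuous_poissonExt_rpow hy (p - 1)
  have hM1 : ∀ x, ‖cauchyMoment u 1 (planePoint x y)‖ ≤ y⁻¹ := fun x => by
    simpa using hu.norm_cauchyMoment_one_le (z := planePoint x y) (by simpa)
  have hV : ∀ x, |(cauchyMoment u 1 (planePoint x y)).re| ≤ y⁻¹ := fun x =>
    (Complex.abs_re_le_norm _).trans (hM1 x)
  have i1 : Integrable fun x => -(cauchyMoment u 1 (planePoint x y)
      * cauchyMoment u 2 (planePoint x y)).im * p * poissonExt u x y ^ (p - 1) := by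
    refine hu.integrable_of_abs_le hy
      (((Complex.continuous_im.comp (c1.mul c2)).neg.mul continuous_const).mul cU)
      fun x => hu.abs_mul_rpow_sub_one_le (c := y⁻¹ ^ 2) x hy hp ?_
    rw [abs_neg]
    refine (Complex.abs_im_le_norm _).trans ?_
    rw [norm_mul]
    have h1 := hM1 x
    have h2 := hu.norm_cauchyMoment_le 0 x hy
    calc _ ≤ y⁻¹ * (poissonExt u x y * y⁻¹ ^ (0 + 1)) := by gcongr
      _ = _ := by ring
  have hf' : Integrable fun x => (cauchyMoment u 2 (planePoint x y)).im * p
      * poissonExt u x y ^ (p - 1) * (cauchyMoment u 1 (planePoint x y)).re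
      + poissonExt u x y ^ p * -(cauchyMoment u 2 (planePoint x y)).re := by
    refine Integrable.add (hu.integrable_of_abs_le hy
      (C := p * (y⁻¹ ^ (p - 1) * y⁻¹) * y⁻¹)
      ((((Complex.continuous_im.comp c2).mul continuous_const).mul cU).mul
        (Complex.continuous_re.comp c1)) fun x => ?_) ?_
    · have h1 := hu.abs_mul_rpow_sub_one_le (c := y⁻¹) x hy hp
        (by simpa using hu.abs_im_cauchyMoment_le 0 x hy)
      have h2 := hV x
      have h3 := hu.poissonExt_pos x hy
      rw [abs_mul]
      calc _ ≤ p * (y⁻¹ ^ (p - 1) * y⁻¹) * poissonExt u x y * y⁻¹ := by gcongr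
        _ = _ := by ring
    · simpa using (hu.integrable_energyRate hp0 hy).neg
  have hf : Integrable fun x => poissonExt u x y ^ p * (cauchyMoment u 1 (planePoint x y)).re := by
    refine hu.integrable_of_abs_le hy (C := y⁻¹ ^ (p - 1) * y⁻¹)
      ((hu.continuous_poissonExt_rpow hy p).mul (Complex.continuous_re.comp c1)) fun x => ?_
    have h1 := hu.poissonExt_rpow_le_mul x hy hp
    have h2 := hV x
    have h3 := hu.poissonExt_pos x hy
    have h4 : 0 < poissonExt u x y ^ p := by positivity
    rw [abs_mul, abs_of_pos h4]
    calc _ ≤ y⁻¹ ^ (p - 1) * poissonExt u x y * y⁻¹ := by gcongr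
      _ = _ := by ring
  have h0 := integral_eq_zero_of_hasDerivAt_of_integrable
    (fun x => ((hu.hasDerivAt_poissonExt_left x hy).rpow_const
      (Or.inl (hu.poissonExt_pos x hy).ne')).fun_mul (hu.hasDerivAt_cauchyMoment_re_left x hy))
    hf' hf
  have h2 := integral_add i1 hf'
  rw [h0, add_zero] at h2
  rw [← h2]
  have e : ∀ x, -(cauchyMoment u 1 (planePoint x y) * cauchyMoment u 2 (planePoint x y)).im * p
      * poissonExt u x y ^ (p - 1) + ((cauchyMoment u 2 (planePoint x y)).im * p
      * poissonExt u x y ^ (p - 1) * (cauchyMoment u 1 (planePoint x y)).re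
      + poissonExt u x y ^ p * -(cauchyMoment u 2 (planePoint x y)).re)
      = (p - 1) * (poissonExt u x y ^ p * (cauchyMoment u 2 (planePoint x y)).re) := fun x => by
    rw [← Real.rpow_sub_one_mul_self (hu.poissonExt_pos x hy) p, Complex.mul_im]
    have : (cauchyMoment u 1 (planePoint x y)).im = -poissonExt u x y := by simp [poissonExt]
    rw [this]
    ring
  simp_rw [e]
  rw [integral_const_mul]
  exact mul_nonpos_of_nonneg_of_nonpos (sub_pos.2 hp).le (hu.energyRate_nonpos hp0 hy)

end IsDensity

namespace IsDysonFlow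

variable {m : ℝ → ℝ → ℝ}

lemma integral_poissonExt_rpow_antitoneOn (hm : IsDysonFlow m) {p y : ℝ} (hp : 1 < p) (hy : 0 < y)
    (T : ℝ) : AntitoneOn (fun t => ∫ x, poissonExt (m t) x y ^ p) (Icc 0 T) := by
  have hp0 : 0 < p := zero_lt_one.trans hp
  have hU0 := (hm.isDensity le_rfl).integrable_poissonExt hy
  have hgrow : ∀ t ∈ Icc 0 T, ∀ x,
      poissonExt (m t) x y ≤ Real.exp (y⁻¹ ^ 2 * T) * poissonExt (m 0) x y := fun t ht x => by
    have := (hm.isDensity le_rfl).poissonExt_pos x hy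
    refine (hm.poissonExt_le_exp_mul x hy ht.1).trans ?_
    gcongr
    exact ht.2
  have hd : ∀ t ∈ Ioo 0 T, HasDerivAt (fun t => ∫ x, poissonExt (m t) x y ^ p)
      (∫ x, -(cauchyMoment (m t) 1 (planePoint x y) * cauchyMoment (m t) 2 (planePoint x y)).im * p
        * poissonExt (m t) x y ^ (p - 1)) t := fun t ht => by
    have hu := hm.isDensity ht.1.le
    refine (hasDerivAt_integral_of_dominated_loc_of_deriv_le (μ := volume)
      (F := fun t x => poissonExt (m t) x y ^ p)
      (F' := fun t x => -(cauchyMoment (m t) 1 (planePoint x y)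
        * cauchyMoment (m t) 2 (planePoint x y)).im * p * poissonExt (m t) x y ^ (p - 1))
      (bound := fun x => p * (y⁻¹ ^ (p - 1) * y⁻¹ ^ 2)
        * (Real.exp (y⁻¹ ^ 2 * T) * poissonExt (m 0) x y))
      (Ioo_mem_nhds ht.1 ht.2) ?_ ?_ ?_ ?_ ?_ ?_).2
    · filter_upwards [lt_mem_nhds ht.1] with s hs
      exact ((hm.isDensity hs.le).continuous_poissonExt_rpow hy p).aestronglyMeasurable
    · exact hu.integrable_poissonExt_rpow hy hp
    · exact (((Complex.continuous_im.comp ((hu.continuous_cauchyMoment 0 hy).mul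
        (hu.continuous_cauchyMoment 1 hy))).neg.mul continuous_const).mul
          (hu.continuous_poissonExt_rpow hy (p - 1))).aestronglyMeasurable
    · refine Eventually.of_forall fun x s hs => ?_
      refine ((hm.isDensity hs.1.le).abs_mul_rpow_sub_one_le x hy hp
        (hm.abs_poissonExt_time_deriv_le x hy hs.1.le)).trans ?_
      have := hgrow s (Ioo_subset_Icc_self hs) x
      gcongr
    · exact (hU0.const_mul _).const_mul _
    · exact Eventually.of_forall fun x s hs => (hm.hasDerivAt_poissonExt_time x hy hs.1).rpow_const
        (Or.inl ((hm.isDensity hs.1.le).poissonExt_pos x hy).ne')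
  refine antitoneOn_of_deriv_nonpos (convex_Icc 0 T) ?_ (fun t ht => ?_) fun t ht => ?_
  · refine continuousOn_of_dominated (bound := fun x => y⁻¹ ^ (p - 1)
      * (Real.exp (y⁻¹ ^ 2 * T) * poissonExt (m 0) x y)) (fun t ht => ?_) (fun t ht => ?_)
      ((hU0.const_mul _).const_mul _) (Eventually.of_forall fun x => ?_)
    · exact ((hm.isDensity ht.1).continuous_poissonExt_rpow hy p).aestronglyMeasurable
    · refine Eventually.of_forall fun x => ?_
      have hu := hm.isDensity ht.1
      rw [Real.norm_of_nonneg (Real.rpow_pos_of_pos (hu.poissonExt_pos x hy) p).le]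
      refine (hu.poissonExt_rpow_le_mul x hy hp).trans ?_
      have := hgrow t ht x
      gcongr
    · exact ((hm.continuousOn_poissonExt_time x hy).mono Icc_subset_Ici_self).rpow_const
        fun t _ => Or.inr hp0.le
  · rw [interior_Icc] at ht
    exact (hd t ht).differentiableAt.differentiableWithinAt
  · rw [interior_Icc] at ht
    rw [(hd t ht).deriv]
    exact (hm.isDensity ht.1.le).integral_burgers_nonpos hp hy

end IsDysonFlow

namespace IsDensity

open ProbabilityTheory

variable {u : ℝ → ℝ}

lemma poissonExt_eq_integral_cauchyMeasure (hu : IsDensity u) (x : ℝ) {y : ℝ} (hy : 0 < y) :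
    poissonExt u x y = Real.pi * ∫ r, u (x - y * r) ∂(cauchyMeasure 0 1) := by
  rw [hu.poissonExt_eq x hy, cauchyMeasure_of_scale_ne_zero 0 one_ne_zero,
    integral_withDensity_eq_integral_toReal_smul (measurable_cauchyPDF 0 1)
      (ae_of_all _ fun _ => ENNReal.ofReal_lt_top),
    ← integral_sub_left_eq_self (fun s => u s * (y / ((x - s) ^ 2 + y ^ 2))) volume x,
    ← integral_const_mul]
  have h := Measure.integral_comp_mul_left
    (fun s => u (x - s) * (y / ((x - (x - s)) ^ 2 + y ^ 2))) y
  rw [abs_of_pos (inv_pos.2 hy), smul_eq_mul, eq_inv_mul_iff_mul_eq₀ hy.ne'] at h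
  rw [← h, ← integral_const_mul]
  refine integral_congr_ae (ae_of_all _ fun r => ?_)
  have h1 : (r ^ 2 + 1 : ℝ) ≠ 0 := by positivity
  simp only [cauchyPDF_def, ENNReal.toReal_ofReal (cauchyPDF_pos 0 one_ne_zero r).le]
  simp only [cauchyPDFReal_def, smul_eq_mul, NNReal.coe_one, sub_zero, sub_sub_cancel]
  field_simp

lemma tendsto_poissonExt (hu : IsDensity u) (hc : Continuous u) {B : ℝ} (hB : ∀ x, ‖u x‖ ≤ B)
    (x : ℝ) : Tendsto (fun n : ℕ => poissonExt u x (1 / ((n : ℝ) + 1))) atTop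
      (𝓝 (Real.pi * u x)) := by
  simp_rw [hu.poissonExt_eq_integral_cauchyMeasure x Nat.one_div_pos_of_nat]
  refine Tendsto.const_mul _ ?_
  have h : ∫ _, u x ∂(cauchyMeasure 0 1) = u x := by simp
  rw [← h]
  refine tendsto_integral_of_dominated_convergence (fun _ => B)
    (fun n => (hc.comp (by fun_prop)).aestronglyMeasurable) (integrable_const _)
    (fun n => ae_of_all _ fun r => hB _) (ae_of_all _ fun r => ?_)
  have h1 : Tendsto (fun n : ℕ => x - 1 / ((n : ℝ) + 1) * r) atTop (𝓝 (x - 0 * r)) :=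
    (tendsto_one_div_add_atTop_nhds_zero_nat.mul_const r).const_sub x
  rw [zero_mul, sub_zero] at h1
  exact (hc.tendsto x).comp h1

lemma lintegral_poissonExt_rpow_le (hu : IsDensity u) (hc : Continuous u) {y p : ℝ} (hy : 0 < y)
    (hp : 1 < p) : ∫⁻ x, ‖poissonExt u x y‖ₑ ^ p ≤
      ‖Real.pi‖ₑ ^ p * ∫⁻ x, ‖u x‖ₑ ^ p := by
  have hp0 : 0 < p := one_pos.trans hp
  have key (x : ℝ) : ‖poissonExt u x y‖ₑ ^ p ≤
      ‖Real.pi‖ₑ ^ p * ∫⁻ r, ‖u (x - y * r)‖ₑ ^ p ∂(cauchyMeasure 0 1) := by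
    rw [hu.poissonExt_eq_integral_cauchyMeasure x hy, enorm_mul,
      ENNReal.mul_rpow_of_nonneg _ _ hp0.le]
    gcongr
    have hmeas : AEStronglyMeasurable (fun r => u (x - y * r)) (cauchyMeasure 0 1) :=
      (hc.comp (by fun_prop)).aestronglyMeasurable
    have h := eLpNorm'_le_eLpNorm'_of_exponent_le one_pos hp.le (cauchyMeasure 0 1) hmeas
    simp only [eLpNorm', ENNReal.rpow_one, div_one, one_div] at h
    exact (ENNReal.rpow_le_rpow (enorm_integral_le_lintegral_enorm _) hp0.le).trans
      ((ENNReal.le_rpow_inv_iff hp0).1 h)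
  calc ∫⁻ x, ‖poissonExt u x y‖ₑ ^ p
      ≤ ∫⁻ x, ‖Real.pi‖ₑ ^ p * ∫⁻ r, ‖u (x - y * r)‖ₑ ^ p ∂(cauchyMeasure 0 1) :=
        lintegral_mono key
    _ = ‖Real.pi‖ₑ ^ p * ∫⁻ x, ∫⁻ r, ‖u (x - y * r)‖ₑ ^ p ∂(cauchyMeasure 0 1) :=
        lintegral_const_mul' _ _ (ENNReal.rpow_ne_top_of_nonneg hp0.le enorm_ne_top)
    _ = ‖Real.pi‖ₑ ^ p * ∫⁻ x, ‖u x‖ₑ ^ p := by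
        have hm : Measurable fun z : ℝ × ℝ => ‖u (z.1 - y * z.2)‖ₑ ^ p :=
          ((hc.comp (by fun_prop : Continuous fun z : ℝ × ℝ => z.1 - y * z.2)).measurable.enorm
            ).pow_const p
        rw [lintegral_lintegral_swap hm.aemeasurable]
        simp_rw [lintegral_sub_right_eq_self (fun x => ‖u x‖ₑ ^ p)]
        simp

lemma lintegral_poissonExt_rpow_eq (hu : IsDensity u) {y p : ℝ} (hy : 0 < y) (hp : 1 < p) :
    ∫⁻ x, ‖poissonExt u x y‖ₑ ^ p = ENNReal.ofReal (∫ x, poissonExt u x y ^ p) := by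
  rw [ofReal_integral_eq_lintegral_ofReal (hu.integrable_poissonExt_rpow hy hp)
    (ae_of_all _ fun x => Real.rpow_nonneg (hu.poissonExt_pos x hy).le p)]
  refine lintegral_congr fun x => ?_
  rw [Real.enorm_of_nonneg (hu.poissonExt_pos x hy).le,
    ENNReal.ofReal_rpow_of_nonneg (hu.poissonExt_pos x hy).le (one_pos.trans hp).le]

end IsDensity

/-- If the `L^n` norms of `f` are bounded by those of an integrable `g` for all `n ≥ 2`, so are the
essential suprema. -/
lemma eLpNorm_top_le_of_lintegral_pow_le {α : Type*} [MeasurableSpace α] {μ : Measure α}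
    {f g : α → ℝ} (hf : AEStronglyMeasurable f μ) (hg : ∫⁻ x, ‖g x‖ₑ ∂μ ≠ ∞)
    (h : ∀ n : ℕ, 2 ≤ n → ∫⁻ x, ‖f x‖ₑ ^ n ∂μ ≤ ∫⁻ x, ‖g x‖ₑ ^ n ∂μ) :
    eLpNorm f ∞ μ ≤ eLpNorm g ∞ μ := by
  simp only [eLpNorm_exponent_top]
  by_contra! hlt
  obtain ⟨c, hMc, hcf⟩ := exists_between hlt
  set M := eLpNormEssSup g μ with hM
  set I := ∫⁻ x, ‖g x‖ₑ ∂μ with hI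
  have hc0 : c ≠ 0 := (bot_le.trans_lt hMc).ne'
  have hct : c ≠ ∞ := hcf.ne_top
  have hpos : μ {x | c ≤ ‖f x‖ₑ} ≠ 0 := fun h0 => by
    refine hcf.not_ge (essSup_le_of_ae_le c ?_)
    filter_upwards [measure_eq_zero_iff_ae_notMem.1 h0] with x hx
    exact (not_le.1 hx).le
  have key (n : ℕ) : c * μ {x | c ≤ ‖f x‖ₑ} ≤ (M / c) ^ (n + 1) * I := by
    have h1 : c ^ (n + 2) * μ {x | c ≤ ‖f x‖ₑ} ≤ M ^ (n + 1) * I := calc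
      c ^ (n + 2) * μ {x | c ≤ ‖f x‖ₑ}
          ≤ c ^ (n + 2) * μ {x | c ^ (n + 2) ≤ ‖f x‖ₑ ^ (n + 2)} :=
            mul_le_mul_right (measure_mono fun x (hx : c ≤ ‖f x‖ₑ) => pow_le_pow_left' hx (n + 2)) _
      _ ≤ ∫⁻ x, ‖f x‖ₑ ^ (n + 2) ∂μ :=
            mul_meas_ge_le_lintegral₀ (hf.enorm.pow_const _) _
      _ ≤ ∫⁻ x, ‖g x‖ₑ ^ (n + 2) ∂μ := h _ (by lia)
      _ ≤ ∫⁻ x, M ^ (n + 1) * ‖g x‖ₑ ∂μ := by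
            refine lintegral_mono_ae ?_
            filter_upwards [enorm_ae_le_eLpNormEssSup g μ] with x hx
            rw [pow_succ]
            gcongr
      _ = M ^ (n + 1) * I := lintegral_const_mul' _ _ (ENNReal.pow_ne_top hMc.ne_top)
    have hcn : c ^ (n + 1) ≠ 0 := pow_ne_zero _ hc0
    rw [div_eq_mul_inv, mul_pow, ← ENNReal.inv_pow, mul_right_comm, ← div_eq_mul_inv,
      ENNReal.le_div_iff_mul_le (.inl hcn) (.inl (ENNReal.pow_ne_top hct))]
    calc _ = c ^ (n + 2) * μ {x | c ≤ ‖f x‖ₑ} := by ring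
      _ ≤ _ := h1
  have hlim : Tendsto (fun n : ℕ => (M / c) ^ (n + 1) * I) atTop (𝓝 (0 * I)) :=
    ENNReal.Tendsto.mul_const ((ENNReal.tendsto_pow_atTop_nhds_zero_of_lt_one
      ((ENNReal.div_lt_iff (.inl hc0) (.inl hct)).2 (by simpa using hMc))).comp
        (tendsto_add_atTop_nat 1)) (.inr hg)
  rw [zero_mul] at hlim
  exact mul_ne_zero hc0 hpos (le_antisymm (ge_of_tendsto' hlim key) bot_le)

namespace IsDysonFlow

variable {m : ℝ → ℝ → ℝ}

lemma lintegral_rpow_le (hm : IsDysonFlow m) {p s t : ℝ} (hp : 1 < p) (hs : 0 ≤ s) (hst : s ≤ t) :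
    ∫⁻ x, ‖m t x‖ₑ ^ p ≤ ∫⁻ x, ‖m s x‖ₑ ^ p := by
  have ht := hs.trans hst
  have hp0 : 0 < p := one_pos.trans hp
  have hpi : ‖Real.pi‖ₑ ^ p ≠ 0 := by simp [Real.pi_ne_zero]
  have hpi' : ‖Real.pi‖ₑ ^ p ≠ ∞ := ENNReal.rpow_ne_top_of_nonneg hp0.le enorm_ne_top
  have hut := hm.isDensity ht
  have hus := hm.isDensity hs
  have hct := hm.continuous ht
  obtain ⟨B, hB⟩ : ∃ B, ∀ x, ‖m t x‖ ≤ B := by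
    obtain ⟨f, hf⟩ := hm.exists_schwartz ht
    obtain ⟨C, -, hC⟩ := f.decay 0 0
    exact ⟨C, fun x => by simpa [hf] using hC x⟩
  rw [← ENNReal.mul_le_mul_iff_right hpi hpi']
  have hy (n : ℕ) : (0 : ℝ) < 1 / ((n : ℝ) + 1) := Nat.one_div_pos_of_nat
  have hlim (x : ℝ) : Tendsto (fun n : ℕ => ‖poissonExt (m t) x (1 / ((n : ℝ) + 1))‖ₑ ^ p) atTop
      (𝓝 (‖Real.pi‖ₑ ^ p * ‖m t x‖ₑ ^ p)) := by
    rw [← ENNReal.mul_rpow_of_nonneg _ _ hp0.le, ← enorm_mul]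
    exact (hut.tendsto_poissonExt hct hB x).enorm.ennrpow_const p
  calc ‖Real.pi‖ₑ ^ p * ∫⁻ x, ‖m t x‖ₑ ^ p
      = ∫⁻ x, liminf (fun n : ℕ => ‖poissonExt (m t) x (1 / ((n : ℝ) + 1))‖ₑ ^ p) atTop := by
        rw [← lintegral_const_mul' _ _ hpi']
        exact lintegral_congr fun x => (hlim x).liminf_eq.symm
    _ ≤ liminf (fun n : ℕ => ∫⁻ x, ‖poissonExt (m t) x (1 / ((n : ℝ) + 1))‖ₑ ^ p) atTop :=
        lintegral_liminf_le fun n =>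
          ((hut.continuous_poissonExt (hy n)).measurable.enorm).pow_const p
    _ ≤ ‖Real.pi‖ₑ ^ p * ∫⁻ x, ‖m s x‖ₑ ^ p := by
        refine liminf_le_of_frequently_le' (Frequently.of_forall fun n => ?_)
        refine le_trans ?_ (hus.lintegral_poissonExt_rpow_le (hm.continuous hs) (hy n) hp)
        rw [hut.lintegral_poissonExt_rpow_eq (hy n) hp, hus.lintegral_poissonExt_rpow_eq (hy n) hp]
        exact ENNReal.ofReal_le_ofReal (hm.integral_poissonExt_rpow_antitoneOn hp (hy n) t
          ⟨hs, hst⟩ ⟨ht, le_rfl⟩ hst)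

lemma lintegral_enorm (hm : IsDysonFlow m) {t : ℝ} (ht : 0 ≤ t) : ∫⁻ x, ‖m t x‖ₑ = 1 := by
  rw [← ofReal_integral_norm_eq_lintegral_enorm (hm.integrable ht), hm.integral_norm ht,
    ENNReal.ofReal_one]

lemma eLpNorm_le (hm : IsDysonFlow m) {p : ℝ≥0∞} (hp : 1 ≤ p) {s t : ℝ} (hs : 0 ≤ s)
    (hst : s ≤ t) : eLpNorm (m t) p volume ≤ eLpNorm (m s) p volume := by
  have ht := hs.trans hst
  rcases eq_or_ne p ∞ with rfl | hptop
  · refine eLpNorm_top_le_of_lintegral_pow_le (hm.continuous ht).aestronglyMeasurable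
      (by simp [hm.lintegral_enorm hs]) fun n hn => ?_
    simpa using hm.lintegral_rpow_le (p := n) (by exact_mod_cast hn) hs hst
  rcases hp.eq_or_lt with rfl | hp1
  · simp [eLpNorm_one_eq_lintegral_enorm, hm.lintegral_enorm hs, hm.lintegral_enorm ht]
  have hp' : 1 < p.toReal := by
    rwa [← ENNReal.toReal_one, ENNReal.toReal_lt_toReal ENNReal.one_ne_top hptop]
  simp only [eLpNorm_eq_lintegral_rpow_enorm_toReal (one_pos.trans hp1).ne' hptop]
  gcongr ?_ ^ _
  exact hm.lintegral_rpow_le hp' hs hst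

end IsDysonFlow

/-- **Decay of `L^p` norms along the Dyson flow.**
If `m` is a smooth solution of `∂ₜm + ∂ₓ(m H[m]) = 0`, with `m(t,·)` a Schwartz probability
density for every `t ≥ 0`, then `t ↦ ‖m(t,·)‖_{L^p}` is non-increasing for every `p ∈ [1,∞]`. -/
theorem dyson_Lp_decay (m : ℝ → ℝ → ℝ)
    (hsmooth : ContDiffOn ℝ (⊤ : ℕ∞) (Function.uncurry m) (Ici 0 ×ˢ univ))
    (hschwartz : ∀ t, 0 ≤ t → ∃ f : SchwartzMap ℝ ℝ, ∀ x, f x = m t x)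
    (hnonneg : ∀ t x, 0 ≤ t → 0 ≤ m t x)
    (hprob : ∀ t, 0 ≤ t → ∫ x, m t x = 1)
    (hpde : ∀ t x, 0 < t →
      deriv (fun s => m s x) t + deriv (fun y => m t y * hilbert (m t) y) x = 0) :
    ∀ p : ℝ≥0∞, 1 ≤ p → ∀ s t : ℝ, 0 ≤ s → s ≤ t →
      eLpNorm (m t) p volume ≤ eLpNorm (m s) p volume :=
  fun _ hp _ _ hs hst => IsDysonFlow.eLpNorm_le ⟨hsmooth, hschwartz, hnonneg, hprob, hpde⟩ hp hs hst
end
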